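/- arXiv:2103.05415 — 4 statements merged into one kernel-verified Lean document; each statement's English description precedes it below -/
import Mathlib

section
/- Let L be a Noetherian integral domain, c ∈ ℕ, and J an ideal of the polynomial ring L[y_1,…,y_c] such that the quotient Q := L[y_1,…,y_c]/J is free as an L-module. For n ∈ ℕ let I_n be the ideal of R_n := L[x_{i,j} : i ∈ [c], j ∈ [n]] generated by the images of J under the L-algebra homomorphisms L[y_1,…,y_c] → R_n, y_i ↦ x_{i,j}, for all j ∈ [n] (so that R_n/I_n is the n-fold tensor power of Q over L, with Sym([n]) permuting the tensor factors). Then the number of Sym([n])-orbits on the set of minimal prime ideals of R_n over I_n is a quasipolynomial in n for all n ≫ 0. -/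
/-- A function `f : ℤ → ℚ` is a quasipolynomial if there are an integer `N ≥ 1` and
polynomials `p i ∈ ℚ[t]` such that `f n = p (n mod N) (n)` for all `n`. -/
def IsQuasiPolynomial (f : ℤ → ℚ) : Prop :=
  ∃ N : ℕ, 0 < N ∧ ∃ p : ZMod N → Polynomial ℚ,
    ∀ n : ℤ, f n = (p (n : ZMod N)).eval (n : ℚ)

/-- A quantity `a : ℕ → ℕ` is a quasipolynomial in `n` for all `n ≫ 0`. -/
def QuasiPolynomialCount (a : ℕ → ℕ) : Prop :=
  ∃ f : ℤ → ℚ, IsQuasiPolynomial f ∧ ∃ n₀ : ℕ, ∀ n : ℕ, n₀ ≤ n → (a n : ℚ) = f n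


noncomputable section QPAux

/-- shift operator -/
def shiftE : Module.End ℚ (ℕ → ℚ) := LinearMap.funLeft ℚ ℚ Nat.succ

lemma shiftE_pow (m : ℕ) (f : ℕ → ℚ) (n : ℕ) : (shiftE ^ m) f n = f (n + m) := by
  induction m generalizing n with
  | zero => simp
  | succ m ih =>
    rw [pow_succ', Module.End.mul_apply]
    change (shiftE ^ m) f (n + 1) = _
    rw [ih]; congr 1; omega

/-- eventually quasipolynomial -/
def EQP (f : ℕ → ℚ) : Prop :=
  ∃ N : ℕ, 0 < N ∧ ∃ d m : ℕ,
    Polynomial.aeval shiftE ((Polynomial.X ^ m * (Polynomial.X ^ N - 1) ^ d : Polynomial ℚ)) f = 0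

lemma aeval_zero_of_dvd {p q : Polynomial ℚ} (h : p ∣ q) {f : ℕ → ℚ}
    (hp : Polynomial.aeval shiftE p f = 0) : Polynomial.aeval shiftE q f = 0 := by
  obtain ⟨r, rfl⟩ := h
  rw [mul_comm, map_mul, Module.End.mul_apply, hp, map_zero]

lemma qdvd {m m' N N' d d' : ℕ} (hm : m ≤ m') (hN : N ∣ N') (hd : d ≤ d') :
    (Polynomial.X ^ m * (Polynomial.X ^ N - 1) ^ d : Polynomial ℚ) ∣
      (Polynomial.X ^ m' * (Polynomial.X ^ N' - 1) ^ d' : Polynomial ℚ) := by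
  apply mul_dvd_mul (pow_dvd_pow _ hm)
  refine (pow_dvd_pow_of_dvd ?_ d).trans (pow_dvd_pow _ hd)
  obtain ⟨k, rfl⟩ := hN
  rw [pow_mul]
  exact sub_one_dvd_pow_sub_one _ _

lemma EQP.add {f g : ℕ → ℚ} (hf : EQP f) (hg : EQP g) : EQP (f + g) := by
  obtain ⟨N, hN, d, m, h⟩ := hf
  obtain ⟨N', hN', d', m', h'⟩ := hg
  refine ⟨N * N', by positivity, d + d', m + m', ?_⟩
  rw [map_add, aeval_zero_of_dvd (qdvd (by omega) (by simp) (by omega)) h,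
    aeval_zero_of_dvd (qdvd (by omega) (by simp) (by omega)) h', add_zero]

lemma EQP.smul {f : ℕ → ℚ} (a : ℚ) (hf : EQP f) : EQP (a • f) := by
  obtain ⟨N, hN, d, m, h⟩ := hf
  exact ⟨N, hN, d, m, by rw [map_smul, h, smul_zero]⟩

lemma EQP.zero : EQP 0 := ⟨1, one_pos, 0, 0, by simp⟩

lemma EQP.sum {ι : Type*} (s : Finset ι) (f : ι → ℕ → ℚ) (hf : ∀ i ∈ s, EQP (f i)) :
    EQP (∑ i ∈ s, f i) := by
  classical
  induction s using Finset.induction_on with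
  | empty => simpa using EQP.zero
  | insert a s ha ih =>
    rw [Finset.sum_insert ha]
    exact (hf a (by simp)).add (ih fun i hi => hf i (by simp [hi]))

lemma EQP.of_eventually_zero {f : ℕ → ℚ} (h : ∀ n, f (n + 1) = 0) : EQP f := by
  refine ⟨1, one_pos, 0, 1, ?_⟩
  ext n
  have := shiftE_pow 1 f n
  rw [h] at this
  simpa using this

lemma EQP.rec' {f F : ℕ → ℚ} (a : ℕ) (ha : 0 < a) (hf : EQP f)
    (h : ∀ n, F (n + a) = F n + f (n + a)) : EQP F := by
  obtain ⟨N, hN, d, m, hf⟩ := hf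
  refine ⟨a * N, by positivity, d + 1, m, ?_⟩
  have h1 : Polynomial.aeval shiftE ((Polynomial.X ^ a - 1 : Polynomial ℚ)) F =
      Polynomial.aeval shiftE (Polynomial.X ^ a : Polynomial ℚ) f := by
    ext n
    simp [shiftE_pow, h]
  have h2 : Polynomial.aeval shiftE ((Polynomial.X ^ m * (Polynomial.X ^ N - 1) ^ d : Polynomial ℚ)
      * (Polynomial.X ^ a - 1)) F = 0 := by
    rw [map_mul, Module.End.mul_apply, h1, ← Module.End.mul_apply, ← map_mul, mul_comm, map_mul,
      Module.End.mul_apply, hf, map_zero]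
  refine aeval_zero_of_dvd ?_ h2
  rw [pow_succ, ← mul_assoc]
  apply mul_dvd_mul (qdvd le_rfl (by simp) le_rfl)
  rw [pow_mul]
  exact sub_one_dvd_pow_sub_one _ _

lemma EQP.exists_poly {f : ℕ → ℚ} {N d m : ℕ} (hN : 0 < N)
    (h : Polynomial.aeval shiftE
      ((Polynomial.X ^ m * (Polynomial.X ^ N - 1) ^ d : Polynomial ℚ)) f = 0) (b : ℕ) (hb : m ≤ b) :
    ∃ p : Polynomial ℚ, ∀ k : ℕ, f (b + N * k) = p.eval (((b + N * k : ℕ) : ℚ)) := by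
  let c : ℕ → ℚ := fun i => Polynomial.aeval shiftE
      ((Polynomial.X ^ N - 1 : Polynomial ℚ) ^ i) f b
  have hc : ∀ i, d ≤ i → c i = 0 := by
    intro i hi
    have := aeval_zero_of_dvd (qdvd (le_refl m) (dvd_refl N) hi) h
    have := congrFun this (b - m)
    rw [map_mul, Module.End.mul_apply, map_pow, Polynomial.aeval_X, shiftE_pow,
      Nat.sub_add_cancel hb] at this
    exact this
  have key : ∀ k, f (b + N * k) = ∑ i ∈ Finset.range d, c i * (k.choose i : ℚ) := by
    intro k
    have e : (Polynomial.X ^ (N * k) : Polynomial ℚ) =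
        ∑ i ∈ Finset.range (k + 1), (Polynomial.X ^ N - 1) ^ i * (Polynomial.C (k.choose i : ℚ)) := by
      rw [pow_mul]
      conv_lhs => rw [← sub_add_cancel (Polynomial.X ^ N : Polynomial ℚ) 1]
      rw [add_pow]
      simp
    have e1 := congrFun (congrArg (fun p => Polynomial.aeval shiftE p f) e) b
    simp only [map_pow, Polynomial.aeval_X, shiftE_pow, map_sum, map_mul, Polynomial.aeval_C] at e1
    rw [e1, LinearMap.sum_apply, Finset.sum_apply]
    have e2 : ∀ i, ((Polynomial.aeval shiftE (Polynomial.X ^ N - 1 : Polynomial ℚ)) ^ i *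
        (algebraMap ℚ (Module.End ℚ (ℕ → ℚ)) (k.choose i : ℚ))) f b = c i * (k.choose i : ℚ) := by
      intro i
      rw [Module.End.mul_apply, Module.algebraMap_end_apply, map_smul, Pi.smul_apply, smul_eq_mul,
        mul_comm]
      simp only [c, map_pow]
    simp only [e2]
    trans ∑ i ∈ Finset.range (d + k + 1), c i * (k.choose i : ℚ)
    · apply Finset.sum_subset (Finset.range_mono (by omega))
      intro i _ hi
      rw [Nat.choose_eq_zero_of_lt (by simpa using hi)]; simp
    · symm
      apply Finset.sum_subset (Finset.range_mono (by omega))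
      intro i _ hi
      rw [hc i (by simpa using hi)]; simp
  refine ⟨∑ i ∈ Finset.range d, Polynomial.C (c i / (i.factorial : ℚ)) *
    (descPochhammer ℚ i).comp (Polynomial.C (1 / (N : ℚ)) * (Polynomial.X - Polynomial.C (b : ℚ))),
    fun k => ?_⟩
  rw [key, Polynomial.eval_finsetSum]
  refine Finset.sum_congr rfl fun i _ => ?_
  have : (1 / (N : ℚ)) * ((b + N * k : ℕ) - b : ℚ) = k := by
    push_cast; field_simp; ring
  rw [Polynomial.eval_mul, Polynomial.eval_comp, Polynomial.eval_mul, Polynomial.eval_sub,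
    Polynomial.eval_C, Polynomial.eval_C, Polynomial.eval_C, Polynomial.eval_X, this,
    descPochhammer_eval_eq_descFactorial, Nat.descFactorial_eq_factorial_mul_choose]
  have : (i.factorial : ℚ) ≠ 0 := by positivity
  push_cast
  field_simp

lemma EQP.count {a : ℕ → ℕ} (h : EQP (fun n => (a n : ℚ))) : QuasiPolynomialCount a := by
  obtain ⟨N, hN, d, m, h⟩ := h
  have : NeZero N := ⟨hN.ne'⟩
  choose p hp using fun r : ZMod N => EQP.exists_poly hN h (N * m + r.val)
    (by nlinarith)
  refine ⟨fun n => (p (n : ZMod N)).eval (n : ℚ), ⟨N, hN, p, fun n => rfl⟩, N * (m + 1), ?_⟩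
  intro n hn
  have hv : ((n : ℤ) : ZMod N).val = n % N := by
    rw [Int.cast_natCast, ZMod.val_natCast]
  have e : N * m + ((n : ℤ) : ZMod N).val + N * (n / N - m) = n := by
    rw [hv]
    have h1 := Nat.div_add_mod n N
    have h2 : m ≤ n / N := by
      rw [Nat.le_div_iff_mul_le hN]; nlinarith
    obtain ⟨t, ht⟩ := Nat.exists_eq_add_of_le h2
    rw [ht] at h1 ⊢
    rw [Nat.add_sub_cancel_left]
    rw [mul_add] at h1
    omega
  have := hp ((n : ℤ) : ZMod N) (n / N - m)
  rw [e] at this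
  simpa using this

end QPAux

noncomputable section CountAux

/-- number of solutions of a weighted equation -/
def solCount {ι : Type} [Fintype ι] (a : ι → ℕ) (n : ℕ) : ℕ :=
  Nat.card {m : ι → ℕ // ∑ i, a i * m i = n}

lemma solFinite {ι : Type} [Fintype ι] (a : ι → ℕ) (ha : ∀ i, 0 < a i) (n : ℕ) :
    Finite {m : ι → ℕ // ∑ i, a i * m i = n} := by
  refine Finite.of_injective (β := ι → Fin (n + 1)) (fun m i => ⟨m.1 i, ?_⟩) ?_
  · have h1 := Finset.single_le_sum (f := fun i => a i * m.1 i) (fun _ _ => Nat.zero_le _)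
      (Finset.mem_univ i)
    have h2 := m.2
    have h3 := Nat.le_mul_of_pos_left (m.1 i) (ha i)
    omega
  · intro m m' h
    ext i
    have := congrFun h i
    simpa using this

lemma solCount_equiv {ι κ : Type} [Fintype ι] [Fintype κ] (e : ι ≃ κ) (a : κ → ℕ) (n : ℕ) :
    solCount (a ∘ e) n = solCount a n := by
  refine Nat.card_congr (Equiv.subtypeEquiv (Equiv.arrowCongr e (Equiv.refl ℕ)) fun m => ?_)
  rw [← Equiv.sum_comp e]
  simp

lemma solCount_option {ι : Type} [Fintype ι] (a : Option ι → ℕ) (ha : ∀ i, 0 < a i) (n : ℕ) :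
    solCount a (n + a none) = solCount a n + solCount (fun i => a (some i)) (n + a none) := by
  have := solFinite a ha n
  have := solFinite (fun i => a (some i)) (fun i => ha _) (n + a none)
  unfold solCount
  rw [← Nat.card_sum]
  symm
  refine Nat.card_congr (Equiv.ofBijective (Sum.elim
    (fun m => ⟨fun i => Option.elim i (m.1 none + 1) (fun i => m.1 (some i)), ?_⟩)
    (fun m => ⟨fun i => Option.elim i 0 m.1, ?_⟩)) ⟨?_, ?_⟩)
  · have := m.2
    rw [Fintype.sum_option] at this ⊢
    simp only [Option.elim]
    rw [mul_add]; omega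
  · have := m.2
    rw [Fintype.sum_option]
    simpa using this
  · rintro (m | m) (m' | m') h
    · simp only [Sum.elim_inl, Subtype.mk.injEq] at h
      congr 1; ext i
      have := congrFun h i
      cases i <;> simpa using this
    · simp only [Sum.elim_inl, Sum.elim_inr, Subtype.mk.injEq] at h
      have := congrFun h none
      simp at this
    · simp only [Sum.elim_inl, Sum.elim_inr, Subtype.mk.injEq] at h
      have := congrFun h none
      simp at this
    · simp only [Sum.elim_inr, Subtype.mk.injEq] at h
      congr 1; ext i
      have := congrFun h (some i)
      simpa using this
  · intro m
    have hm := m.2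
    rw [Fintype.sum_option] at hm
    rcases h0 : m.1 none with _ | t
    · refine ⟨Sum.inr ⟨fun i => m.1 (some i), by simpa [h0] using hm⟩, ?_⟩
      ext i
      cases i <;> simp [h0]
    · refine ⟨Sum.inl ⟨fun i => Option.elim i t (fun i => m.1 (some i)), ?_⟩, ?_⟩
      · rw [Fintype.sum_option]
        simp only [Option.elim]
        rw [h0, mul_add] at hm; omega
      · ext i
        cases i <;> simp [h0]

lemma solCount_EQP (ι : Type) [Fintype ι] : ∀ (a : ι → ℕ) (_ : ∀ i, 0 < a i),
    EQP (fun n => (solCount a n : ℚ)) := by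
  refine Fintype.induction_empty_option
    (P := fun (ι : Type) [Fintype ι] => ∀ (a : ι → ℕ) (_ : ∀ i, 0 < a i),
      EQP (fun n => (solCount a n : ℚ))) ?_ ?_ ?_ ι
  · intro α β _ e h a ha
    let _ : Fintype α := Fintype.ofEquiv β e.symm
    have := h (a ∘ e) (fun i => ha _)
    convert this using 3
    convert (solCount_equiv e a _).symm using 1
  · intro a ha
    apply EQP.of_eventually_zero
    intro n
    simp [solCount]
  · intro α _ h a ha
    refine EQP.rec' (a none) (ha none) (h (fun i => a (some i)) (fun i => ha _)) ?_
    intro n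
    exact_mod_cast solCount_option a ha n

/-- multiplicity functions -/
abbrev MultFn (X : Type) [Fintype X] (n : ℕ) := {m : X → ℕ // ∑ x, m x = n}

instance multFn_finite (X : Type) [Fintype X] (n : ℕ) : Finite (MultFn X n) := by
  have := solFinite (fun _ : X => 1) (fun _ => one_pos) n
  simpa using this

/-- action on multiplicity functions -/
instance multAct (X : Type) [Fintype X] (H : Subgroup (Equiv.Perm X)) (n : ℕ) :
    MulAction H (MultFn X n) where
  smul h m := ⟨fun x => m.1 (h.1⁻¹ x), by rw [Equiv.sum_comp (h.1⁻¹) m.1]; exact m.2⟩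
  one_smul m := by
    apply Subtype.ext; funext x
    change m.1 ((1 : Equiv.Perm X)⁻¹ x) = _
    simp
  mul_smul g h m := by
    apply Subtype.ext; funext x
    change m.1 ((g.1 * h.1)⁻¹ x) = m.1 (h.1⁻¹ (g.1⁻¹ x))
    simp

lemma multAct_apply (X : Type) [Fintype X] (H : Subgroup (Equiv.Perm X)) (n : ℕ)
    (h : H) (m : MultFn X n) (x : X) : (h • m).1 x = m.1 (h.1⁻¹ x) := rfl

open Classical in
lemma fixed_EQP (X : Type) [Fintype X] (H : Subgroup (Equiv.Perm X)) (h : H) :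
    EQP (fun n => (Nat.card (MulAction.fixedBy (MultFn X n) h) : ℚ)) := by
  let s := Equiv.Perm.SameCycle.setoid h.1
  let a : Quotient s → ℕ := fun o => (Finset.univ.filter fun x => Quotient.mk s x = o).card
  have ha : ∀ o, 0 < a o := by
    intro o
    obtain ⟨x, rfl⟩ := Quotient.exists_rep o
    exact Finset.card_pos.2 ⟨x, by simp⟩
  have hsum : ∀ m' : Quotient s → ℕ, ∑ x, m' (Quotient.mk s x) = ∑ o, a o * m' o := by
    intro m'
    rw [← Finset.sum_fiberwise (s := Finset.univ) (g := fun x => Quotient.mk s x)]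
    refine Finset.sum_congr rfl fun o _ => ?_
    rw [Finset.sum_congr rfl (g := fun _ => m' o)]
    · simp [a]
    · intro x hx
      rw [(Finset.mem_filter.1 hx).2]
  convert solCount_EQP (Quotient s) a ha using 3 with n
  symm
  refine Nat.card_congr (Equiv.ofBijective
    (fun m' => ⟨⟨fun x => m'.1 (Quotient.mk s x), (hsum _).trans m'.2⟩, ?_⟩) ⟨?_, ?_⟩)
  · rw [MulAction.mem_fixedBy]
    apply Subtype.ext; funext x
    rw [multAct_apply]
    simp only
    refine congrArg m'.1 (Quotient.sound ?_)
    change h.1.SameCycle _ _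
    exact ⟨1, by simp⟩
  · intro m m' e
    apply Subtype.ext; funext o
    obtain ⟨x, rfl⟩ := Quotient.exists_rep o
    have := congrArg (fun z => z.1.1 x) e
    simpa using this
  · rintro ⟨m, hm⟩
    rw [MulAction.mem_fixedBy] at hm
    have h1 : ∀ x, m.1 (h.1 x) = m.1 x := by
      intro x
      have := congrArg (fun z => z.1 (h.1 x)) hm
      simp only [multAct_apply] at this
      simpa using this.symm
    have h2 : ∀ x y, h.1.SameCycle x y → m.1 x = m.1 y := by
      intro x y ⟨i, hi⟩
      have : ∀ (k : ℕ) x, m.1 ((h.1 ^ k) x) = m.1 x := by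
        intro k
        induction k with
        | zero => simp
        | succ k ih => intro x; rw [pow_succ', Equiv.Perm.mul_apply, h1, ih]
      obtain ⟨k, rfl | rfl⟩ := i.eq_nat_or_neg
      · rw [← hi, zpow_natCast, this]
      · rw [← hi]
        have e := this k ((h.1 ^ (-(k : ℤ))) x)
        rw [← e]
        simp
    refine ⟨⟨Quotient.lift m.1 (fun x y hxy => h2 x y hxy), ?_⟩, ?_⟩
    · rw [← hsum]; exact m.2
    · rfl

open Classical in
lemma orbits_EQP (X : Type) [Fintype X] (H : Subgroup (Equiv.Perm X)) :
    EQP (fun n => (Nat.card (MulAction.orbitRel.Quotient H (MultFn X n)) : ℚ)) := by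
  have h := EQP.smul (1 / (Fintype.card H : ℚ)) (EQP.sum Finset.univ
    (fun (h : H) n => (Nat.card (MulAction.fixedBy (MultFn X n) h) : ℚ))
      fun h _ => fixed_EQP X H h)
  convert h using 1
  funext n
  let _ : Fintype (MultFn X n) := Fintype.ofFinite _
  let _ : Fintype (MulAction.orbitRel.Quotient H (MultFn X n)) := Fintype.ofFinite _
  have hb := MulAction.sum_card_fixedBy_eq_card_orbits_mul_card_group H (MultFn X n)
  have hc : (Fintype.card H : ℚ) ≠ 0 := by exact_mod_cast Fintype.card_ne_zero
  simp only [Pi.smul_apply, Finset.sum_apply, smul_eq_mul, Nat.card_eq_fintype_card]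
  rw [← Nat.cast_sum, hb]
  push_cast
  field_simp

open Classical in
/-- fibre counts -/
def fibCount {X : Type} [Fintype X] {n : ℕ} (x : Fin n → X) : MultFn X n :=
  ⟨fun a => Fintype.card {j // x j = a}, by
    rw [← Fintype.card_sigma, Fintype.card_congr (Equiv.sigmaFiberEquiv x), Fintype.card_fin]⟩

lemma fibCount_surj {X : Type} [Fintype X] {n : ℕ} :
    Function.Surjective (fibCount : (Fin n → X) → MultFn X n) := by
  classical
  intro m
  have e : (Σ a, Fin (m.1 a)) ≃ Fin n := Fintype.equivOfCardEq (by simp [m.2])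
  refine ⟨fun j => (e.symm j).1, ?_⟩
  apply Subtype.ext; funext a
  simp only [fibCount]
  have e2 : {j // (e.symm j).1 = a} ≃ Fin (m.1 a) :=
    (e.symm.subtypeEquiv (q := fun p => p.1 = a) fun j => Iff.rfl).trans
      { toFun := fun p => Fin.cast (by rw [p.2]) p.1.2
        invFun := fun t => ⟨⟨a, t⟩, rfl⟩
        left_inv := by rintro ⟨⟨b, t⟩, rfl⟩; rfl
        right_inv := fun t => rfl }
  exact (Fintype.card_congr e2).trans (Fintype.card_fin _)

lemma fibCount_eq {X : Type} [Fintype X] {n : ℕ} (x y : Fin n → X) :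
    fibCount x = fibCount y ↔ ∃ σ : Equiv.Perm (Fin n), y = fun j => x (σ j) := by
  classical
  constructor
  · intro h
    have h1 : ∀ a, Fintype.card {j // y j = a} = Fintype.card {j // x j = a} := by
      intro a
      have := congrArg (fun z => z.1 a) h
      simp only [fibCount] at this
      convert this.symm
    let e := fun a => Fintype.equivOfCardEq (h1 a)
    refine ⟨(Equiv.sigmaFiberEquiv y).symm.trans
      ((Equiv.sigmaCongrRight e).trans (Equiv.sigmaFiberEquiv x)), ?_⟩
    funext j
    exact (e (y j) ⟨j, rfl⟩).2.symm
  · rintro ⟨σ, rfl⟩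
    apply Subtype.ext; funext a
    simp only [fibCount]
    exact Fintype.card_congr ((σ.subtypeEquiv fun j => Iff.rfl).symm)

lemma fibCount_smul {X : Type} [Fintype X] {n : ℕ} (H : Subgroup (Equiv.Perm X)) (h : H)
    (x : Fin n → X) : h • fibCount x = fibCount (fun j => h.1 (x j)) := by
  classical
  apply Subtype.ext; funext a
  rw [multAct_apply]
  simp only [fibCount]
  exact Fintype.card_congr (Equiv.subtypeEquivRight fun j => by
    rw [Equiv.Perm.eq_inv_iff_eq])

theorem comb_count (X : Type) [Finite X] (H : Subgroup (Equiv.Perm X)) (a : ℕ → ℕ)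
    (ha : ∀ n, ∃ (Y : Type) (r : Y → Y → Prop) (Φ : (Fin n → X) → Y), Function.Surjective Φ ∧
      Equivalence r ∧
      (∀ x y, r (Φ x) (Φ y) ↔
        ∃ h ∈ H, ∃ σ : Equiv.Perm (Fin n), y = fun j => h (x (σ j))) ∧
      a n = Nat.card (Quot r)) : QuasiPolynomialCount a := by
  let _ : Fintype X := Fintype.ofFinite X
  apply EQP.count
  convert orbits_EQP X H using 3 with n
  obtain ⟨Y, r, Φ, hs, hr, hΦ, hc⟩ := ha n
  rw [hc]
  let s : Setoid Y := ⟨r, hr⟩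
  choose g hg using hs
  have key : ∀ x y : Fin n → X, r (Φ x) (Φ y) ↔
      (Quotient.mk (MulAction.orbitRel H (MultFn X n)) (fibCount x)) =
        Quotient.mk (MulAction.orbitRel H (MultFn X n)) (fibCount y) := by
    intro x y
    rw [hΦ, eq_comm, Quotient.eq, MulAction.orbitRel_apply, MulAction.mem_orbit_iff]
    constructor
    · rintro ⟨h, hh, σ, rfl⟩
      refine ⟨⟨h, hh⟩, ?_⟩
      rw [fibCount_smul, fibCount_eq]
      exact ⟨σ, rfl⟩
    · rintro ⟨h, e⟩
      rw [fibCount_smul, fibCount_eq] at e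
      obtain ⟨σ, e⟩ := e
      exact ⟨h.1, h.2, σ, e⟩
  refine Nat.card_congr (Equiv.ofBijective
    (Quot.lift (fun p => Quotient.mk (MulAction.orbitRel H (MultFn X n)) (fibCount (g p))) ?_)
    ⟨?_, ?_⟩)
  · intro p q h
    rw [← key, hg, hg]; exact h
  · rintro ⟨p⟩ ⟨q⟩ h
    apply Quot.sound
    rw [← hg p, ← hg q, key]
    exact h
  · intro o
    obtain ⟨m, rfl⟩ := Quotient.exists_rep o
    obtain ⟨x, rfl⟩ := fibCount_surj m
    refine ⟨Quot.mk _ (Φ x), ?_⟩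
    change Quotient.mk (MulAction.orbitRel H (MultFn X n)) (fibCount (g (Φ x))) = _
    rw [← key, hg]
    exact hr.refl _

end CountAux

open MvPolynomial

noncomputable section AlgAux

/-- points whose columns lie in the given zero loci -/
def prodLocus {k : Type} [Field k] {c n : ℕ} (x : Fin n → Ideal (MvPolynomial (Fin c) k)) :
    Set (Fin c × Fin n → k) :=
  {p | ∀ j, (fun i => p (i, j)) ∈ zeroLocus k (x j)}

/-- vanishing ideal of the product -/
def prodIdeal {k : Type} [Field k] {c n : ℕ} (x : Fin n → Ideal (MvPolynomial (Fin c) k)) :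
    Ideal (MvPolynomial (Fin c × Fin n) k) := vanishingIdeal k (prodLocus x)

/-- replace a column of a point -/
def setCol {k : Type} {c n : ℕ} (q : Fin c × Fin n → k) (j : Fin n) (p : Fin c → k) :
    Fin c × Fin n → k := fun z => if z.2 = j then p z.1 else q z

/-- restrict a polynomial to a column -/
def colPoly {k : Type} [Field k] {c n : ℕ} (q : Fin c × Fin n → k) (j : Fin n)
    (f : MvPolynomial (Fin c × Fin n) k) : MvPolynomial (Fin c) k :=
  aeval (fun z : Fin c × Fin n => if z.2 = j then X z.1 else C (q z)) f

lemma aeval_colPoly {k : Type} [Field k] {c n : ℕ} (q : Fin c × Fin n → k) (j : Fin n)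
    (f : MvPolynomial (Fin c × Fin n) k) (p : Fin c → k) :
    aeval p (colPoly q j f) = aeval (setCol q j p) f := by
  unfold colPoly
  have : (aeval p).comp (aeval (R := k)
      (fun z : Fin c × Fin n => if z.2 = j then (X z.1 : MvPolynomial (Fin c) k) else C (q z))) =
      (aeval (setCol q j p) : MvPolynomial (Fin c × Fin n) k →ₐ[k] k) := by
    apply MvPolynomial.algHom_ext
    intro z
    by_cases h : z.2 = j <;> simp [setCol, h]
  exact DFunLike.congr_fun this f

variable {k : Type} [Field k] [IsAlgClosed k] {c n : ℕ}

lemma locus_nonempty (P : Ideal (MvPolynomial (Fin c) k)) [hP : P.IsPrime] :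
    (zeroLocus k P).Nonempty := by
  by_contra h
  rw [Set.not_nonempty_iff_eq_empty] at h
  have h1 := IsPrime.vanishingIdeal_zeroLocus (K := k) P
  rw [h, vanishingIdeal_empty] at h1
  exact hP.ne_top h1.symm

lemma exists_point_ne (P : Ideal (MvPolynomial (Fin c) k)) [hP : P.IsPrime]
    (f : MvPolynomial (Fin c) k) (hf : f ∉ P) : ∃ p ∈ zeroLocus k P, aeval p f ≠ 0 := by
  by_contra! h
  apply hf
  rw [← IsPrime.vanishingIdeal_zeroLocus (K := k) P]
  exact h

/-- points that lie in the loci for columns in `s` and agree with `q` elsewhere -/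
def partLocus (x : Fin n → Ideal (MvPolynomial (Fin c) k)) (s : Finset (Fin n))
    (q : Fin c × Fin n → k) : Set (Fin c × Fin n → k) :=
  {p | (∀ j ∈ s, (fun i => p (i, j)) ∈ zeroLocus k (x j)) ∧ ∀ j ∉ s, ∀ i, p (i, j) = q (i, j)}

lemma partLocus_irred (x : Fin n → Ideal (MvPolynomial (Fin c) k)) [hx : ∀ j, (x j).IsPrime]
    (s : Finset (Fin n)) : ∀ (q : Fin c × Fin n → k) (f g : MvPolynomial (Fin c × Fin n) k),
    (∃ p ∈ partLocus x s q, aeval p f ≠ 0) → (∃ p ∈ partLocus x s q, aeval p g ≠ 0) →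
    ∃ p ∈ partLocus x s q, aeval p f ≠ 0 ∧ aeval p g ≠ 0 := by
  classical
  induction s using Finset.induction_on with
  | empty =>
    rintro q f g ⟨p, hp, hpf⟩ ⟨p', hp', hpg⟩
    have : p = p' := by
      funext z
      exact (hp.2 z.2 (by simp) z.1).trans (hp'.2 z.2 (by simp) z.1).symm
    subst this
    exact ⟨p, hp, hpf, hpg⟩
  | insert a s ha ih =>
    rintro q f g ⟨p, hp, hpf⟩ ⟨p', hp', hpg⟩
    have aux : ∀ (f : MvPolynomial (Fin c × Fin n) k), ∀ p ∈ partLocus x (insert a s) q,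
        aeval p f ≠ 0 → colPoly p a f ∉ x a := by
      intro f p hp hpf hmem
      apply hpf
      have := hp.1 a (by simp) _ hmem
      rw [aeval_colPoly] at this
      convert this using 3
      funext z
      by_cases h : z.2 = a
      · simp only [setCol, h, if_true]
        rw [← h]
      · simp [setCol, h]
    have hmul : colPoly p a f * colPoly p' a g ∉ x a := fun h =>
      ((hx a).mem_or_mem h).elim (aux f p hp hpf) (aux g p' hp' hpg)
    obtain ⟨r, hr, hne⟩ := exists_point_ne (x a) _ hmul
    rw [map_mul, aeval_colPoly, aeval_colPoly] at hne
    have mem : ∀ p ∈ partLocus x (insert a s) q, setCol p a r ∈ partLocus x s (setCol q a r) := by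
      intro p hp
      constructor
      · intro j hj
        have hja : j ≠ a := fun h => ha (h ▸ hj)
        have := hp.1 j (by simp [hj])
        simpa [setCol, hja] using this
      · intro j hj i
        by_cases hja : j = a
        · simp [setCol, hja]
        · simpa [setCol, hja] using hp.2 j (by simp [hj, hja]) i
    obtain ⟨t, ht, h1, h2⟩ := ih (setCol q a r) f g
      ⟨_, mem p hp, left_ne_zero_of_mul hne⟩ ⟨_, mem p' hp', right_ne_zero_of_mul hne⟩
    refine ⟨t, ⟨?_, ?_⟩, h1, h2⟩
    · intro j hj
      rcases Finset.mem_insert.1 hj with rfl | hj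
      · convert hr using 1
        funext i
        rw [ht.2 j ha i]
        simp [setCol]
      · exact ht.1 j hj
    · intro j hj i
      have hja : j ≠ a := fun h => hj (by simp [h])
      rw [ht.2 j (fun h => hj (by simp [h])) i]
      simp [setCol, hja]

lemma partLocus_univ (x : Fin n → Ideal (MvPolynomial (Fin c) k)) (q : Fin c × Fin n → k) :
    partLocus x Finset.univ q = prodLocus x := by
  ext p; simp [partLocus, prodLocus]

lemma exists_prod_point (x : Fin n → Ideal (MvPolynomial (Fin c) k)) [hx : ∀ j, (x j).IsPrime]
    (j : Fin n) (p : Fin c → k) (hp : p ∈ zeroLocus k (x j)) :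
    ∃ q ∈ prodLocus x, (fun i => q (i, j)) = p := by
  choose r hr using fun j => locus_nonempty (x j)
  refine ⟨setCol (fun z => r z.2 z.1) j p, ?_, ?_⟩
  · intro j'
    by_cases h : j' = j
    · subst h; simpa [setCol] using hp
    · simpa [setCol, h] using hr j'
  · funext i; simp [setCol]

lemma prodLocus_nonempty (x : Fin n → Ideal (MvPolynomial (Fin c) k)) [hx : ∀ j, (x j).IsPrime] :
    (prodLocus x).Nonempty := by
  choose r hr using fun j => locus_nonempty (x j)
  exact ⟨fun z => r z.2 z.1, fun j => hr j⟩

instance prodIdeal_prime (x : Fin n → Ideal (MvPolynomial (Fin c) k)) [hx : ∀ j, (x j).IsPrime] :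
    (prodIdeal x).IsPrime := by
  refine ⟨?_, ?_⟩
  · intro h
    obtain ⟨p, hp⟩ := prodLocus_nonempty x
    have h1 : (1 : MvPolynomial (Fin c × Fin n) k) ∈ prodIdeal x := by rw [h]; trivial
    have := h1 p hp
    simp at this
  · intro f g hfg
    by_contra! hcon
    obtain ⟨hf, hg⟩ := hcon
    have hf : ∃ p ∈ prodLocus x, aeval p f ≠ 0 := by
      by_contra! h; exact hf h
    have hg : ∃ p ∈ prodLocus x, aeval p g ≠ 0 := by
      by_contra! h; exact hg h
    rw [← partLocus_univ x 0] at hf hg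
    obtain ⟨p, hp, h1, h2⟩ := partLocus_irred x Finset.univ 0 f g hf hg
    rw [partLocus_univ] at hp
    have := hfg p hp
    rw [map_mul] at this
    exact mul_ne_zero h1 h2 this

/-- column embedding -/
abbrev colMap (k : Type) [CommRing k] {c n : ℕ} (j : Fin n) :
    MvPolynomial (Fin c) k →ₐ[k] MvPolynomial (Fin c × Fin n) k :=
  rename (fun i : Fin c => (i, j))

lemma prodIdeal_le (x : Fin n → Ideal (MvPolynomial (Fin c) k))
    (P : Ideal (MvPolynomial (Fin c × Fin n) k)) [hP : P.IsPrime]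
    (h : ∀ j, x j ≤ P.comap (colMap k j)) : prodIdeal x ≤ P := by
  rw [← IsPrime.vanishingIdeal_zeroLocus (K := k) P]
  apply vanishingIdeal_anti_mono
  intro p hp j f hf
  have := hp _ (h j hf)
  rw [aeval_rename] at this
  exact this

lemma comap_prodIdeal (x : Fin n → Ideal (MvPolynomial (Fin c) k)) [hx : ∀ j, (x j).IsPrime]
    (j : Fin n) : (prodIdeal x).comap (colMap k j) = x j := by
  apply le_antisymm
  · intro f hf
    rw [← IsPrime.vanishingIdeal_zeroLocus (K := k) (x j)]
    intro p hp
    obtain ⟨q, hq, rfl⟩ := exists_prod_point x j p hp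
    have := hf q hq
    rw [aeval_rename] at this
    exact this
  · intro f hf p hp
    rw [aeval_rename]
    exact hp j f hf

lemma comap_perm_prodIdeal (x : Fin n → Ideal (MvPolynomial (Fin c) k))
    [hx : ∀ j, (x j).IsPrime] (ρ : Equiv.Perm (Fin n)) :
    (prodIdeal x).comap (rename (Prod.map (id : Fin c → Fin c) ρ)) =
      prodIdeal (fun j => x (ρ j)) := by
  have key : ∀ (x : Fin n → Ideal (MvPolynomial (Fin c) k)) [hx : ∀ j, (x j).IsPrime]
    (ρ : Equiv.Perm (Fin n)), prodIdeal (fun j => x (ρ j)) ≤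
      (prodIdeal x).comap (rename (Prod.map (id : Fin c → Fin c) ρ)) := by
    intro x hx ρ
    have : ((prodIdeal x).comap
      (rename (R := k) (Prod.map (id : Fin c → Fin c) ρ))).IsPrime := Ideal.IsPrime.comap _
    apply prodIdeal_le
    intro j f hf
    rw [← comap_prodIdeal x (ρ j)] at hf
    rw [Ideal.mem_comap, Ideal.mem_comap, rename_rename]
    exact hf
  apply le_antisymm _ (key x ρ)
  intro f hf
  have h1 := key (fun j => x (ρ j)) ρ.symm
  simp only [Equiv.apply_symm_apply] at h1
  have h2 := h1 hf
  rw [Ideal.mem_comap, rename_rename] at h2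
  convert h2
  have : (Prod.map (id : Fin c → Fin c) ρ.symm ∘ Prod.map id ρ) = id := by
    funext z; simp [Prod.map]
  rw [this, rename_id]; rfl

end AlgAux

noncomputable section TorsionAux

lemma torsion_quot (L : Type) [CommRing L] [IsDomain L] (c n : ℕ)
    (J : Ideal (MvPolynomial (Fin c) L))
    (hfree : Module.Free L (MvPolynomial (Fin c) L ⧸ J)) :
    Module.IsTorsionFree L (MvPolynomial (Fin c × Fin n) L ⧸
      (⨆ j : Fin n, Ideal.map (rename (R := L) (fun i : Fin c => (i, j))) J)) := by
  set I := (⨆ j : Fin n, Ideal.map (rename (R := L) (fun i : Fin c => (i, j))) J) with hI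
  let T := PiTensorProduct L (fun _ : Fin n => MvPolynomial (Fin c) L ⧸ J)
  have hT : Module.Free L T := Module.Free.of_basis
    (Basis.piTensorProduct (fun _ : Fin n => Module.Free.chooseBasis L (MvPolynomial (Fin c) L ⧸ J)))
  let u0 : MvPolynomial (Fin c × Fin n) L →ₐ[L] T :=
    aeval (fun z => PiTensorProduct.singleAlgHom (R := L)
      (A := fun _ : Fin n => MvPolynomial (Fin c) L ⧸ J) z.2 (Ideal.Quotient.mkₐ L J (X z.1)))
  have hu0 : ∀ j, u0.comp (rename (fun i : Fin c => (i, j))) =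
      (PiTensorProduct.singleAlgHom (R := L)
      (A := fun _ : Fin n => MvPolynomial (Fin c) L ⧸ J) j).comp (Ideal.Quotient.mkₐ L J) := by
    intro j
    apply MvPolynomial.algHom_ext
    intro i
    simp [u0]
  let u : (MvPolynomial (Fin c × Fin n) L ⧸ I) →ₐ[L] T := Ideal.Quotient.liftₐ I u0 (by
    intro a ha
    have : I ≤ RingHom.ker u0 := by
      rw [hI]
      refine iSup_le fun j => Ideal.map_le_iff_le_comap.2 fun f hf => ?_
      rw [Ideal.mem_comap, RingHom.mem_ker]
      have := DFunLike.congr_fun (hu0 j) f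
      simp only [AlgHom.comp_apply] at this
      rw [this, Ideal.Quotient.mkₐ_eq_mk, Ideal.Quotient.eq_zero_iff_mem.2 hf, map_zero]
    exact this ha)
  let ψ : Fin n → (MvPolynomial (Fin c) L ⧸ J) →ₐ[L] (MvPolynomial (Fin c × Fin n) L ⧸ I) :=
    fun j => Ideal.Quotient.liftₐ J ((Ideal.Quotient.mkₐ L I).comp (rename (fun i => (i, j)))) (by
      intro a ha
      rw [AlgHom.comp_apply, Ideal.Quotient.mkₐ_eq_mk, Ideal.Quotient.eq_zero_iff_mem]
      exact (le_iSup (fun j : Fin n => Ideal.map (rename (R := L) (fun i : Fin c => (i, j))) J) j)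
        (Ideal.mem_map_of_mem _ ha))
  let v : T →ₐ[L] (MvPolynomial (Fin c × Fin n) L ⧸ I) :=
    PiTensorProduct.liftAlgHom ((MultilinearMap.mkPiAlgebra L (Fin n) _).compLinearMap
      (fun j => (ψ j).toLinearMap)) (by simp) (by intro x y; simp [Finset.prod_mul_distrib])
  have hv : ∀ t : Fin n → MvPolynomial (Fin c) L ⧸ J,
      v (PiTensorProduct.tprod L t) = ∏ j, ψ j (t j) := by
    intro t
    change PiTensorProduct.lift ((MultilinearMap.mkPiAlgebra L (Fin n) _).compLinearMap
      (fun j => (ψ j).toLinearMap)) (PiTensorProduct.tprod L t) = _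
    rw [PiTensorProduct.lift.tprod]
    rfl
  have hvu : v.comp u = AlgHom.id L _ := by
    apply Ideal.Quotient.algHom_ext
    apply MvPolynomial.algHom_ext
    intro z
    have : u (Ideal.Quotient.mk I (X z)) = PiTensorProduct.tprod L
      (Pi.mulSingle z.2 (Ideal.Quotient.mk J (X z.1))) := by
      change u0 (X z) = _
      simp only [u0, aeval_X]
      rfl
    simp only [AlgHom.comp_apply, Ideal.Quotient.mkₐ_eq_mk, this]
    rw [hv]
    rw [Finset.prod_eq_single z.2]
    · rw [Pi.mulSingle_eq_same]
      change Ideal.Quotient.mk I (rename _ (X z.1)) = Ideal.Quotient.mk I (X z)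
      rw [rename_X]
    · intro b _ hb
      simp [Pi.mulSingle_eq_of_ne hb]
    · simp
  have hinj : Function.Injective u := by
    intro a b h
    have := congrArg v h
    have h1 := DFunLike.congr_fun hvu
    simp only [AlgHom.comp_apply, AlgHom.id_apply] at h1
    rwa [h1, h1] at this
  exact Function.Injective.moduleIsTorsionFree u hinj (fun c x => map_smul u c x)

lemma min_inter (L : Type) [CommRing L] [IsDomain L] (c n : ℕ)
    (J : Ideal (MvPolynomial (Fin c) L))
    (hfree : Module.Free L (MvPolynomial (Fin c) L ⧸ J))
    (p : Ideal (MvPolynomial (Fin c × Fin n) L))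
    (hp : p ∈ (⨆ j : Fin n, Ideal.map (rename (R := L) (fun i : Fin c => (i, j))) J).minimalPrimes)
    (a : L) (ha : C a ∈ p) : a = 0 := by
  by_contra h0
  have ht := torsion_quot L c n J hfree
  obtain ⟨y, hy, h⟩ := Ideal.exists_mul_mem_of_mem_minimalPrimes hp ha
  apply hy
  rw [← Ideal.Quotient.eq_zero_iff_mem] at h ⊢
  have h2 : a • (Ideal.Quotient.mk (⨆ j : Fin n,
      Ideal.map (rename (R := L) (fun i : Fin c => (i, j))) J) y) = 0 := by
    rw [← h, ← smul_eq_C_mul]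
    rfl
  exact (smul_eq_zero.1 h2).resolve_left h0

end TorsionAux

noncomputable section GalAux

lemma isTF {A B : Type} [CommRing A] [IsDomain A] [CommRing B] [IsDomain B] [Algebra A B]
    (h : Function.Injective (algebraMap A B)) : Module.IsTorsionFree A B := by
  have : FaithfulSMul A B := (faithfulSMul_iff_algebraMap_injective A B).2 h
  infer_instance

lemma lift_hom {A B Ω : Type} [CommRing A] [IsDomain A] [CommRing B] [IsDomain B] [Field Ω]
    [IsAlgClosed Ω] [Algebra A B] [Algebra.IsAlgebraic A B]
    (h : Function.Injective (algebraMap A B)) (θ : A →+* Ω) (hθ : Function.Injective θ) :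
    ∃ θ' : B →+* Ω, θ'.comp (algebraMap A B) = θ := by
  let _ : Algebra A Ω := θ.toAlgebra
  have := isTF h
  have : Module.IsTorsionFree A Ω := isTF hθ
  let f : B →ₐ[A] Ω := IsAlgClosed.lift
  exact ⟨f.toRingHom, RingHom.ext fun a => f.commutes a⟩

lemma exists_hom_ker {R : Type} [CommRing R] (p : Ideal R) [p.IsPrime] :
    ∃ (Ω : Type) (_ : Field Ω) (_ : IsAlgClosed Ω) (θ : R →+* Ω), RingHom.ker θ = p := by
  refine ⟨AlgebraicClosure (FractionRing (R ⧸ p)), inferInstance, inferInstance,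
    ((algebraMap (FractionRing (R ⧸ p)) _).comp (algebraMap (R ⧸ p) (FractionRing (R ⧸ p)))).comp
      (Ideal.Quotient.mk p), ?_⟩
  ext a
  rw [RingHom.mem_ker, RingHom.comp_apply, map_eq_zero_iff, Ideal.Quotient.eq_zero_iff_mem]
  rw [RingHom.coe_comp]
  exact (RingHom.injective _).comp (IsFractionRing.injective _ _)

lemma inj_Lk {L : Type} (F : Type) {k : Type} [CommRing L] [IsDomain L] [Field F] [Field k] [Algebra L F]
    [IsFractionRing L F] [Algebra L k] [Algebra F k] [IsScalarTower L F k] [IsAlgClosure F k] : Function.Injective (algebraMap L k) := by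
  rw [IsScalarTower.algebraMap_eq L F k, RingHom.coe_comp]
  exact Function.Injective.comp (RingHom.injective (algebraMap F k)) (IsFractionRing.injective L F)

lemma alg_Lk {L : Type} (F : Type) {k : Type} [CommRing L] [IsDomain L] [Field F] [Field k] [Algebra L F]
    [IsFractionRing L F] [Algebra L k] [Algebra F k] [IsScalarTower L F k] [IsAlgClosure F k] : Algebra.IsAlgebraic L k := by
  have : Algebra.IsAlgebraic F k := IsAlgClosure.isAlgebraic
  exact (IsFractionRing.comap_isAlgebraic_iff (A := L) (K := F) (C := k)).2 this

lemma lying_over {L : Type} (F : Type) {k σ : Type} [CommRing L] [IsDomain L] [Field F] [Field k] [Algebra L F]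
    [IsFractionRing L F] [Algebra L k] [Algebra F k] [IsScalarTower L F k] [IsAlgClosure F k]
    (p : Ideal (MvPolynomial σ L)) [p.IsPrime] (h : ∀ a : L, C a ∈ p → a = 0) :
    ∃ Q : Ideal (MvPolynomial σ k), Q.IsPrime ∧ Q.comap (MvPolynomial.map (algebraMap L k)) = p := by
  obtain ⟨Ω, _, _, θ, hθ⟩ := exists_hom_ker p
  have : Algebra.IsAlgebraic L k := alg_Lk F
  obtain ⟨θ', hθ'⟩ := lift_hom (inj_Lk F (L := L) (k := k)) (θ.comp C) (by
    rw [injective_iff_map_eq_zero]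
    intro a ha
    apply h
    rw [← hθ]; exact ha)
  refine ⟨RingHom.ker (eval₂Hom θ' (fun s => θ (X s))), RingHom.ker_isPrime _, ?_⟩
  rw [RingHom.comap_ker, ← hθ]
  congr 1
  apply MvPolynomial.ringHom_ext
  · intro a
    have := DFunLike.congr_fun hθ' a
    simpa using this
  · intro s; simp

lemma map_map_g (L : Type) (F : Type) {k σ : Type} [CommRing L] [IsDomain L] [Field F] [Field k] [Algebra L F]
    [IsFractionRing L F] [Algebra L k] [Algebra F k] [IsScalarTower L F k] 
    (g : k ≃ₐ[F] k) :
    (MvPolynomial.map (g : k →+* k)).comp (MvPolynomial.map (algebraMap L k)) =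
      (MvPolynomial.map (algebraMap L k) : MvPolynomial σ L →+* MvPolynomial σ k) := by
  apply MvPolynomial.ringHom_ext
  · intro a
    simp [IsScalarTower.algebraMap_apply L F k]
  · intro s; simp

lemma conj_primes {L : Type} (F : Type) {k σ : Type} [CommRing L] [IsDomain L] [Field F] [Field k] [Algebra L F]
    [IsFractionRing L F] [Algebra L k] [Algebra F k] [IsScalarTower L F k] [IsAlgClosure F k]
    (P Q : Ideal (MvPolynomial σ k)) [P.IsPrime] [Q.IsPrime]
    (h : P.comap (MvPolynomial.map (algebraMap L k)) = Q.comap (MvPolynomial.map (algebraMap L k))) :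
    ∃ g : k ≃ₐ[F] k, P ≤ Q.comap (MvPolynomial.map (g : k →+* k)) := by
  obtain ⟨Ω, _, _, θ₂, hθ₂⟩ := exists_hom_ker Q
  have hLk : Algebra.IsAlgebraic L k := alg_Lk F
  let μ : MvPolynomial σ L →+* MvPolynomial σ k := MvPolynomial.map (algebraMap L k)
  let p := P.comap μ
  have hp : p = RingHom.ker (θ₂.comp μ) := by
    rw [← RingHom.comap_ker, hθ₂]; exact h
  let _ : Algebra (MvPolynomial σ L ⧸ p) (MvPolynomial σ k ⧸ P) :=
    (Ideal.quotientMap P μ le_rfl).toAlgebra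
  have hAB : Function.Injective (algebraMap (MvPolynomial σ L ⧸ p) (MvPolynomial σ k ⧸ P)) :=
    Ideal.quotientMap_injective
  have htower : IsScalarTower L (MvPolynomial σ L ⧸ p) (MvPolynomial σ k ⧸ P) := by
    refine @IsScalarTower.of_algebraMap_eq L (MvPolynomial σ L ⧸ p) (MvPolynomial σ k ⧸ P) _ _ _ _ _ _ ?_
    intro a
    change Ideal.Quotient.mk P (C (algebraMap L k a)) = Ideal.Quotient.mk P (μ (C a))
    simp [μ]
  have hLA : Function.Injective (algebraMap L (MvPolynomial σ L ⧸ p)) := by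
    rw [injective_iff_map_eq_zero]
    intro a ha
    change Ideal.Quotient.mk p (C a) = 0 at ha
    rw [Ideal.Quotient.eq_zero_iff_mem, hp, RingHom.mem_ker] at ha
    simp only [μ, RingHom.comp_apply, map_C] at ha
    have h1 := (map_eq_zero (θ₂.comp C)).1 ha
    exact (map_eq_zero_iff _ (inj_Lk F)).1 h1
  have hint : Algebra.IsAlgebraic (MvPolynomial σ L ⧸ p) (MvPolynomial σ k ⧸ P) := by
    refine ⟨fun b => ?_⟩
    obtain ⟨f, rfl⟩ := Ideal.Quotient.mk_surjective b
    induction f using MvPolynomial.induction_on with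
    | C a =>
      have h1 : IsAlgebraic L (Ideal.Quotient.mk P (C a)) :=
        (Algebra.IsAlgebraic.isAlgebraic (R := L) a).algHom
          (IsScalarTower.toAlgHom L k (MvPolynomial σ k ⧸ P))
      exact h1.extendScalars hLA
    | add f g hf hg => rw [map_add]; exact hf.add hg
    | mul_X f s hf =>
      rw [map_mul]
      refine hf.mul ?_
      have : Ideal.Quotient.mk P (X s) =
        algebraMap (MvPolynomial σ L ⧸ p) (MvPolynomial σ k ⧸ P) (Ideal.Quotient.mk p (X s)) := by
        change _ = Ideal.Quotient.mk P (μ (X s))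
        simp [μ]
      rw [this]
      exact isAlgebraic_algebraMap _
  let θA : MvPolynomial σ L ⧸ p →+* Ω := Ideal.Quotient.lift p (θ₂.comp μ) (fun a ha => by
    rw [hp] at ha; exact ha)
  have hθA : Function.Injective θA := by
    apply RingHom.lift_injective_of_ker_le_ideal
    rw [hp]
  obtain ⟨θB, hθB⟩ := lift_hom hAB θA hθA
  let θ₁ : MvPolynomial σ k →+* Ω := θB.comp (Ideal.Quotient.mk P)
  have h12 : ∀ f, θ₁ (μ f) = θ₂ (μ f) := fun f =>
    DFunLike.congr_fun hθB (Ideal.Quotient.mk p f)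
  let _ : Algebra k Ω := (θ₂.comp C).toAlgebra
  let _ : Algebra F Ω := ((θ₂.comp C).comp (algebraMap F k)).toAlgebra
  have : IsScalarTower F k Ω := IsScalarTower.of_algebraMap_eq fun _ => rfl
  have hF : (θ₁.comp C).comp (algebraMap F k) = (θ₂.comp C).comp (algebraMap F k) := by
    apply IsLocalization.ringHom_ext (nonZeroDivisors L)
    ext a
    have := h12 (C a)
    simp only [μ, map_C] at this
    simpa [← IsScalarTower.algebraMap_apply L F k] using this
  let τ : k →ₐ[F] Ω := { θ₁.comp C with commutes' := fun a => DFunLike.congr_fun hF a }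
  have : Normal F k := IsAlgClosure.normal F k
  let g := Normal.algHomEquivAut F Ω k τ
  have hg : ∀ a, θ₂ (C (g a)) = θ₁ (C a) := by
    intro a
    have := (Normal.algHomEquivAut F Ω k).symm_apply_apply τ
    exact DFunLike.congr_fun this a
  have hcomp : θ₂.comp (MvPolynomial.map (g : k →+* k)) = θ₁ := by
    apply MvPolynomial.ringHom_ext
    · intro a
      simpa using hg a
    · intro s
      have := h12 (X s)
      simp only [μ, map_X] at this
      simpa using this.symm
  refine ⟨g, fun f hf => ?_⟩
  rw [Ideal.mem_comap, ← hθ₂, RingHom.mem_ker, ← RingHom.comp_apply, hcomp]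
  change θB (Ideal.Quotient.mk P f) = 0
  rw [Ideal.Quotient.eq_zero_iff_mem.2 hf, map_zero]

lemma flat_Lk {L : Type} (F : Type) {k : Type} [CommRing L] [IsDomain L] [Field F] [Field k] [Algebra L F]
    [IsFractionRing L F] [Algebra L k] [Algebra F k] [IsScalarTower L F k] [IsAlgClosure F k] : Module.Flat L k := by
  have : Module.Flat L F := IsLocalization.flat F (nonZeroDivisors L)
  exact Module.Flat.trans L F k

attribute [local instance] MvPolynomial.algebraMvPolynomial in
lemma going_down {L : Type} (F : Type) {k σ : Type} [CommRing L] [IsDomain L] [Field F] [Field k] [Algebra L F]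
    [IsFractionRing L F] [Algebra L k] [Algebra F k] [IsScalarTower L F k] [IsAlgClosure F k]
    (p : Ideal (MvPolynomial σ L)) [p.IsPrime] (Q : Ideal (MvPolynomial σ k))
    [Q.IsPrime] (h : p ≤ Q.comap (MvPolynomial.map (algebraMap L k))) :
    ∃ P ≤ Q, P.IsPrime ∧ P.comap (MvPolynomial.map (algebraMap L k)) = p := by
  have : Module.Flat L k := flat_Lk F
  have : Module.Flat (MvPolynomial σ L) (MvPolynomial σ k) :=
    Module.Flat.isBaseChange L (MvPolynomial σ L) k (MvPolynomial σ k)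
      (Algebra.IsPushout.out (R := L) (S := MvPolynomial σ L) (R' := k) (S' := MvPolynomial σ k))
  have hover : Q.LiesOver (Q.under (MvPolynomial σ L)) := inferInstance
  obtain ⟨P, hPQ, hP, hl⟩ := Ideal.exists_ideal_le_liesOver_of_le (p := p)
    (q := Q.under (MvPolynomial σ L)) Q h
  exact ⟨P, hPQ, hP, hl.over.symm⟩

end GalAux

noncomputable section Assembly

lemma map_perm_eq {L : Type} [CommRing L] {c n : ℕ} (π : Equiv.Perm (Fin n))
    (P : Ideal (MvPolynomial (Fin c × Fin n) L)) :
    Ideal.map (rename (Prod.map (id : Fin c → Fin c) π)) P =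
      P.comap (rename (R := L) (Prod.map (id : Fin c → Fin c) π.symm)) := by
  have hinv : ∀ f : MvPolynomial (Fin c × Fin n) L,
      rename (Prod.map (id : Fin c → Fin c) π.symm)
        (rename (Prod.map (id : Fin c → Fin c) π) f) = f := by
    intro f
    rw [rename_rename]
    convert rename_id_apply f
    ext z <;> simp
  have hinv' : ∀ f : MvPolynomial (Fin c × Fin n) L,
      rename (Prod.map (id : Fin c → Fin c) π)
        (rename (Prod.map (id : Fin c → Fin c) π.symm) f) = f := by
    intro f
    rw [rename_rename]
    convert rename_id_apply f
    ext z <;> simp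
  apply le_antisymm
  · rw [Ideal.map_le_iff_le_comap]
    intro f hf
    rw [Ideal.mem_comap, Ideal.mem_comap, hinv]
    exact hf
  · intro f hf
    rw [← hinv' f]
    exact Ideal.mem_map_of_mem _ hf

lemma perm_equivalence {L : Type} [CommRing L] {c n : ℕ}
    (S : Set (Ideal (MvPolynomial (Fin c × Fin n) L))) :
    Equivalence (fun (P Q : {P : Ideal (MvPolynomial (Fin c × Fin n) L) // P ∈ S}) =>
      ∃ π : Equiv.Perm (Fin n),
          Ideal.map (rename (Prod.map (id : Fin c → Fin c) π)) P.1 = Q.1) := by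
  have e1 : ∀ P : Ideal (MvPolynomial (Fin c × Fin n) L),
      Ideal.map (rename (Prod.map (id : Fin c → Fin c) (1 : Equiv.Perm (Fin n)))) P = P := by
    intro P
    rw [map_perm_eq]
    ext f
    rw [Ideal.mem_comap]
    have : (Prod.map (id : Fin c → Fin c) (Equiv.symm (1 : Equiv.Perm (Fin n)))) = id := by
      ext z <;> rfl
    rw [this, rename_id_apply]
  have e2 : ∀ (P : Ideal (MvPolynomial (Fin c × Fin n) L)) (π ρ : Equiv.Perm (Fin n)),
      Ideal.map (rename (Prod.map (id : Fin c → Fin c) ρ))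
        (Ideal.map (rename (Prod.map (id : Fin c → Fin c) π)) P) =
      Ideal.map (rename (Prod.map (id : Fin c → Fin c) (ρ * π))) P := by
    intro P π ρ
    simp only [map_perm_eq]
    ext f
    simp only [Ideal.mem_comap, rename_rename]
    rfl
  refine ⟨fun P => ⟨1, e1 _⟩, ?_, ?_⟩
  · rintro P Q ⟨π, h⟩
    refine ⟨π⁻¹, ?_⟩
    rw [← h, e2, inv_mul_cancel, e1]
  · rintro P Q R ⟨π, h⟩ ⟨ρ, h'⟩
    exact ⟨ρ * π, by rw [← h', ← h, e2]⟩

/-- the ideal of the n-th member -/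
abbrev colIdeal {L : Type} [CommRing L] {c : ℕ} (J : Ideal (MvPolynomial (Fin c) L)) (n : ℕ) :
    Ideal (MvPolynomial (Fin c × Fin n) L) :=
  ⨆ j : Fin n, Ideal.map (rename (fun i : Fin c => (i, j))) J

/-- base change of coefficients -/
abbrev muMap (L k σ : Type) [CommRing L] [Field k] [Algebra L k] :
    MvPolynomial σ L →+* MvPolynomial σ k := MvPolynomial.map (algebraMap L k)

/-- components of the base-changed scheme -/
abbrev Comp {L : Type} (k : Type) [CommRing L] [Field k] [Algebra L k] {c : ℕ}
    (J : Ideal (MvPolynomial (Fin c) L)) : Type :=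
  {P : Ideal (MvPolynomial (Fin c) k) // P ∈ (J.map (muMap L k (Fin c))).minimalPrimes}

instance comp_prime {L : Type} (k : Type) [CommRing L] [Field k] [Algebra L k] {c : ℕ}
    (J : Ideal (MvPolynomial (Fin c) L)) (x : Comp k J) : x.1.IsPrime := x.2.1.1

instance comp_finite {L : Type} (k : Type) [CommRing L] [Field k] [Algebra L k] {c : ℕ}
    (J : Ideal (MvPolynomial (Fin c) L)) : Finite (Comp k J) :=
  (Ideal.finite_minimalPrimes_of_isNoetherianRing _ _).to_subtype

lemma good_iff {L k : Type} [CommRing L] [Field k] [Algebra L k] {c n : ℕ}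
    (J : Ideal (MvPolynomial (Fin c) L)) (Q : Ideal (MvPolynomial (Fin c × Fin n) k)) :
    colIdeal J n ≤ Q.comap (muMap L k _) ↔
      ∀ j, J.map (muMap L k _) ≤ Q.comap (colMap k j) := by
  rw [iSup_le_iff]
  refine forall_congr' fun j => ?_
  rw [Ideal.map_le_iff_le_comap, Ideal.map_le_iff_le_comap]
  have key : ∀ f, muMap L k _ (rename (fun i : Fin c => (i, j)) f) = colMap k j (muMap L k _ f) := by
    intro f
    exact map_rename _ _ _
  constructor
  · intro h f hf
    have := h hf
    simp only [Ideal.mem_comap] at this ⊢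
    rwa [← key]
  · intro h f hf
    have := h hf
    simp only [Ideal.mem_comap] at this ⊢
    rwa [key]

/-- product component -/
abbrev prodComp {L k : Type} [CommRing L] [Field k] [Algebra L k] {c n : ℕ}
    {J : Ideal (MvPolynomial (Fin c) L)} (x : Fin n → Comp k J) :
    Ideal (MvPolynomial (Fin c × Fin n) k) := prodIdeal (fun j => (x j).1)

lemma good_prodComp {L k : Type} [CommRing L] [Field k] [IsAlgClosed k] [Algebra L k] {c n : ℕ}
    {J : Ideal (MvPolynomial (Fin c) L)} (x : Fin n → Comp k J) :
    colIdeal J n ≤ (prodComp x).comap (muMap L k _) := by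
  rw [good_iff]
  intro j
  rw [comap_prodIdeal]
  exact (x j).2.1.2

lemma exists_prodComp_le {L k : Type} [CommRing L] [Field k] [IsAlgClosed k] [Algebra L k]
    {c n : ℕ} {J : Ideal (MvPolynomial (Fin c) L)} (Q : Ideal (MvPolynomial (Fin c × Fin n) k))
    [Q.IsPrime] (h : colIdeal J n ≤ Q.comap (muMap L k _)) :
    ∃ x : Fin n → Comp k J, prodComp x ≤ Q := by
  rw [good_iff] at h
  have : ∀ j, ∃ P : Comp k J, P.1 ≤ Q.comap (colMap k j) := by
    intro j
    have : (Q.comap (colMap (c := c) k j)).IsPrime := Ideal.comap_isPrime _ _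
    obtain ⟨P, hP, hle⟩ := Ideal.exists_minimalPrimes_le (h j)
    exact ⟨⟨P, hP⟩, hle⟩
  choose x hx using this
  exact ⟨x, prodIdeal_le _ _ hx⟩

lemma prodComp_le {L k : Type} [CommRing L] [Field k] [IsAlgClosed k] [Algebra L k]
    {c n : ℕ} {J : Ideal (MvPolynomial (Fin c) L)} (x y : Fin n → Comp k J)
    (h : prodComp y ≤ prodComp x) : y = x := by
  funext j
  apply Subtype.ext
  have h1 : (y j).1 ≤ (x j).1 := by
    rw [← comap_prodIdeal (fun j => (x j).1) j, ← comap_prodIdeal (fun j => (y j).1) j]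
    exact Ideal.comap_mono h
  exact le_antisymm h1 ((x j).2.2 (y j).2.1 h1)

lemma psi_min {L : Type} (F : Type) {k : Type} [CommRing L] [IsDomain L] [Field F] [Field k]
    [Algebra L F] [IsFractionRing L F] [Algebra L k] [Algebra F k] [IsScalarTower L F k]
    [IsAlgClosure F k] [IsAlgClosed k]
    {c n : ℕ} {J : Ideal (MvPolynomial (Fin c) L)} (x : Fin n → Comp k J) :
    (prodComp x).comap (muMap L k _) ∈ (colIdeal J n).minimalPrimes := by
  refine ⟨⟨Ideal.comap_isPrime _ _, good_prodComp x⟩, ?_⟩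
  rintro p ⟨hp, hI⟩ hle
  obtain ⟨P, hPQ, hP, rfl⟩ := going_down F p (prodComp x) hle
  obtain ⟨y, hy⟩ := exists_prodComp_le P hI
  have := prodComp_le x y (hy.trans hPQ)
  subst this
  exact Ideal.comap_mono hy

lemma psi_surj {L : Type} (F : Type) {k : Type} [CommRing L] [IsDomain L] [Field F] [Field k]
    [Algebra L F] [IsFractionRing L F] [Algebra L k] [Algebra F k] [IsScalarTower L F k]
    [IsAlgClosure F k] [IsAlgClosed k]
    {c n : ℕ} {J : Ideal (MvPolynomial (Fin c) L)}
    (hfree : Module.Free L (MvPolynomial (Fin c) L ⧸ J))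
    (p : Ideal (MvPolynomial (Fin c × Fin n) L)) (hp : p ∈ (colIdeal J n).minimalPrimes) :
    ∃ x : Fin n → Comp k J, (prodComp x).comap (muMap L k _) = p := by
  have := hp.1.1
  obtain ⟨Q, hQ, rfl⟩ := lying_over F (k := k) p (min_inter L c n J hfree p hp)
  obtain ⟨x, hx⟩ := exists_prodComp_le Q hp.1.2
  have h1 := Ideal.comap_mono (f := muMap L k (Fin c × Fin n)) hx
  exact ⟨x, le_antisymm h1 (hp.2 (psi_min F x).1 h1)⟩

lemma comap_map_comap {F k σ : Type} [Field F] [Field k] [Algebra F k]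
    (g h : k ≃ₐ[F] k) (P : Ideal (MvPolynomial σ k)) :
    (P.comap (MvPolynomial.map (g : k →+* k))).comap (MvPolynomial.map (h : k →+* k)) =
      P.comap (MvPolynomial.map ((g * h : k ≃ₐ[F] k) : k →+* k)) := by
  rw [Ideal.comap_comap]
  congr 1
  apply MvPolynomial.ringHom_ext
  · intro a; simp
  · intro s; simp

lemma comap_map_one {F k σ : Type} [Field F] [Field k] [Algebra F k]
    (P : Ideal (MvPolynomial σ k)) :
    P.comap (MvPolynomial.map ((1 : k ≃ₐ[F] k) : k →+* k)) = P := by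
  have : MvPolynomial.map ((1 : k ≃ₐ[F] k) : k →+* k) = RingHom.id (MvPolynomial σ k) := by
    apply MvPolynomial.ringHom_ext
    · intro a; simp
    · intro s; simp
  rw [this, Ideal.comap_id]

lemma gal_le {L F k : Type} [CommRing L] [IsDomain L] [Field F] [Field k]
    [Algebra L F] [IsFractionRing L F] [Algebra L k] [Algebra F k] [IsScalarTower L F k]
    {c : ℕ} {J : Ideal (MvPolynomial (Fin c) L)} (g : k ≃ₐ[F] k)
    (P : Ideal (MvPolynomial (Fin c) k)) (h : J.map (muMap L k _) ≤ P) :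
    J.map (muMap L k _) ≤ P.comap (MvPolynomial.map (g : k →+* k)) := by
  rw [Ideal.map_le_iff_le_comap] at h ⊢
  rwa [Ideal.comap_comap, map_map_g L F]

lemma gal_comp {L F k : Type} [CommRing L] [IsDomain L] [Field F] [Field k]
    [Algebra L F] [IsFractionRing L F] [Algebra L k] [Algebra F k] [IsScalarTower L F k]
    {c : ℕ} {J : Ideal (MvPolynomial (Fin c) L)} (g : k ≃ₐ[F] k) (x : Comp k J) :
    x.1.comap (MvPolynomial.map (g : k →+* k)) ∈ (J.map (muMap L k (Fin c))).minimalPrimes := by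
  refine ⟨⟨Ideal.comap_isPrime _ _, gal_le g _ x.2.1.2⟩, ?_⟩
  rintro P ⟨hP, hJ⟩ hle
  have h1 := Ideal.comap_mono (f := MvPolynomial.map ((g⁻¹ : k ≃ₐ[F] k) : k →+* k)) hle
  rw [comap_map_comap, mul_inv_cancel, comap_map_one] at h1
  have h2 := x.2.2 ⟨Ideal.comap_isPrime _ _, gal_le g⁻¹ _ hJ⟩ h1
  have h3 := Ideal.comap_mono (f := MvPolynomial.map ((g : k ≃ₐ[F] k) : k →+* k)) h2
  rwa [comap_map_comap, inv_mul_cancel, comap_map_one] at h3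

/-- Galois action on components -/
def galAct {L F k : Type} [CommRing L] [IsDomain L] [Field F] [Field k]
    [Algebra L F] [IsFractionRing L F] [Algebra L k] [Algebra F k] [IsScalarTower L F k]
    {c : ℕ} (J : Ideal (MvPolynomial (Fin c) L)) (g : k ≃ₐ[F] k) : Equiv.Perm (Comp k J) where
  toFun x := ⟨_, gal_comp g x⟩
  invFun x := ⟨_, gal_comp g⁻¹ x⟩
  left_inv x := Subtype.ext (by
    simp only [comap_map_comap, mul_inv_cancel, comap_map_one])
  right_inv x := Subtype.ext (by
    simp only [comap_map_comap, inv_mul_cancel, comap_map_one])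

/-- image of the Galois group -/
def galGroup {L : Type} (F : Type) {k : Type} [CommRing L] [IsDomain L] [Field F] [Field k]
    [Algebra L F] [IsFractionRing L F] [Algebra L k] [Algebra F k] [IsScalarTower L F k]
    {c : ℕ} (J : Ideal (MvPolynomial (Fin c) L)) : Subgroup (Equiv.Perm (Comp k J)) where
  carrier := {h | ∃ g : k ≃ₐ[F] k, h = galAct J g}
  one_mem' := ⟨1, by ext1 x; exact Subtype.ext (comap_map_one _).symm⟩
  mul_mem' := by
    rintro _ _ ⟨g, rfl⟩ ⟨h, rfl⟩
    exact ⟨h * g, by ext1 x; exact Subtype.ext (comap_map_comap _ _ _)⟩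
  inv_mem' := by
    rintro _ ⟨g, rfl⟩
    exact ⟨g⁻¹, by ext1 x; rfl⟩

lemma psi_eq_iff {L : Type} (F : Type) {k : Type} [CommRing L] [IsDomain L] [Field F] [Field k]
    [Algebra L F] [IsFractionRing L F] [Algebra L k] [Algebra F k] [IsScalarTower L F k]
    [IsAlgClosure F k] [IsAlgClosed k]
    {c n : ℕ} {J : Ideal (MvPolynomial (Fin c) L)} (x y : Fin n → Comp k J) :
    (prodComp x).comap (muMap L k _) = (prodComp y).comap (muMap L k _) ↔
      ∃ h ∈ galGroup F J, y = fun j => h (x j) := by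
  have hcol : ∀ (g : k ≃ₐ[F] k) (Q : Ideal (MvPolynomial (Fin c × Fin n) k)) (j : Fin n),
      (Q.comap (MvPolynomial.map (g : k →+* k))).comap (colMap k j) =
        (Q.comap (colMap (c := c) k j)).comap (MvPolynomial.map (g : k →+* k)) := by
    intro g Q j
    ext f
    simp only [Ideal.mem_comap]
    have : MvPolynomial.map (g : k →+* k) (colMap k j f) =
      colMap k j (MvPolynomial.map (g : k →+* k) f) := map_rename _ _ _
    rw [this]
  constructor
  · intro h
    obtain ⟨g, hg⟩ := conj_primes F (prodComp y) (prodComp x) h.symm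
    refine ⟨galAct J g, ⟨g, rfl⟩, ?_⟩
    funext j
    apply Subtype.ext
    have h1 := Ideal.comap_mono (f := colMap (c := c) k j) hg
    rw [hcol, comap_prodIdeal, comap_prodIdeal] at h1
    exact le_antisymm h1 ((gal_comp g (x j)).2 (y j).2.1 h1)
  · rintro ⟨_, ⟨g, rfl⟩, rfl⟩
    have h1 : prodComp (fun j => galAct J g (x j)) ≤
        (prodComp x).comap (MvPolynomial.map (g : k →+* k)) := by
      have : ((prodComp x).comap (MvPolynomial.map (g : k →+* k))).IsPrime :=
        Ideal.comap_isPrime _ _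
      apply prodIdeal_le
      intro j
      rw [hcol, comap_prodIdeal]
      exact le_rfl
    have h2 := Ideal.comap_mono (f := muMap L k (Fin c × Fin n)) h1
    rw [Ideal.comap_comap, map_map_g L F] at h2
    exact le_antisymm ((psi_min F x).2 (psi_min F _).1 h2) h2

lemma perm_psi {L k : Type} [CommRing L] [Field k] [Algebra L k] [IsAlgClosed k]
    {c n : ℕ} {J : Ideal (MvPolynomial (Fin c) L)} (x : Fin n → Comp k J)
    (π : Equiv.Perm (Fin n)) :
    Ideal.map (rename (Prod.map (id : Fin c → Fin c) π)) ((prodComp x).comap (muMap L k _)) =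
      (prodComp (fun j => x (π.symm j))).comap (muMap L k _) := by
  rw [map_perm_eq]
  have := comap_perm_prodIdeal (fun j => (x j).1) π.symm
  rw [prodComp, prodComp, ← this]
  ext f
  simp only [Ideal.mem_comap]
  rw [map_rename]

end Assembly

/-- The Main Theorem for `FIᵒᵖ`-schemes of product type: with `L` a Noetherian domain,
`J ⊆ L[y_1,…,y_c]` an ideal whose quotient is a free `L`-module, and `I n` the ideal of
`L[x_{i,j}]` generated by the copies of `J` in each column, the number of
`Sym([n])`-orbits on minimal primes over `I n` is a quasipolynomial in `n` for `n ≫ 0`. -/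
theorem orbit_count_components_product_type
    (L : Type) [CommRing L] [IsDomain L] [IsNoetherianRing L] (c : ℕ)
    (J : Ideal (MvPolynomial (Fin c) L))
    (hfree : Module.Free L (MvPolynomial (Fin c) L ⧸ J)) :
    QuasiPolynomialCount (fun n =>
      Nat.card (Quot (fun (P Q : {P : Ideal (MvPolynomial (Fin c × Fin n) L) //
          P ∈ (⨆ j : Fin n, Ideal.map (rename (fun i : Fin c => (i, j))) J).minimalPrimes}) =>
        ∃ π : Equiv.Perm (Fin n),
          Ideal.map (rename (Prod.map (id : Fin c → Fin c) π)) P.1 = Q.1))) := by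
  have : IsAlgClosure (FractionRing L) (AlgebraicClosure (FractionRing L)) := inferInstance
  refine comb_count (Comp (AlgebraicClosure (FractionRing L)) J) (galGroup (FractionRing L) J) _ ?_
  intro n
  refine ⟨_, _, fun x => ⟨_, psi_min (FractionRing L) x⟩, ?_, perm_equivalence _, ?_, rfl⟩
  · rintro ⟨p, hp⟩
    obtain ⟨x, hx⟩ := psi_surj (FractionRing L)
      (k := AlgebraicClosure (FractionRing L)) hfree p hp
    exact ⟨x, Subtype.ext hx⟩
  · intro x y
    simp only [perm_psi, psi_eq_iff (FractionRing L)]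
    constructor
    · rintro ⟨π, h, hh, e⟩
      exact ⟨h, hh, π.symm, e⟩
    · rintro ⟨h, hh, σ, e⟩
      exact ⟨σ.symm, h, hh, e⟩
end

section
/- Let (I_n)_{n∈ℕ} be a symmetric wide-matrix ideal chain over a Noetherian commutative ring K with I_n ≠ A_n for every n. Then there exist a real constant c ≥ 1 and n_0 ∈ ℕ such that for all n ≥ n_0, the number of minimal prime ideals of A_n over I_n is at most c^n. -/
open MvPolynomial


open TensorProduct in
theorem nc_exists_point (k A : Type) [Field k] [IsAlgClosed k] [CommRing A] [IsDomain A]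
    [Algebra k A] [Algebra.FiniteType k A] (a : A) (ha : a ≠ 0) :
    ∃ φ : A →ₐ[k] k, φ a ≠ 0 := by
  let L := Localization.Away a
  have : Nontrivial L := (IsLocalization.injective (M := Submonoid.powers a) L
    (powers_le_nonZeroDivisors_of_noZeroDivisors ha)).nontrivial
  have : Algebra.FiniteType A L := IsLocalization.finiteType_of_monoid_fg (Submonoid.powers a) L
  have : Algebra.FiniteType k L := Algebra.FiniteType.trans (S := A) inferInstance inferInstance
  obtain ⟨m, hm⟩ := Ideal.exists_maximal L
  let : Field (L ⧸ m) := Ideal.Quotient.field m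
  have hf : Module.Finite k (L ⧸ m) := finite_of_finite_type_of_isJacobsonRing k (L ⧸ m)
  have hb := IsAlgClosed.algebraMap_bijective_of_isIntegral (k := k) (K := L ⧸ m)
  let e : k ≃ₐ[k] (L ⧸ m) := AlgEquiv.ofBijective (Algebra.ofId k _) hb
  refine ⟨(e.symm.toAlgHom.comp (Ideal.Quotient.mkₐ k m)).comp (IsScalarTower.toAlgHom k A L), ?_⟩
  have hu : IsUnit (algebraMap A L a) := IsLocalization.Away.algebraMap_isUnit a
  intro h
  have := (hu.map ((e.symm.toAlgHom.comp (Ideal.Quotient.mkₐ k m)))).ne_zero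
  exact this h

open TensorProduct in
theorem nc_descend (k A B : Type) [Field k] [CommRing A] [Algebra k A] [CommRing B] [Algebra k B]
    (x : A ⊗[k] B) : ∃ s : Finset A, ∀ S : Subalgebra k A, (s : Set A) ⊆ S →
      ∃ y : S ⊗[k] B, Algebra.TensorProduct.map S.val (AlgHom.id k B) y = x := by
  classical
  induction x using TensorProduct.induction_on with
  | zero => exact ⟨∅, fun S _ => ⟨0, by simp⟩⟩
  | tmul a b => exact ⟨{a}, fun S h => ⟨(⟨a, h (by simp)⟩ : S) ⊗ₜ b, by simp⟩⟩
  | add x y hx hy =>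
    obtain ⟨s, hs⟩ := hx
    obtain ⟨t, ht⟩ := hy
    refine ⟨s ∪ t, fun S h => ?_⟩
    rw [Finset.coe_union, Set.union_subset_iff] at h
    obtain ⟨x', rfl⟩ := hs S h.1
    obtain ⟨y', rfl⟩ := ht S h.2
    exact ⟨x' + y', by simp⟩

open TensorProduct in
theorem nc_specialize (k A B : Type) [Field k] [IsAlgClosed k] [CommRing A] [IsDomain A]
    [Algebra k A] [Algebra.FiniteType k A] [CommRing B] [Algebra k B]
    (x y : A ⊗[k] B) (hx : x ≠ 0) (hy : y ≠ 0) :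
    ∃ f : A ⊗[k] B →ₐ[k] B, f x ≠ 0 ∧ f y ≠ 0 := by
  let b := Module.Basis.ofVectorSpace k B
  let bA := Algebra.TensorProduct.basis A b
  have h1 : ∃ i, bA.repr x i ≠ 0 := by
    by_contra! h
    exact hx (bA.repr.map_eq_zero_iff.1 (Finsupp.ext h))
  have h2 : ∃ i, bA.repr y i ≠ 0 := by
    by_contra! h
    exact hy (bA.repr.map_eq_zero_iff.1 (Finsupp.ext h))
  obtain ⟨i, hi⟩ := h1
  obtain ⟨j, hj⟩ := h2
  obtain ⟨φ, hφ⟩ := nc_exists_point k A _ (mul_ne_zero hi hj)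
  rw [map_mul] at hφ
  let f : A ⊗[k] B →ₐ[k] B := Algebra.TensorProduct.lift
    ((Algebra.ofId k B).comp φ) (AlgHom.id k B) (fun _ _ => Commute.all _ _)
  have key : ∀ z i, b.repr (f z) i = φ (bA.repr z i) := by
    intro z i
    induction z using TensorProduct.induction_on with
    | zero => simp
    | tmul a c =>
      simp [f, bA, Algebra.ofId_apply, ← Algebra.smul_def]
    | add z w hz hw => simp [hz, hw]
  refine ⟨f, fun h => left_ne_zero_of_mul hφ ?_, fun h => right_ne_zero_of_mul hφ ?_⟩
  · rw [← key, h]; simp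
  · rw [← key, h]; simp

open TensorProduct in
theorem nc_tensor_isDomain (k A B : Type) [Field k] [IsAlgClosed k] [CommRing A] [IsDomain A]
    [Algebra k A] [CommRing B] [IsDomain B] [Algebra k B] : IsDomain (A ⊗[k] B) := by
  classical
  have : Nontrivial (A ⊗[k] B) := inferInstance
  have : NoZeroDivisors (A ⊗[k] B) := by
    refine ⟨fun {x y} hxy => ?_⟩
    by_contra! h
    obtain ⟨hx, hy⟩ := h
    obtain ⟨s, hs⟩ := nc_descend k A B x
    obtain ⟨t, ht⟩ := nc_descend k A B y
    let S := Algebra.adjoin k ((s ∪ t : Finset A) : Set A)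
    have hS : ((s ∪ t : Finset A) : Set A) ⊆ S := Algebra.subset_adjoin
    rw [Finset.coe_union, Set.union_subset_iff] at hS
    obtain ⟨x', rfl⟩ := hs S hS.1
    obtain ⟨y', rfl⟩ := ht S hS.2
    have : Algebra.FiniteType k S := by
      rw [← Subalgebra.fg_iff_finiteType]
      exact ⟨_, rfl⟩
    have hx' : x' ≠ 0 := by rintro rfl; simp at hx
    have hy' : y' ≠ 0 := by rintro rfl; simp at hy
    have hinj : Function.Injective (Algebra.TensorProduct.map S.val (AlgHom.id k B)) :=
      Module.Flat.rTensor_preserves_injective_linearMap (M := B) S.val.toLinearMap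
        Subtype.val_injective
    have h0 : x' * y' = 0 := by
      apply hinj
      rw [map_mul, hxy, map_zero]
    obtain ⟨f, hf, hg⟩ := nc_specialize k S B x' y' hx' hy'
    have := congrArg f h0
    rw [map_mul, map_zero] at this
    exact mul_ne_zero hf hg this
  exact NoZeroDivisors.to_isDomain _


noncomputable abbrev NcKbar {A : Type} [CommRing A] (Q : Ideal A) [Q.IsPrime] : Type :=
  AlgebraicClosure Q.ResidueField

noncomputable def ncIota {A : Type} [CommRing A] (Q : Ideal A) [Q.IsPrime] : A →+* NcKbar Q :=
  (algebraMap Q.ResidueField (NcKbar Q)).comp (algebraMap A Q.ResidueField)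

theorem ncIota_eq_zero {A : Type} [CommRing A] (Q : Ideal A) [Q.IsPrime] (a : A) :
    ncIota Q a = 0 ↔ a ∈ Q := by
  unfold ncIota
  rw [RingHom.comp_apply, map_eq_zero_iff _ (algebraMap Q.ResidueField (NcKbar Q)).injective]
  exact Ideal.algebraMap_residueField_eq_zero

theorem nc_lift0 {k l : Type} [Field k] [Field l] (r : k →+* l) :
    ∃ j : AlgebraicClosure k →+* AlgebraicClosure l,
      ∀ a, j (algebraMap _ _ a) = algebraMap _ _ (r a) := by
  let : Algebra k (AlgebraicClosure l) := ((algebraMap l (AlgebraicClosure l)).comp r).toAlgebra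
  let j : AlgebraicClosure k →ₐ[k] AlgebraicClosure l := IsAlgClosed.lift
  exact ⟨j.toRingHom, fun a => j.commutes a⟩

theorem nc_lift {A B : Type} [CommRing A] [CommRing B] (Q : Ideal A) [Q.IsPrime] (P : Ideal B)
    [P.IsPrime] (φ : A →+* B) (h : P.comap φ = Q) :
    ∃ j : NcKbar Q →+* NcKbar P, ∀ a, j (ncIota Q a) = ncIota P (φ a) := by
  obtain ⟨j, hj⟩ := nc_lift0 (Ideal.ResidueField.map Q P φ h.symm)
  refine ⟨j, fun a => ?_⟩
  simp only [ncIota, RingHom.comp_apply, hj, Ideal.ResidueField.map_algebraMap]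

open TensorProduct in
noncomputable def ncPsi {c : ℕ} {A k M : Type} [CommRing A] [Field k] [Field M] [Algebra k M]
    (ι : A →+* M) (p : Ideal (MvPolynomial (Fin c) k)) :
    MvPolynomial (Fin c) A →+* M ⊗[k] (MvPolynomial (Fin c) k ⧸ p) :=
  eval₂Hom ((algebraMap M (M ⊗[k] (MvPolynomial (Fin c) k ⧸ p))).comp ι)
      (fun i => (1 : M) ⊗ₜ (Ideal.Quotient.mk p (X i)))

open TensorProduct in
theorem nc_core {c : ℕ} {A0 A k M Ω : Type} [CommRing A0] [CommRing A] [Field k] [IsAlgClosed k]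
    [Field M] [Field Ω]
    (F : Set (MvPolynomial (Fin c) A0)) (φ : A0 →+* A) (ι0 : A0 →+* k) (ι : A →+* M)
    (θ : MvPolynomial (Fin c) A →+* Ω) [Algebra k M] [Algebra M Ω] [Algebra k Ω]
    [IsScalarTower k M Ω]
    (hj : ∀ a, algebraMap k M (ι0 a) = ι (φ a)) (hj' : ∀ a, algebraMap M Ω (ι a) = θ (C a))
    (hF : ∀ f ∈ F, θ (MvPolynomial.map φ f) = 0)
    (hmin : ∀ P0 : Ideal (MvPolynomial (Fin c) A), P0.IsPrime → (∀ a, ι a = 0 → C a ∈ P0) →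
            (∀ f ∈ F, MvPolynomial.map φ f ∈ P0) → P0 ≤ RingHom.ker θ → P0 = RingHom.ker θ) :
    ∃ p ∈ (Ideal.span (MvPolynomial.map ι0 '' F)).minimalPrimes,
      RingHom.ker (ncPsi ι p) = RingHom.ker θ := by
  let J : Ideal (MvPolynomial (Fin c) k) := Ideal.span (MvPolynomial.map ι0 '' F)
  let ev : MvPolynomial (Fin c) k →ₐ[k] Ω := aeval (fun i => θ (X i))
  have hev : ∀ f, ev (MvPolynomial.map ι0 f) = θ (MvPolynomial.map φ f) := by
    intro f
    induction f using MvPolynomial.induction_on with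
    | C a =>
      simp only [map_C]
      rw [← hj', ← hj, ← IsScalarTower.algebraMap_apply]
      exact ev.commutes _
    | add p q hp hq => simp only [map_add, hp, hq]
    | mul_X p i hp =>
      simp only [map_mul, hp, map_X]
      congr 1
      simp [ev]
  have hkp : (RingHom.ker ev).IsPrime := RingHom.ker_isPrime _
  have hJ : J ≤ RingHom.ker ev := by
    rw [Ideal.span_le]
    rintro _ ⟨f, hf, rfl⟩
    rw [SetLike.mem_coe, RingHom.mem_ker, hev]
    exact hF f hf
  obtain ⟨p, hp, hple⟩ := Ideal.exists_minimalPrimes_le hJ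
  have hpp : p.IsPrime := hp.1.1
  refine ⟨p, hp, ?_⟩
  have hdom : IsDomain (M ⊗[k] (MvPolynomial (Fin c) k ⧸ p)) := nc_tensor_isDomain _ _ _
  have hψmap : ∀ f, ncPsi ι p (MvPolynomial.map φ f) =
      (1 : M) ⊗ₜ (Ideal.Quotient.mk p (MvPolynomial.map ι0 f)) := by
    intro f
    induction f using MvPolynomial.induction_on with
    | C a =>
      simp only [map_C, ncPsi, eval₂Hom_C, RingHom.comp_apply]
      rw [← hj]
      exact (Algebra.TensorProduct.includeLeft.commutes (ι0 a)).trans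
        (Algebra.TensorProduct.includeRight.commutes (ι0 a)).symm
    | add p q hp hq => simp only [map_add, hp, hq, TensorProduct.tmul_add]
    | mul_X p i hp =>
      simp only [map_mul, hp, map_X]
      simp [ncPsi]
  refine hmin _ (RingHom.ker_isPrime _) ?_ ?_ ?_
  · intro a ha
    rw [RingHom.mem_ker]
    simp only [ncPsi, eval₂Hom_C, RingHom.comp_apply]
    rw [ha, map_zero]
  · intro f hf
    rw [RingHom.mem_ker, hψmap]
    have : Ideal.Quotient.mk p (MvPolynomial.map ι0 f) = 0 :=
      Ideal.Quotient.eq_zero_iff_mem.2 (hp.1.2 (Ideal.subset_span ⟨f, hf, rfl⟩))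
    rw [this, TensorProduct.tmul_zero]
  · let g : M ⊗[k] (MvPolynomial (Fin c) k ⧸ p) →ₐ[k] Ω := Algebra.TensorProduct.lift
      (IsScalarTower.toAlgHom k M Ω) (Ideal.Quotient.liftₐ p ev (fun a ha => hple ha))
      (fun _ _ => Commute.all _ _)
    have hg : ∀ f, g (ncPsi ι p f) = θ f := by
      intro f
      induction f using MvPolynomial.induction_on with
      | C a =>
        rw [← hj']
        simp [ncPsi, g]
      | add p q hp hq => simp only [map_add, hp, hq]
      | mul_X p i hp =>
        simp only [map_mul, hp]
        congr 1
        simp [ncPsi, g, ev]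
        exact aeval_X _ _
    intro f hf
    rw [RingHom.mem_ker] at hf
    rw [RingHom.mem_ker, ← hg, hf, map_zero]

theorem nc_fibre (c : ℕ) (A0 : Type) [CommRing A0] (Q : Ideal A0) [Q.IsPrime]
    (F : Set (MvPolynomial (Fin c) A0)) :
    ∃ e : ℕ, ∀ (A : Type) [CommRing A] (φ : A0 →+* A) (P' : Ideal A) [P'.IsPrime],
      P'.comap φ = Q →
      ∃ T : Finset (Ideal (MvPolynomial (Fin c) A)), T.card ≤ e ∧
        ∀ P : Ideal (MvPolynomial (Fin c) A), P.IsPrime → P.comap C = P' →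
          (∀ f ∈ F, MvPolynomial.map φ f ∈ P) →
          (∀ P0 : Ideal (MvPolynomial (Fin c) A), P0.IsPrime → P' ≤ P0.comap C →
            (∀ f ∈ F, MvPolynomial.map φ f ∈ P0) → P0 ≤ P → P0 = P) → P ∈ T := by
  classical
  have hfin : (Ideal.span (MvPolynomial.map (ncIota Q) '' F)).minimalPrimes.Finite :=
    Ideal.finite_minimalPrimes_of_isNoetherianRing _ _
  refine ⟨hfin.toFinset.card, ?_⟩
  intro A _ φ P' _ hP'
  obtain ⟨j, hj⟩ := nc_lift Q P' φ hP'
  let : Algebra (NcKbar Q) (NcKbar P') := j.toAlgebra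
  refine ⟨hfin.toFinset.image (fun p =>
    RingHom.ker (ncPsi (k := NcKbar Q) (ncIota P') p)),
    Finset.card_image_le, ?_⟩
  intro P hP hPP' hF hmin
  obtain ⟨j', hj'⟩ := nc_lift P' P C hPP'
  let : Algebra (NcKbar P') (NcKbar P) := j'.toAlgebra
  let : Algebra (NcKbar Q) (NcKbar P) := (j'.comp j).toAlgebra
  have : IsScalarTower (NcKbar Q) (NcKbar P') (NcKbar P) :=
    IsScalarTower.of_algebraMap_eq (fun _ => rfl)
  have hker : RingHom.ker (ncIota P) = P := by
    ext a
    rw [RingHom.mem_ker, ncIota_eq_zero]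
  rw [Finset.mem_image]
  obtain ⟨p, hp, h⟩ := nc_core F φ (ncIota Q) (ncIota P') (ncIota P) hj hj'
    (fun f hf => (ncIota_eq_zero P _).2 (hF f hf)) (by
      rw [hker]
      intro P0 h0 h1 h2 h3
      exact hmin P0 h0 (fun a ha => h1 a ((ncIota_eq_zero P' a).2 ha)) h2 h3)
  exact ⟨p, hfin.mem_toFinset.2 hp, h.trans hker⟩


abbrev NcA (K : Type) [CommRing K] (c n : ℕ) : Type := MvPolynomial (Fin c × Fin n) K

noncomputable def ncRho (K : Type) [CommRing K] (c : ℕ) {m n : ℕ} (ι : Fin m → Fin n) :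
    NcA K c m →ₐ[K] NcA K c n := rename (Prod.map id ι)

structure NcChain (K : Type) [CommRing K] (c : ℕ) where
  I : ∀ n : ℕ, Ideal (NcA K c n)
  mem' : ∀ {m n : ℕ} (ι : Fin m → Fin n), Function.Injective ι → ∀ f ∈ I m, ncRho K c ι f ∈ I n

theorem NcChain.I_injective (K : Type) [CommRing K] (c : ℕ) :
    Function.Injective (NcChain.I : NcChain K c → _) := by
  rintro ⟨I, _⟩ ⟨J, _⟩ h
  cases h
  rfl

noncomputable instance (K : Type) [CommRing K] (c : ℕ) : PartialOrder (NcChain K c) :=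
  PartialOrder.lift NcChain.I (NcChain.I_injective K c)

theorem NcChain.le_def {K : Type} [CommRing K] {c : ℕ} {I J : NcChain K c} :
    I ≤ J ↔ ∀ n, I.I n ≤ J.I n := Iff.rfl

/-- monomial order -/
noncomputable def ncMO (c n : ℕ) : MonomialOrder (Fin c × Fin n) where
  syn := (MonomialOrder.lex (σ := Fin c ×ₗ Fin n)).syn
  toSyn := (Finsupp.domCongr (toLex : Fin c × Fin n ≃ Fin c ×ₗ Fin n)).trans
    (MonomialOrder.lex (σ := Fin c ×ₗ Fin n)).toSyn
  toSyn_monotone := by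
    intro a b h
    apply (MonomialOrder.lex (σ := Fin c ×ₗ Fin n)).toSyn_monotone
    intro x
    exact h _
  wellFoundedLT_syn := (MonomialOrder.lex (σ := Fin c ×ₗ Fin n)).wellFoundedLT_syn

theorem ncMO_lt {c n : ℕ} (a b : Fin c × Fin n →₀ ℕ) :
    (ncMO c n).toSyn a < (ncMO c n).toSyn b ↔
      ∃ i : Fin c × Fin n, (∀ j, toLex j < toLex i → a j = b j) ∧ a i < b i := by
  constructor
  · rintro ⟨i, h1, h2⟩
    exact ⟨ofLex i, fun j hj => h1 (toLex j) hj, h2⟩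
  · rintro ⟨i, h1, h2⟩
    exact ⟨toLex i, fun j hj => h1 (ofLex j) hj, h2⟩

theorem ncMO_mapDomain {c m n : ℕ} (ι : Fin m → Fin n) (hι : StrictMono ι)
    (a b : Fin c × Fin m →₀ ℕ) (h : (ncMO c m).toSyn a ≤ (ncMO c m).toSyn b) :
    (ncMO c n).toSyn (a.mapDomain (Prod.map id ι)) ≤
      (ncMO c n).toSyn (b.mapDomain (Prod.map id ι)) := by
  have hinj : Function.Injective (Prod.map (id : Fin c → Fin c) ι) :=
    Function.injective_id.prodMap hι.injective
  rcases h.lt_or_eq with h | h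
  · apply le_of_lt
    rw [ncMO_lt] at h ⊢
    obtain ⟨i, h1, h2⟩ := h
    refine ⟨Prod.map id ι i, fun j hj => ?_, ?_⟩
    · by_cases hr : j ∈ Set.range (Prod.map (id : Fin c → Fin c) ι)
      · obtain ⟨j, rfl⟩ := hr
        rw [Finsupp.mapDomain_apply hinj, Finsupp.mapDomain_apply hinj]
        apply h1
        rw [Prod.Lex.toLex_lt_toLex] at hj ⊢
        simpa [hι.lt_iff_lt] using hj
      · rw [Finsupp.mapDomain_of_notMem_range _ _ hr, Finsupp.mapDomain_of_notMem_range _ _ hr]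
    · rwa [Finsupp.mapDomain_apply hinj, Finsupp.mapDomain_apply hinj]
  · rw [(ncMO c m).toSyn.injective h]

/-- leading coefficient ideal -/
def ncLc {σ K : Type} [CommRing K] (m : MonomialOrder σ) (I : Ideal (MvPolynomial σ K))
    (d : σ →₀ ℕ) : Ideal K where
  carrier := {a | ∃ f ∈ I, coeff d f = a ∧ ∀ v, coeff v f ≠ 0 → m.toSyn v ≤ m.toSyn d}
  add_mem' := by
    rintro _ _ ⟨f, hf, rfl, hf'⟩ ⟨g, hg, rfl, hg'⟩
    refine ⟨f + g, I.add_mem hf hg, coeff_add _ _ _, fun v hv => ?_⟩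
    by_cases h : coeff v f = 0
    · by_cases h' : coeff v g = 0
      · simp [h, h'] at hv
      · exact hg' v h'
    · exact hf' v h
  zero_mem' := ⟨0, I.zero_mem, by simp, by simp⟩
  smul_mem' := by
    rintro a _ ⟨f, hf, rfl, hf'⟩
    refine ⟨C a * f, I.mul_mem_left _ hf, by simp, fun v hv => hf' v ?_⟩
    rw [coeff_C_mul] at hv
    exact right_ne_zero_of_mul hv

theorem ncLc_mono {σ K : Type} [CommRing K] (m : MonomialOrder σ) {I J : Ideal (MvPolynomial σ K)}
    (h : I ≤ J) (d : σ →₀ ℕ) : ncLc m I d ≤ ncLc m J d := by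
  rintro _ ⟨f, hf, rfl, hf'⟩
  exact ⟨f, h hf, rfl, hf'⟩

theorem nc_le_of_lc {σ K : Type} [CommRing K] (m : MonomialOrder σ)
    {I J : Ideal (MvPolynomial σ K)} (hIJ : I ≤ J) (h : ∀ d, ncLc m J d ≤ ncLc m I d) :
    J ≤ I := by
  have key : ∀ s : m.syn, ∀ f ∈ J, (∀ v, coeff v f ≠ 0 → m.toSyn v ≤ s) → f ∈ I := by
    intro s
    induction s using WellFoundedLT.induction with
    | ind s ih =>
      intro f hf hs
      obtain ⟨d, rfl⟩ := m.toSyn.surjective s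
      obtain ⟨g, hg, hgd, hg'⟩ := h d ⟨f, hf, rfl, hs⟩
      have hfg : f - g ∈ I := by
        by_cases h0 : f - g = 0
        · rw [h0]; exact I.zero_mem
        refine ih (m.toSyn (m.degree (f - g))) ?_ (f - g) (J.sub_mem hf (hIJ hg)) ?_
        · have h1 : coeff (m.degree (f - g)) (f - g) ≠ 0 :=
            mem_support_iff.1 (m.degree_mem_support h0)
          apply lt_of_le_of_ne
          · by_cases h : coeff (m.degree (f - g)) f = 0
            · apply hg'
              intro h'
              apply h1
              rw [coeff_sub, h, h', sub_zero]
            · exact hs _ h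
          · intro he
            have := m.toSyn.injective he
            rw [this, coeff_sub, hgd, sub_self] at h1
            exact h1 rfl
        · intro v hv
          exact m.le_degree (mem_support_iff.2 hv)
      have := I.add_mem hfg hg
      rwa [sub_add_cancel] at this
  intro f hf
  exact key (m.toSyn (m.degree f)) f hf (fun v hv => m.le_degree (mem_support_iff.2 hv))

theorem ncLc_embed {K : Type} [CommRing K] {c : ℕ} (I : NcChain K c) {m n : ℕ}
    (ι : Fin m → Fin n) (hι : StrictMono ι) (a : Fin c × Fin m →₀ ℕ) (b : Fin c × Fin n →₀ ℕ)
    (h : a.mapDomain (Prod.map id ι) ≤ b) :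
    ncLc (ncMO c m) (I.I m) a ≤ ncLc (ncMO c n) (I.I n) b := by
  classical
  have hinj : Function.Injective (Prod.map (id : Fin c → Fin c) ι) :=
    Function.injective_id.prodMap hι.injective
  rintro _ ⟨f, hf, rfl, hf'⟩
  obtain ⟨e, rfl⟩ := exists_add_of_le h
  refine ⟨monomial e 1 * ncRho K c ι f, Ideal.mul_mem_left _ _ (I.mem' ι hι.injective f hf),
    ?_, ?_⟩
  · rw [add_comm, coeff_monomial_mul, one_mul]
    exact coeff_rename_mapDomain _ hinj _ _
  · intro v hv
    rw [coeff_monomial_mul'] at hv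
    split_ifs at hv with hev
    · obtain ⟨w, rfl⟩ := exists_add_of_le hev
      rw [add_tsub_cancel_left, one_mul] at hv
      obtain ⟨u, rfl, hu⟩ := coeff_rename_ne_zero _ _ _ hv
      have := ncMO_mapDomain ι hι _ _ (hf' u hu)
      rw [map_add, map_add, add_comm]
      exact add_le_add_left this _
    · exact absurd rfl hv

/-- word -/
def ncWord {c n : ℕ} (d : Fin c × Fin n →₀ ℕ) : List (Fin c → ℕ) :=
  List.ofFn (fun j i => d (i, j))

theorem ncWord_embed {c m n : ℕ} (a : Fin c × Fin m →₀ ℕ) (b : Fin c × Fin n →₀ ℕ)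
    (h : List.SublistForall₂ (· ≤ ·) (ncWord a) (ncWord b)) :
    ∃ ι : Fin m → Fin n, StrictMono ι ∧ a.mapDomain (Prod.map id ι) ≤ b := by
  rw [List.sublistForall₂_iff] at h
  obtain ⟨l, h1, h2⟩ := h
  rw [List.sublist_iff_exists_fin_orderEmbedding_get_eq] at h2
  obtain ⟨f, hf⟩ := h2
  have hl : m = l.length := by
    rw [← h1.length_eq]; simp [ncWord]
  have hb : (ncWord b).length = n := by simp [ncWord]
  refine ⟨fun j => Fin.cast hb (f (Fin.cast hl j)), fun i j hij => ?_, ?_⟩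
  · exact f.strictMono (by simpa using hij)
  · have hs : StrictMono (fun j => Fin.cast hb (f (Fin.cast hl j))) :=
      fun i j hij => f.strictMono (by simpa using hij)
    have hinj := (Function.injective_id (α := Fin c)).prodMap hs.injective
    intro x
    by_cases hr : x ∈ Set.range (Prod.map (id : Fin c → Fin c)
        (fun j => Fin.cast hb (f (Fin.cast hl j))))
    · obtain ⟨⟨i, j⟩, rfl⟩ := hr
      rw [Finsupp.mapDomain_apply hinj]
      have e1 := hf (Fin.cast hl j)
      have e2 := (List.forall₂_iff_get.1 h1).2 j (by simp [ncWord]) (by rw [← hl]; exact j.2)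
      have e3 : l.get ⟨j, by rw [← hl]; exact j.2⟩ = l.get (Fin.cast hl j) := rfl
      rw [e3, e1] at e2
      have e4 := e2 i
      simp [ncWord] at e4
      exact e4
    · rw [Finsupp.mapDomain_of_notMem_range _ _ hr]
      exact Nat.zero_le _

theorem NcChain.wf (K : Type) [CommRing K] [IsNoetherianRing K] (c : ℕ) :
    WellFoundedGT (NcChain K c) := by
  rw [wellFoundedGT_iff_monotone_chain_condition]
  intro f
  by_contra! hcon
  -- words where things grow
  have h1 : ∀ k, ∃ k', k < k' ∧ ∃ (n : ℕ) (d : Fin c × Fin n →₀ ℕ),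
      ¬ ncLc (ncMO c n) ((f k').I n) d ≤ ncLc (ncMO c n) ((f k).I n) d := by
    intro k
    obtain ⟨k', hk, hne⟩ := hcon k
    refine ⟨k', lt_of_le_of_ne hk (by rintro rfl; exact hne rfl), ?_⟩
    by_contra! hall
    apply hne
    apply le_antisymm (f.monotone hk)
    intro n
    exact nc_le_of_lc (ncMO c n) (f.monotone hk n) (hall n)
  choose nx hnx nn dd hdd using h1
  -- iterate
  let s : ℕ → ℕ := fun i => nx^[i] 0
  have hs : ∀ i, s (i + 1) = nx (s i) := fun i => Function.iterate_succ_apply' nx i 0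
  have hsm : StrictMono s := strictMono_nat_of_lt_succ (fun i => by rw [hs]; exact hnx _)
  have hpwo : {l : List (Fin c → ℕ) | ∀ x, x ∈ l → x ∈ (Set.univ : Set (Fin c → ℕ))}.PartiallyWellOrderedOn
      (List.SublistForall₂ (· ≤ ·)) :=
    Set.PartiallyWellOrderedOn.partiallyWellOrderedOn_sublistForall₂ (· ≤ ·)
      (Set.isPWO_of_wellQuasiOrderedLE _)
  have : IsPreorder (List (Fin c → ℕ)) (List.SublistForall₂ (· ≤ ·)) :=
    { refl := fun a => List.SublistForall₂.is_refl.refl a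
      trans := fun a b c h1 h2 => List.SublistForall₂.is_trans.trans a b c h1 h2 }
  obtain ⟨g, hg⟩ := hpwo.exists_monotone_subseq (f := fun i => ncWord (dd (s i)))
    (fun _ _ _ => Set.mem_univ _)
  let L : ℕ → Ideal K := fun i => ncLc (ncMO c _) ((f (s (g i))).I _) (dd (s (g i)))
  let L' : ℕ → Ideal K := fun i => ncLc (ncMO c _) ((f (s (g i + 1))).I _) (dd (s (g i)))
  have hL1 : ∀ i, ¬ L' i ≤ L i := by
    intro i
    have := hdd (s (g i))
    rw [← hs] at this
    exact this
  have hL2 : ∀ i j, i < j → L' i ≤ L j := by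
    intro i j hij
    obtain ⟨ι, h1, h2⟩ := ncWord_embed _ _ (hg i j hij.le)
    refine (ncLc_mono _ ?_ _).trans (ncLc_embed (f (s (g j))) ι h1 _ _ h2)
    exact f.monotone (hsm.monotone (g.strictMono hij)) _
  have hL3 : ∀ i, L i ≤ L' i := fun i => ncLc_mono _ (f.monotone (hsm (Nat.lt_succ_self _)).le _) _
  have hmono : StrictMono L := strictMono_nat_of_lt_succ (fun i =>
    lt_of_le_not_ge ((hL3 i).trans (hL2 i _ (Nat.lt_succ_self i)))
      (fun h => hL1 i ((hL2 i _ (Nat.lt_succ_self i)).trans h)))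
  obtain ⟨n, hn⟩ := monotone_stabilizes_iff_noetherian.2 (inferInstance : IsNoetherian K K)
    ⟨L, hmono.monotone⟩
  exact (hmono (Nat.lt_succ_self n)).ne (hn (n + 1) (Nat.le_succ n))


theorem nc_reduce {σ A ω : Type} [CommRing A] (m : MonomialOrder σ)
    (uu : ω → σ →₀ ℕ) (F : ω → MvPolynomial σ A) (h : A)
    (hF : ∀ w v, m.toSyn (uu w) < m.toSyn v → coeff v (F w) = 0)
    (hh : ∀ w, coeff (uu w) (F w) ∣ h) (S : MvPolynomial σ A) :
    ∃ (l : ℕ) (R : MvPolynomial σ A), (∀ v, coeff v R ≠ 0 → ∀ w, ¬ uu w ≤ v) ∧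
      C h ^ l * S - R ∈ Ideal.span (Set.range F) := by
  classical
  set J := Ideal.span (Set.range F) with hJ
  let p : MvPolynomial σ A → Prop := fun S =>
    ∃ (l : ℕ) (R : MvPolynomial σ A), (∀ v, coeff v R ≠ 0 → ∀ w, ¬ uu w ≤ v) ∧
      C h ^ l * S - R ∈ J
  have padd : ∀ S T, p S → p T → p (S + T) := by
    rintro S T ⟨l, R, hR, hl⟩ ⟨l', R', hR', hl'⟩
    refine ⟨l + l', C h ^ l' * R + C h ^ l * R', ?_, ?_⟩
    · intro v hv w
      rw [coeff_add, ← C_pow, ← C_pow, coeff_C_mul, coeff_C_mul] at hv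
      by_cases h1 : coeff v R = 0
      · by_cases h2 : coeff v R' = 0
        · simp [h1, h2] at hv
        · exact hR' v h2 w
      · exact hR v h1 w
    · have := J.add_mem (J.mul_mem_left (C h ^ l') hl) (J.mul_mem_left (C h ^ l) hl')
      convert this using 1
      ring
  have pmul : ∀ a S, p S → p (C a * S) := by
    rintro a S ⟨l, R, hR, hl⟩
    refine ⟨l, C a * R, ?_, ?_⟩
    · intro v hv
      rw [coeff_C_mul] at hv
      exact hR v (right_ne_zero_of_mul hv)
    · have := J.mul_mem_left (C a) hl
      convert this using 1
      ring
  have psum : ∀ S : MvPolynomial σ A, (∀ v ∈ S.support, p (monomial v 1)) → p S := by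
    intro S hS
    rw [S.as_sum]
    refine Finset.sum_induction _ p padd ⟨0, 0, by simp, by simp⟩ ?_
    intro v hv
    have := pmul (coeff v S) _ (hS v hv)
    rwa [C_mul_monomial, mul_one] at this
  have key : ∀ s : m.syn, ∀ d, m.toSyn d = s → p (monomial d 1) := by
    intro s
    induction s using WellFoundedLT.induction with
    | ind s ih =>
      rintro d rfl
      by_cases hd : ∃ w, uu w ≤ d
      · obtain ⟨w, hw⟩ := hd
        obtain ⟨e, rfl⟩ := exists_add_of_le hw
        obtain ⟨b, hb⟩ := hh w
        set T := monomial (uu w + e) h - C b * monomial e 1 * F w with hT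
        have hTp : p T := by
          apply psum
          intro v hv
          refine ih (m.toSyn v) ?_ v rfl
          rw [mem_support_iff] at hv
          by_contra hlt
          apply hv
          have hc : coeff v (C b * monomial e 1 * F w) =
              if e ≤ v then b * coeff (v - e) (F w) else 0 := by
            rw [C_mul_monomial, mul_one, coeff_monomial_mul']
          rw [hT, coeff_sub, hc, coeff_monomial]
          split_ifs with h1 h2 h2
          · subst h1
            rw [add_tsub_cancel_right, hb]
            ring
          · subst h1
            exact absurd le_add_self h2
          · obtain ⟨x, rfl⟩ := exists_add_of_le h2
            rw [add_tsub_cancel_left, hF w x, mul_zero, sub_zero]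
            refine lt_of_le_of_ne ?_ ?_
            · rw [not_lt, map_add, map_add, add_comm] at hlt
              exact le_of_add_le_add_left hlt
            · intro he
              apply h1
              rw [m.toSyn.injective he, add_comm]
          · simp
        obtain ⟨l, R, hR, hl⟩ := hTp
        refine ⟨l + 1, R, hR, ?_⟩
        have hFw : F w ∈ J := Ideal.subset_span ⟨w, rfl⟩
        have := J.add_mem hl (J.mul_mem_left (C h ^ l * C b * monomial e 1) hFw)
        convert this using 1
        have : (monomial (uu w + e) h : MvPolynomial σ A) = C h * monomial (uu w + e) 1 := by
          rw [C_mul_monomial, mul_one]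
        rw [hT, this]
        ring
      · push Not at hd
        refine ⟨0, monomial d 1, ?_, by simp⟩
        intro v hv w
        rw [coeff_monomial] at hv
        split_ifs at hv with h1
        · subst h1; exact hd w
        · exact absurd rfl hv
  exact psum S (fun v _ => key _ v rfl)

theorem nc_star {σ A ω : Type} [CommRing A] (m : MonomialOrder σ)
    (uu : ω → σ →₀ ℕ) (J : Ideal A) (JB : Ideal (MvPolynomial σ A))
    (hJ : ∀ a ∈ J, C a ∈ JB)
    (hM : ∀ G ∈ JB, ∀ u, coeff u G ∉ J → (∀ v, m.toSyn u < m.toSyn v → coeff v G = 0) →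
      ∃ w, uu w ≤ u)
    (R : MvPolynomial σ A) (hR : ∀ v, coeff v R ≠ 0 → ∀ w, ¬ uu w ≤ v) (hRJ : R ∈ JB) (v) :
    coeff v R ∈ J := by
  classical
  by_contra hv
  let T := R.support.filter (fun v => coeff v R ∉ J)
  let G : MvPolynomial σ A := ∑ v ∈ T, monomial v (coeff v R)
  have hG : ∀ v, coeff v G = if coeff v R ∈ J then 0 else coeff v R := by
    intro v
    simp only [G, coeff_sum, coeff_monomial, Finset.sum_ite_eq', T, Finset.mem_filter,
      mem_support_iff]
    by_cases h1 : coeff v R ∈ J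
    · simp [h1]
    · by_cases h2 : coeff v R = 0
      · simp [h2]
      · simp [h1, h2]
  have hGJ : G ∈ JB := by
    have h1 : R - G ∈ Ideal.map C J := by
      rw [mem_map_C_iff]
      intro v
      rw [coeff_sub, hG]
      split_ifs with h
      · simpa using h
      · simp
    have h2 : Ideal.map C J ≤ JB := by
      rw [Ideal.map_le_iff_le_comap]
      exact hJ
    have := JB.sub_mem hRJ (h2 h1)
    rwa [sub_sub_cancel] at this
  have hG0 : G ≠ 0 := by
    intro h0
    have := hG v
    rw [h0, if_neg hv, coeff_zero] at this
    rw [← this] at hv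
    exact hv J.zero_mem
  have h1 : coeff (m.degree G) G ≠ 0 := mem_support_iff.1 (m.degree_mem_support hG0)
  have h2 := hG (m.degree G)
  split_ifs at h2 with h3
  · exact h1 h2
  · obtain ⟨w, hw⟩ := hM G hGJ (m.degree G) (by rwa [h2]) (fun v hv => by
      by_contra h0
      exact absurd (m.le_degree (mem_support_iff.2 h0)) (not_le.2 hv))
    rw [h2] at h1
    exact hR _ h1 w hw

theorem nc_minprime {A : Type} [CommRing A] (I P : Ideal A) (hP : P ∈ I.minimalPrimes)
    (q : A) (hq : q ∈ P) : ∃ s ∉ P, ∃ k : ℕ, q ^ k * s ∈ I := by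
  have := hP.1.1
  have hr := IsLocalization.AtPrime.radical_map_of_mem_minimalPrimes (Localization.AtPrime P) P I hP
  obtain ⟨n, hn⟩ := hr.ge (Ideal.mem_map_of_mem _ hq)
  rw [IsLocalization.mem_map_algebraMap_iff (M := P.primeCompl)] at hn
  obtain ⟨⟨a, b⟩, hn⟩ := hn
  rw [← map_pow, ← map_mul, IsLocalization.eq_iff_exists P.primeCompl] at hn
  obtain ⟨t, ht⟩ := hn
  refine ⟨t * b, (t * b).2, n, ?_⟩
  simp only at ht
  have : q ^ n * (t.1 * b.1) = t.1 * a := by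
    rw [← ht]; ring
  rw [this]
  exact I.mul_mem_left _ a.2

theorem nc_mem_of_coeff {σ A : Type} [CommRing A] (P : Ideal (MvPolynomial σ A))
    (R : MvPolynomial σ A) (h : ∀ v, C (coeff v R) ∈ P) : R ∈ P := by
  have h1 : R ∈ Ideal.map C (P.comap C) := by
    rw [mem_map_C_iff]
    exact h
  exact Ideal.map_comap_le h1

theorem nc_contract {σ A ω : Type} [CommRing A] (m : MonomialOrder σ)
    (uu : ω → σ →₀ ℕ) (F : ω → MvPolynomial σ A) (h : A)
    (hF : ∀ w v, m.toSyn (uu w) < m.toSyn v → coeff v (F w) = 0)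
    (hh : ∀ w, coeff (uu w) (F w) ∣ h)
    (J : Ideal A) (JB : Ideal (MvPolynomial σ A))
    (hFJ : ∀ w, F w ∈ JB)
    (hJ : ∀ a ∈ J, C a ∈ JB)
    (hM : ∀ G ∈ JB, ∀ u, coeff u G ∉ J → (∀ v, m.toSyn u < m.toSyn v → coeff v G = 0) →
      ∃ w, uu w ≤ u)
    (P : Ideal (MvPolynomial σ A)) (hP : P ∈ JB.minimalPrimes) (hhP : C h ∉ P) :
    P.comap C ∈ J.minimalPrimes ∧
    (∀ P0 : Ideal (MvPolynomial σ A), P0.IsPrime → P.comap C ≤ P0.comap C → (∀ w, F w ∈ P0) →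
      P0 ≤ P → P0 = P) := by
  have hPp : P.IsPrime := hP.1.1
  have hspan : Ideal.span (Set.range F) ≤ JB := by
    rw [Ideal.span_le]
    rintro _ ⟨w, rfl⟩
    exact hFJ w
  constructor
  · refine ⟨⟨Ideal.comap_isPrime _ _, fun a ha => hP.1.2 (hJ a ha)⟩, ?_⟩
    rintro Q ⟨hQ, hJQ⟩ hQP q hq
    obtain ⟨s, hs, k, hk⟩ := nc_minprime JB P hP (C q) hq
    obtain ⟨l, R, hR, hl⟩ := nc_reduce m uu F h hF hh s
    have hRJ : C (q ^ k) * R ∈ JB := by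
      have h1 := JB.mul_mem_left (C h ^ l) hk
      have h2 := JB.mul_mem_left (C q ^ k) (hspan hl)
      have h3 := JB.sub_mem h1 h2
      convert h3 using 1
      rw [C_pow]
      ring
    have hst := nc_star m uu J JB hJ hM (C (q ^ k) * R) (fun v hv => by
      rw [coeff_C_mul] at hv
      exact hR v (right_ne_zero_of_mul hv)) hRJ
    by_cases hall : ∀ v, coeff v R ∈ Q
    · exfalso
      have hRP : R ∈ P := nc_mem_of_coeff P R (fun v => hQP (hall v))
      have := P.add_mem (hP.1.2 (hspan hl)) hRP
      rw [sub_add_cancel] at this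
      rcases hPp.mem_or_mem this with h1 | h1
      · exact hhP (hPp.mem_of_pow_mem _ h1)
      · exact hs h1
    · push Not at hall
      obtain ⟨v, hv⟩ := hall
      have := hJQ (hst v)
      rw [coeff_C_mul] at this
      exact hQ.mem_of_pow_mem _ ((hQ.mem_or_mem this).resolve_right hv)
  · intro P0 hP0 hle hFP hP0P
    apply le_antisymm hP0P
    refine hP.2 ⟨hP0, fun S hS => ?_⟩ hP0P
    obtain ⟨l, R, hR, hl⟩ := nc_reduce m uu F h hF hh S
    have hRJ : R ∈ JB := by
      have h1 := JB.sub_mem (JB.mul_mem_left (C h ^ l) hS) (hspan hl)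
      rwa [sub_sub_cancel] at h1
    have hst := nc_star m uu J JB hJ hM R hR hRJ
    have hR0 : R ∈ P0 := nc_mem_of_coeff P0 R (fun v => hle (hP.1.2 (hJ _ (hst v))))
    have hsp0 : Ideal.span (Set.range F) ≤ P0 := by
      rw [Ideal.span_le]
      rintro _ ⟨w, rfl⟩
      exact hFP w
    have := P0.add_mem (hsp0 hl) hR0
    rw [sub_add_cancel] at this
    rcases hP0.mem_or_mem this with h1 | h1
    · exact absurd (hP0P (hP0.mem_of_pow_mem _ h1)) hhP
    · exact h1


theorem ncRho_comp {K : Type} [CommRing K] {c m n k : ℕ} (ι : Fin m → Fin n) (κ : Fin n → Fin k)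
    (f : NcA K c m) : ncRho K c κ (ncRho K c ι f) = ncRho K c (κ ∘ ι) f := by
  simp only [ncRho]
  rw [rename_rename]
  rfl

theorem ncRho_id {K : Type} [CommRing K] {c m : ℕ} (f : NcA K c m) : ncRho K c id f = f := by
  simp only [ncRho]
  rw [Prod.map_id, rename_id_apply]

theorem ncRho_X {K : Type} [CommRing K] {c m n : ℕ} (ι : Fin m → Fin n) (x) :
    ncRho K c ι (X x) = X (x.1, ι x.2) := rename_X _ _

abbrev NcB (K : Type) [CommRing K] (c n : ℕ) : Type := MvPolynomial (Fin c) (NcA K c n)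

noncomputable def ncBto (K : Type) [CommRing K] (c n : ℕ) : NcB K c n →+* NcA K c (n + 1) :=
  eval₂Hom (ncRho K c (Fin.castSucc : Fin n → Fin (n + 1))).toRingHom (fun i => X (i, Fin.last n))

noncomputable def ncAto (K : Type) [CommRing K] (c n : ℕ) : NcA K c (n + 1) →+* NcB K c n :=
  eval₂Hom (C.comp C) (fun x => Fin.lastCases (X x.1) (fun j => C (X (x.1, j))) x.2)

theorem ncBto_C {K : Type} [CommRing K] {c n : ℕ} (a : NcA K c n) :
    ncBto K c n (C a) = ncRho K c Fin.castSucc a := by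
  simp [ncBto]

theorem ncBto_X {K : Type} [CommRing K] {c n : ℕ} (i : Fin c) :
    ncBto K c n (X i) = X (i, Fin.last n) := by
  simp [ncBto]

theorem ncBto_ncAto {K : Type} [CommRing K] {c n : ℕ} (f : NcA K c (n + 1)) :
    ncBto K c n (ncAto K c n f) = f := by
  have : (ncBto K c n).comp (ncAto K c n) = RingHom.id _ := by
    apply MvPolynomial.ringHom_ext
    · intro r
      simp [ncAto, ncBto_C]
    · rintro ⟨i, j⟩
      refine Fin.lastCases ?_ (fun j => ?_) j
      · simp [ncAto, ncBto_X]
      · simp [ncAto, ncBto_C, ncRho_X]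
  exact congrArg (fun g => g f) this

theorem ncAto_ncBto {K : Type} [CommRing K] {c n : ℕ} (f : NcB K c n) :
    ncAto K c n (ncBto K c n f) = f := by
  have : (ncAto K c n).comp (ncBto K c n) = RingHom.id _ := by
    apply MvPolynomial.ringHom_ext
    · intro r
      have h2 : ((ncAto K c n).comp (ncRho K c Fin.castSucc).toRingHom) = C := by
        apply MvPolynomial.ringHom_ext
        · intro r
          simp [ncAto]
        · rintro ⟨i, j⟩
          simp [ncAto, ncRho_X]
      simpa [ncBto_C] using congrArg (fun g => g r) h2
    · intro i
      simp [ncAto, ncBto_X]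
  exact congrArg (fun g => g f) this

theorem ncBto_surj (K : Type) [CommRing K] (c n : ℕ) : Function.Surjective (ncBto K c n) :=
  fun f => ⟨_, ncBto_ncAto f⟩

def ncExt {m n : ℕ} (σ : Fin m → Fin n) : Fin (m + 1) → Fin (n + 1) :=
  Fin.lastCases (Fin.last n) (fun j => (σ j).castSucc)

theorem ncExt_inj {m n : ℕ} (σ : Fin m → Fin n) (h : Function.Injective σ) :
    Function.Injective (ncExt σ) := by
  intro i j
  refine Fin.lastCases ?_ (fun i => ?_) i <;> refine Fin.lastCases ?_ (fun j => ?_) j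
  · simp
  · intro h
    simp [ncExt] at h
    exact absurd h.symm (Fin.castSucc_ne_last _)
  · intro h
    simp [ncExt] at h
  · simpa [ncExt] using fun e => h e

theorem ncBto_map {K : Type} [CommRing K] {c m n : ℕ} (σ : Fin m → Fin n) (f : NcB K c m) :
    ncBto K c n (MvPolynomial.map (ncRho K c σ).toRingHom f) =
      ncRho K c (ncExt σ) (ncBto K c m f) := by
  have : (ncBto K c n).comp (MvPolynomial.map (ncRho K c σ).toRingHom) =
      (ncRho K c (ncExt σ)).toRingHom.comp (ncBto K c m) := by
    apply MvPolynomial.ringHom_ext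
    · intro r
      simp only [RingHom.comp_apply, map_C, ncBto_C, AlgHom.toRingHom_eq_coe, RingHom.coe_coe,
        ncRho_comp]
      congr 2
      funext j
      simp [ncExt]
    · intro i
      simp [ncBto_X, ncRho_X, ncExt]
  exact congrArg (fun g => g f) this

noncomputable def NcChain.IB {K : Type} [CommRing K] {c : ℕ} (I : NcChain K c) (n : ℕ) :
    Ideal (NcB K c n) := (I.I (n + 1)).comap (ncBto K c n)

theorem NcChain.IB_C {K : Type} [CommRing K] {c : ℕ} (I : NcChain K c) (n : ℕ) (a : NcA K c n)
    (ha : a ∈ I.I n) : C a ∈ I.IB n := by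
  change ncBto K c n (C a) ∈ I.I (n + 1)
  rw [ncBto_C]
  exact I.mem' _ (Fin.castSucc_injective n) _ ha

theorem NcChain.IB_map {K : Type} [CommRing K] {c : ℕ} (I : NcChain K c) {m n : ℕ}
    (σ : Fin m → Fin n) (hσ : Function.Injective σ) (f : NcB K c m) (hf : f ∈ I.IB m) :
    MvPolynomial.map (ncRho K c σ).toRingHom f ∈ I.IB n := by
  change ncBto K c n _ ∈ I.I (n + 1)
  rw [ncBto_map]
  exact I.mem' _ (ncExt_inj σ hσ) _ hf

/-- leading exponents not in `I` -/
def NcChain.M {K : Type} [CommRing K] {c : ℕ} (I : NcChain K c) (u : Fin c →₀ ℕ) : Prop :=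
  ∃ (n : ℕ) (F : NcB K c n), F ∈ I.IB n ∧ coeff u F ∉ I.I n ∧
    ∀ v, (MonomialOrder.lex (σ := Fin c)).toSyn u < (MonomialOrder.lex (σ := Fin c)).toSyn v →
      coeff v F = 0

theorem NcChain.exists_data {K : Type} [CommRing K] {c : ℕ} (I : NcChain K c) :
    ∃ (ω : Type) (_ : Fintype ω) (uu : ω → Fin c →₀ ℕ) (nn : ω → ℕ)
      (F : ∀ w, NcB K c (nn w)),
      (∀ w, F w ∈ I.IB (nn w)) ∧ (∀ w, coeff (uu w) (F w) ∉ I.I (nn w)) ∧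
      (∀ w v, (MonomialOrder.lex (σ := Fin c)).toSyn (uu w) <
        (MonomialOrder.lex (σ := Fin c)).toSyn v → coeff v (F w) = 0) ∧
      (∀ (n : ℕ), ∀ G ∈ I.IB n, ∀ u, coeff u G ∉ I.I n →
        (∀ v, (MonomialOrder.lex (σ := Fin c)).toSyn u <
          (MonomialOrder.lex (σ := Fin c)).toSyn v → coeff v G = 0) → ∃ w, uu w ≤ u) := by
  classical
  let U : Set (Fin c →₀ ℕ) := {u | Minimal I.M u}
  have hU : U.Finite := WellQuasiOrderedLE.finite_of_isAntichain (setOfPred_minimal_antichain _)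
  have hU' : ∀ u : U, I.M u := fun u => u.2.1
  choose nn F h1 h2 h3 using hU'
  refine ⟨U, hU.fintype, fun u => u, nn, F, h1, h2, h3, ?_⟩
  intro n G hG u hu hv
  obtain ⟨w, hw, hw'⟩ := exists_minimal_le_of_wellFoundedLT I.M u ⟨n, G, hG, hu, hv⟩
  exact ⟨⟨w, hw'⟩, hw⟩

/-- good minimal primes -/
def NcChain.G {K : Type} [CommRing K] {c : ℕ} (I : NcChain K c) (n0 : ℕ) (h : NcA K c n0)
    (n : ℕ) (hn : n0 ≤ n) : Set (Ideal (NcA K c n)) :=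
  {P | P ∈ (I.I n).minimalPrimes ∧ ncRho K c (Fin.castLE hn) h ∉ P}

theorem NcChain.G_finite {K : Type} [CommRing K] [IsNoetherianRing K] {c : ℕ} (I : NcChain K c)
    (n0 : ℕ) (h : NcA K c n0) (n : ℕ) (hn : n0 ≤ n) : (I.G n0 h n hn).Finite :=
  (Ideal.finite_minimalPrimes_of_isNoetherianRing _ (I.I n)).subset (fun _ hP => hP.1)

theorem NcChain.G_bound {K : Type} [CommRing K] [IsNoetherianRing K] {c : ℕ} (I : NcChain K c)
    {ω : Type} [Fintype ω] (uu : ω → Fin c →₀ ℕ) (nn : ω → ℕ) (F : ∀ w, NcB K c (nn w))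
    (hFI : ∀ w, F w ∈ I.IB (nn w))
    (hF : ∀ w v, (MonomialOrder.lex (σ := Fin c)).toSyn (uu w) <
        (MonomialOrder.lex (σ := Fin c)).toSyn v → coeff v (F w) = 0)
    (hM : ∀ (n : ℕ), ∀ G ∈ I.IB n, ∀ u, coeff u G ∉ I.I n →
        (∀ v, (MonomialOrder.lex (σ := Fin c)).toSyn u <
          (MonomialOrder.lex (σ := Fin c)).toSyn v → coeff v G = 0) → ∃ w, uu w ≤ u)
    (n0 : ℕ) (σ : ∀ w, Fin (nn w) → Fin n0) (hσ : ∀ w, Function.Injective (σ w)) :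
    ∃ a e : ℕ, ∀ n (hn : n0 ≤ n),
      (I.G n0 (∏ w, ncRho K c (σ w) (coeff (uu w) (F w))) n hn).ncard ≤ a * e ^ n := by
  classical
  set h : NcA K c n0 := ∏ w, ncRho K c (σ w) (coeff (uu w) (F w)) with hh
  let F0 : ω → NcB K c n0 := fun w => MvPolynomial.map (ncRho K c (σ w)).toRingHom (F w)
  have hG0 := I.G_finite n0 h n0 le_rfl
  have hfib : ∀ Q : Ideal (NcA K c n0), ∃ e : ℕ, Q.IsPrime → ∀ (A : Type) [CommRing A]
      (φ : NcA K c n0 →+* A) (P' : Ideal A) [P'.IsPrime], P'.comap φ = Q →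
      ∃ T : Finset (Ideal (MvPolynomial (Fin c) A)), T.card ≤ e ∧
      ∀ P : Ideal (MvPolynomial (Fin c) A), P.IsPrime → P.comap C = P' →
        (∀ f ∈ Set.range F0, MvPolynomial.map φ f ∈ P) →
        (∀ P0 : Ideal (MvPolynomial (Fin c) A), P0.IsPrime → P' ≤ P0.comap C →
          (∀ f ∈ Set.range F0, MvPolynomial.map φ f ∈ P0) → P0 ≤ P → P0 = P) → P ∈ T := by
    intro Q
    by_cases hQ : Q.IsPrime
    · obtain ⟨e, he⟩ := nc_fibre c (NcA K c n0) Q (Set.range F0)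
      exact ⟨e, fun _ => he⟩
    · exact ⟨0, fun h => absurd h hQ⟩
  choose e he using hfib
  let E : ℕ := ∑ Q ∈ hG0.toFinset, e Q
  have hE : ∀ Q ∈ I.G n0 h n0 le_rfl, e Q ≤ E := fun Q hQ =>
    Finset.single_le_sum (f := e) (fun _ _ => Nat.zero_le _) (hG0.mem_toFinset.2 hQ)
  -- contraction step
  have hstep : ∀ n (hn : n0 ≤ n), ∀ P ∈ I.G n0 h (n + 1) (hn.trans (Nat.le_succ n)),
      (P.comap (ncBto K c n)).comap C ∈ I.G n0 h n hn ∧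
      (∀ f ∈ Set.range F0, MvPolynomial.map (ncRho K c (Fin.castLE hn)).toRingHom f ∈
        P.comap (ncBto K c n)) ∧
      (∀ P0 : Ideal (NcB K c n), P0.IsPrime →
        (P.comap (ncBto K c n)).comap C ≤ P0.comap C →
        (∀ f ∈ Set.range F0, MvPolynomial.map (ncRho K c (Fin.castLE hn)).toRingHom f ∈ P0) →
          P0 ≤ P.comap (ncBto K c n) → P0 = P.comap (ncBto K c n)) := by
    rintro n hn P ⟨hP, hhP⟩
    have hPB : P.comap (ncBto K c n) ∈ (I.IB n).minimalPrimes :=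
      Ideal.minimalPrimes_comap_of_surjective (ncBto_surj K c n) hP
    have hhB : C (ncRho K c (Fin.castLE hn) h) ∉ P.comap (ncBto K c n) := by
      rw [Ideal.mem_comap, ncBto_C, ncRho_comp]
      exact hhP
    have hFn : ∀ w, MvPolynomial.map (ncRho K c (Fin.castLE hn)).toRingHom (F0 w) ∈ I.IB n :=
      fun w => I.IB_map _ (Fin.castLE_injective hn) _ (I.IB_map _ (hσ w) _ (hFI w))
    obtain ⟨h1, h2⟩ := nc_contract (MonomialOrder.lex (σ := Fin c)) uu
      (fun w => MvPolynomial.map (ncRho K c (Fin.castLE hn)).toRingHom (F0 w))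
      (ncRho K c (Fin.castLE hn) h)
      (fun w v hv => by simp only [F0, coeff_map, hF w v hv, map_zero])
      (fun w => by
        simp only [F0, coeff_map]
        exact map_dvd (ncRho K c (Fin.castLE hn))
          (Finset.dvd_prod_of_mem (fun w => ncRho K c (σ w) (coeff (uu w) (F w)))
            (Finset.mem_univ w)))
      (I.I n) (I.IB n) hFn (I.IB_C n) (hM n) _ hPB hhB
    refine ⟨⟨h1, hhB⟩, ?_, ?_⟩
    · rintro _ ⟨w, rfl⟩
      exact hPB.1.2 (hFn w)
    · intro P0 hP0 h3 h4 h5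
      exact h2 P0 hP0 h3 (fun w => h4 _ ⟨w, rfl⟩) h5
  -- contraction to n0
  have hdown : ∀ n (hn : n0 ≤ n), ∀ P ∈ I.G n0 h n hn,
      P.comap (ncRho K c (Fin.castLE hn)).toRingHom ∈ I.G n0 h n0 le_rfl := by
    intro n hn
    induction n, hn using Nat.le_induction with
    | base =>
      intro P hP
      have : P.comap (ncRho K c (Fin.castLE (le_refl n0))).toRingHom = P := by
        ext f
        rw [Ideal.mem_comap]
        change ncRho K c id f ∈ P ↔ _
        rw [ncRho_id]
      rw [this]
      exact hP
    | succ n hn ih =>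
      intro P hP
      have := ih _ (hstep n hn P hP).1
      convert this using 1
      ext f
      simp only [Ideal.mem_comap, ncBto_C, AlgHom.toRingHom_eq_coe, RingHom.coe_coe, ncRho_comp]
      rfl
  have hmain : ∀ n (hn : n0 ≤ n), (I.G n0 h (n + 1) (hn.trans (Nat.le_succ n))).ncard ≤
      (I.G n0 h n hn).ncard * E := by
    intro n hn
    have hfin := I.G_finite n0 h n hn
    have hT : ∀ P' : Ideal (NcA K c n), ∃ T : Finset (Ideal (NcB K c n)), P' ∈ I.G n0 h n hn →
      T.card ≤ E ∧ ∀ P ∈ I.G n0 h (n + 1) (hn.trans (Nat.le_succ n)),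
        (P.comap (ncBto K c n)).comap C = P' → P.comap (ncBto K c n) ∈ T := by
      intro P'
      by_cases hP' : P' ∈ I.G n0 h n hn
      · have := hP'.1.1.1
        have hQ := hdown n hn P' hP'
        obtain ⟨T, hT1, hT2⟩ := he _ hQ.1.1.1 (NcA K c n)
          (ncRho K c (Fin.castLE hn)).toRingHom P' rfl
        refine ⟨T, fun _ => ⟨hT1.trans (hE _ hQ), ?_⟩⟩
        intro P hP hPP'
        obtain ⟨-, h2, h3⟩ := hstep n hn P hP
        have := hP.1.1.1
        exact hT2 _ (Ideal.comap_isPrime _ _) hPP' h2 (by rw [← hPP']; exact h3)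
      · exact ⟨∅, fun h => absurd h hP'⟩
    choose T hT using hT
    have hsub : (Ideal.comap (ncBto K c n)) '' (I.G n0 h (n + 1) (hn.trans (Nat.le_succ n))) ⊆
        ((hfin.toFinset.biUnion T : Finset _) : Set _) := by
      rintro _ ⟨P, hP, rfl⟩
      have := (hstep n hn P hP).1
      rw [Finset.mem_coe, Finset.mem_biUnion]
      exact ⟨_, hfin.mem_toFinset.2 this, (hT _ this).2 P hP rfl⟩
    rw [← Set.ncard_image_of_injective _
      (Ideal.comap_injective_of_surjective _ (ncBto_surj K c n))]
    refine (Set.ncard_le_ncard hsub (Finset.finite_toSet _)).trans ?_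
    rw [Set.ncard_coe_finset, Set.ncard_eq_toFinset_card _ hfin]
    exact Finset.card_biUnion_le_card_mul _ _ _
      (fun P' hP' => (hT P' (hfin.mem_toFinset.1 hP')).1)
  refine ⟨(I.G n0 h n0 le_rfl).ncard, E + 1, fun n hn => ?_⟩
  induction n, hn using Nat.le_induction with
  | base => exact Nat.le_mul_of_pos_right _ (by positivity)
  | succ n hn ih =>
    refine (hmain n hn).trans ?_
    rw [pow_succ, ← mul_assoc]
    exact Nat.mul_le_mul ih (Nat.le_succ E)


theorem ncRho_perm_exists {m n : ℕ} (ι κ : Fin m → Fin n) (hι : Function.Injective ι)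
    (hκ : Function.Injective κ) : ∃ τ : Equiv.Perm (Fin n), ∀ j, τ (κ j) = ι j := by
  classical
  let e : {x // x ∈ Set.range κ} ≃ {x // x ∈ Set.range ι} :=
    (Equiv.ofInjective κ hκ).symm.trans (Equiv.ofInjective ι hι)
  refine ⟨e.extendSubtype, fun j => ?_⟩
  rw [Equiv.extendSubtype_apply_of_mem e (κ j) ⟨j, rfl⟩]
  have : (Equiv.ofInjective κ hκ).symm ⟨κ j, ⟨j, rfl⟩⟩ = j := by
    rw [Equiv.symm_apply_eq]
    rfl
  simp only [e, Equiv.trans_apply, this]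
  rfl

theorem NcChain.comap_perm {K : Type} [CommRing K] {c : ℕ} (I : NcChain K c) {n : ℕ}
    (τ : Equiv.Perm (Fin n)) : (I.I n).comap (ncRho K c τ).toRingHom = I.I n := by
  apply le_antisymm
  · intro f hf
    have := I.mem' τ.symm τ.symm.injective _ hf
    simp only [AlgHom.toRingHom_eq_coe, RingHom.coe_coe, ncRho_comp] at this
    rwa [Equiv.symm_comp_self, ncRho_id] at this
  · intro f hf
    exact I.mem' τ τ.injective f hf

theorem ncRho_perm_surj {K : Type} [CommRing K] {c n : ℕ} (τ : Equiv.Perm (Fin n)) :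
    Function.Surjective (ncRho K c τ).toRingHom := by
  intro f
  refine ⟨ncRho K c τ.symm f, ?_⟩
  simp only [AlgHom.toRingHom_eq_coe, RingHom.coe_coe, ncRho_comp]
  rw [Equiv.self_comp_symm, ncRho_id]

theorem NcChain.conj_bound {K : Type} [CommRing K] [IsNoetherianRing K] {c : ℕ} (I : NcChain K c)
    (n0 : ℕ) (h : NcA K c n0) (n : ℕ) (hn : n0 ≤ n) (ι : Fin n0 ↪ Fin n) :
    {P | P ∈ (I.I n).minimalPrimes ∧ ncRho K c ι h ∉ P}.ncard ≤ (I.G n0 h n hn).ncard := by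
  obtain ⟨τ, hτ⟩ := ncRho_perm_exists ι (Fin.castLE hn) ι.injective (Fin.castLE_injective hn)
  refine Set.ncard_le_ncard_of_injOn (Ideal.comap (ncRho K c τ).toRingHom) ?_
    (Ideal.comap_injective_of_surjective _ (ncRho_perm_surj τ)).injOn (I.G_finite n0 h n hn)
  rintro P ⟨hP, hh⟩
  refine ⟨?_, ?_⟩
  · have := Ideal.minimalPrimes_comap_of_surjective (ncRho_perm_surj τ) hP
    rwa [I.comap_perm] at this
  · rw [Ideal.mem_comap]
    simp only [AlgHom.toRingHom_eq_coe, RingHom.coe_coe, ncRho_comp]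
    have : τ ∘ Fin.castLE hn = ι := funext hτ
    rwa [this]

noncomputable def NcChain.adj {K : Type} [CommRing K] {c : ℕ} (I : NcChain K c)
    (k : ℕ) (g : NcA K c k) : NcChain K c where
  I n := I.I n ⊔ Ideal.span {f | ∃ ι : Fin k → Fin n, Function.Injective ι ∧ ncRho K c ι g = f}
  mem' := by
    intro m n ι hι
    suffices h : I.I m ⊔ Ideal.span {f | ∃ ι : Fin k → Fin m, Function.Injective ι ∧
        ncRho K c ι g = f} ≤ Ideal.comap (ncRho K c ι).toRingHom (I.I n ⊔
        Ideal.span {f | ∃ ι : Fin k → Fin n, Function.Injective ι ∧ ncRho K c ι g = f}) from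
      fun f hf => h hf
    apply sup_le
    · intro f hf
      exact Ideal.mem_sup_left (I.mem' ι hι f hf)
    · rw [Ideal.span_le]
      rintro _ ⟨κ, hκ, rfl⟩
      refine Ideal.mem_sup_right (Ideal.subset_span ⟨ι ∘ κ, hι.comp hκ, ?_⟩)
      exact (ncRho_comp κ ι g).symm

theorem NcChain.lt_adj {K : Type} [CommRing K] {c : ℕ} (I : NcChain K c)
    (k : ℕ) (g : NcA K c k) (hg : g ∉ I.I k) : I < I.adj k g := by
  refine lt_of_le_not_ge (fun n => le_sup_left) (fun h => hg (h k ?_))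
  exact Ideal.mem_sup_right (Ideal.subset_span ⟨id, Function.injective_id, ncRho_id g⟩)

theorem NcChain.min_adj {K : Type} [CommRing K] {c : ℕ} (I : NcChain K c)
    (k : ℕ) (g : NcA K c k) (n : ℕ) (P : Ideal (NcA K c n)) (hP : P ∈ (I.I n).minimalPrimes)
    (h : ∀ ι : Fin k → Fin n, Function.Injective ι → ncRho K c ι g ∈ P) :
    P ∈ ((I.adj k g).I n).minimalPrimes := by
  refine ⟨⟨hP.1.1, sup_le hP.1.2 ?_⟩, fun Q hQ hQP => hP.2 ⟨hQ.1, le_sup_left.trans hQ.2⟩ hQP⟩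
  rw [Ideal.span_le]
  rintro _ ⟨ι, hι, rfl⟩
  exact h ι hι

def NcChain.Bd {K : Type} [CommRing K] {c : ℕ} (I : NcChain K c) : Prop :=
  ∃ a e n0 : ℕ, ∀ n, n0 ≤ n → (I.I n).minimalPrimes.ncard ≤ a * e ^ n

theorem nc_factor {ω : Type} [Fintype ω] (nn : ω → ℕ) (n : ℕ) (hn : ∑ w, nn w ≤ n)
    (σ : ∀ w, Fin (nn w) → Fin n) (hσ : ∀ w, Function.Injective (σ w)) :
    ∃ (ι : Fin (∑ w, nn w) ↪ Fin n) (σ' : ∀ w, Fin (nn w) → Fin (∑ w, nn w)),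
      (∀ w, Function.Injective (σ' w)) ∧ ∀ w, ι ∘ σ' w = σ w := by
  classical
  let S : Finset (Fin n) := Finset.univ.biUnion (fun w => Finset.univ.image (σ w))
  have hS : S.card ≤ ∑ w, nn w := by
    refine Finset.card_biUnion_le.trans (Finset.sum_le_sum fun w _ => ?_)
    exact Finset.card_image_le.trans (by simp)
  obtain ⟨T, hST, -, hT⟩ := Finset.exists_subsuperset_card_eq (Finset.subset_univ S) hS
    (by simpa using hn)
  let ι := (T.orderEmbOfFin hT).toEmbedding
  have hr : ∀ w j, ∃ i, ι i = σ w j := by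
    intro w j
    have : σ w j ∈ (T : Set (Fin n)) := hST (Finset.mem_biUnion.2 ⟨w, Finset.mem_univ _,
      Finset.mem_image_of_mem _ (Finset.mem_univ _)⟩)
    rw [← Finset.range_orderEmbOfFin T hT] at this
    exact this
  choose σ' hσ' using hr
  refine ⟨ι, σ', fun w i j hij => hσ w ?_, fun w => funext (hσ' w)⟩
  rw [← hσ', ← hσ', hij]

theorem NcChain.bd {K : Type} [CommRing K] [IsNoetherianRing K] {c : ℕ} (I : NcChain K c) :
    I.Bd := by
  classical
  have := NcChain.wf K c
  induction I using WellFoundedGT.induction with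
  | ind I ih =>
    obtain ⟨ω, _, uu, nn, F, hFI, hFn, hF, hM⟩ := I.exists_data
    have ih' : ∀ w, (I.adj (nn w) (coeff (uu w) (F w))).Bd := fun w =>
      ih _ (I.lt_adj _ _ (hFn w))
    choose a1 e1 n1 hb1 using ih'
    set n0 := ∑ w, nn w with hn0
    let Sg := {σ : ∀ w, Fin (nn w) → Fin n0 // ∀ w, Function.Injective (σ w)}
    have hb2 := fun σ : Sg => I.G_bound uu nn F hFI hF hM n0 σ.1 σ.2
    choose a2 e2 hb2 using hb2
    refine ⟨(∑ w, a1 w) + ∑ s, a2 s, (∑ w, e1 w) + 2 ^ n0 * ∑ s, e2 s, n0 + ∑ w, n1 w,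
      fun n hn => ?_⟩
    have hn' : n0 ≤ n := (Nat.le_add_right _ _).trans hn
    have hcov : (I.I n).minimalPrimes ⊆
        (⋃ w, ((I.adj (nn w) (coeff (uu w) (F w))).I n).minimalPrimes) ∪
        ⋃ x : Sg × (Fin n0 ↪ Fin n), {P | P ∈ (I.I n).minimalPrimes ∧
          ncRho K c x.2 (∏ w, ncRho K c (x.1.1 w) (coeff (uu w) (F w))) ∉ P} := by
      intro P hP
      by_cases hbad : ∃ w, ∀ ι : Fin (nn w) → Fin n, Function.Injective ι →
          ncRho K c ι (coeff (uu w) (F w)) ∈ P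
      · obtain ⟨w, hw⟩ := hbad
        exact Or.inl (Set.mem_iUnion.2 ⟨w, I.min_adj _ _ n P hP hw⟩)
      · push Not at hbad
        choose σ hσ hσP using hbad
        obtain ⟨ι, σ', h1, h2⟩ := nc_factor nn n hn' σ hσ
        refine Or.inr (Set.mem_iUnion.2 ⟨(⟨σ', h1⟩, ι), hP, ?_⟩)
        have hPp : P.IsPrime := hP.1.1
        rw [map_prod, hPp.prod_mem_iff]
        rintro ⟨w, -, hw⟩
        rw [ncRho_comp, h2] at hw
        exact hσP w hw
    have hfin1 : ∀ w, ((I.adj (nn w) (coeff (uu w) (F w))).I n).minimalPrimes.Finite :=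
      fun w => Ideal.finite_minimalPrimes_of_isNoetherianRing _ _
    have hfin2 := Ideal.finite_minimalPrimes_of_isNoetherianRing _ (I.I n)
    refine (Set.ncard_le_ncard hcov ((Set.finite_iUnion hfin1).union
      (Set.finite_iUnion fun x => hfin2.subset fun P hP => hP.1))).trans ?_
    refine (Set.ncard_union_le _ _).trans ?_
    have hc1 : (⋃ w, ((I.adj (nn w) (coeff (uu w) (F w))).I n).minimalPrimes).ncard ≤
        (∑ w, a1 w) * (∑ w, e1 w) ^ n := by
      refine (Set.ncard_iUnion_le_of_fintype _).trans ?_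
      rw [Finset.sum_mul]
      refine Finset.sum_le_sum fun w _ => ?_
      refine (hb1 w n ?_).trans ?_
      · have := Finset.single_le_sum (f := n1) (fun _ _ => Nat.zero_le _) (Finset.mem_univ w)
        omega
      · exact Nat.mul_le_mul le_rfl (Nat.pow_le_pow_left
          (Finset.single_le_sum (f := e1) (fun _ _ => Nat.zero_le _) (Finset.mem_univ w)) n)
    have hc2 : (⋃ x : Sg × (Fin n0 ↪ Fin n), {P | P ∈ (I.I n).minimalPrimes ∧
          ncRho K c x.2 (∏ w, ncRho K c (x.1.1 w) (coeff (uu w) (F w))) ∉ P}).ncard ≤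
        (∑ s, a2 s) * (2 ^ n0 * ∑ s, e2 s) ^ n := by
      refine (Set.ncard_iUnion_le_of_fintype _).trans ?_
      rw [Fintype.sum_prod_type, Finset.sum_mul]
      refine Finset.sum_le_sum fun s _ => ?_
      have hι : ∀ ι ∈ (Finset.univ : Finset (Fin n0 ↪ Fin n)),
          {P | P ∈ (I.I n).minimalPrimes ∧
          ncRho K c ι (∏ w, ncRho K c (s.1 w) (coeff (uu w) (F w))) ∉ P}.ncard ≤
            a2 s * (∑ s, e2 s) ^ n := fun ι _ => by
        refine (I.conj_bound n0 _ n hn' ι).trans ((hb2 s n hn').trans ?_)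
        exact Nat.mul_le_mul le_rfl (Nat.pow_le_pow_left
          (Finset.single_le_sum (f := e2) (fun _ _ => Nat.zero_le _) (Finset.mem_univ s)) n)
      refine (Finset.sum_le_card_nsmul _ _ _ hι).trans ?_
      rw [smul_eq_mul, mul_pow, ← mul_assoc, ← mul_assoc, mul_comm (a2 s)]
      refine Nat.mul_le_mul (Nat.mul_le_mul ?_ le_rfl) le_rfl
      rw [Finset.card_univ, Fintype.card_embedding_eq, Fintype.card_fin, Fintype.card_fin]
      refine (Nat.descFactorial_le_pow n n0).trans ?_
      rw [← pow_mul, mul_comm, pow_mul]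
      exact Nat.pow_le_pow_left Nat.lt_two_pow_self.le _
    refine (Nat.add_le_add hc1 hc2).trans ?_
    rw [add_mul]
    exact Nat.add_le_add
      (Nat.mul_le_mul le_rfl (Nat.pow_le_pow_left (Nat.le_add_right _ _) _))
      (Nat.mul_le_mul le_rfl (Nat.pow_le_pow_left (Nat.le_add_left _ _) _))

theorem number_of_components_exponentially_bounded
    (K : Type) [CommRing K] [IsNoetherianRing K] (c : ℕ)
    (I : ∀ n : ℕ, Ideal (MvPolynomial (Fin c × Fin n) K))
    (hsym : ∀ (n : ℕ) (π : Equiv.Perm (Fin n)),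
      Ideal.map (rename (Prod.map (id : Fin c → Fin c) π)) (I n) = I n)
    (hincl : ∀ n : ℕ,
      Ideal.map (rename (Prod.map (id : Fin c → Fin c) (Fin.castSucc : Fin n → Fin (n + 1))))
        (I n) ≤ I (n + 1))
    (hproper : ∀ n : ℕ, I n ≠ ⊤) :
    ∃ C : ℝ, 1 ≤ C ∧ ∃ n₀ : ℕ, ∀ n : ℕ, n₀ ≤ n →
      (Nat.card {P : Ideal (MvPolynomial (Fin c × Fin n) K) // P ∈ (I n).minimalPrimes} : ℝ)
        ≤ C ^ n := by
  have hcast : ∀ m n (h : m ≤ n), ∀ f ∈ I m, ncRho K c (Fin.castLE h) f ∈ I n := by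
    intro m n h
    induction n, h using Nat.le_induction with
    | base =>
      intro f hf
      change ncRho K c id f ∈ I m
      rwa [ncRho_id]
    | succ n h ih =>
      intro f hf
      have := hincl n (Ideal.mem_map_of_mem _ (ih f hf))
      change ncRho K c Fin.castSucc (ncRho K c (Fin.castLE h) f) ∈ I (n + 1) at this
      rw [ncRho_comp] at this
      exact this
  let J : NcChain K c :=
    { I := I
      mem' := by
        intro m n ι hι f hf
        have hmn : m ≤ n := by simpa using Fintype.card_le_of_injective ι hι
        obtain ⟨τ, hτ⟩ := ncRho_perm_exists ι (Fin.castLE hmn) hι (Fin.castLE_injective hmn)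
        have := (hsym n τ).le (Ideal.mem_map_of_mem _ (hcast m n hmn f hf))
        change ncRho K c τ (ncRho K c (Fin.castLE hmn) f) ∈ I n at this
        rw [ncRho_comp] at this
        have h2 : τ ∘ Fin.castLE hmn = ι := funext hτ
        rwa [h2] at this }
  obtain ⟨a, e, n0, hb⟩ := J.bd
  refine ⟨(a + 1) * (e + 1), by nlinarith [Nat.cast_nonneg (α := ℝ) a, Nat.cast_nonneg (α := ℝ) e],
    n0 + 1, fun n hn => ?_⟩
  have h1 := hb n (by omega)
  have h2 : a * e ^ n ≤ ((a + 1) * (e + 1)) ^ n := by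
    rw [mul_pow]
    refine Nat.mul_le_mul ?_ (Nat.pow_le_pow_left (Nat.le_succ e) n)
    exact (Nat.le_succ a).trans (Nat.le_self_pow (by omega) _)
  have h3 : Nat.card {P : Ideal (MvPolynomial (Fin c × Fin n) K) // P ∈ (I n).minimalPrimes} ≤
    ((a + 1) * (e + 1)) ^ n := h1.trans h2
  exact_mod_cast h3
end

section
/- Let G be a groupoid whose type of objects Q is a finite set and all of whose hom-sets Hom(p,q) are finite, and let F be a (covariant) functor from G to the category of types with each F(p) a finite set. On the disjoint union X := ⊔_{p∈Q} F(p), declare (p,x) ∼ (q,y) if there exists g ∈ Hom(p,q) with F(g)(x) = y; since G is a groupoid this is an equivalence relation, whose classes are called the orbits of G on X. For p ∈ Q write G(p) := ⊔_{q∈Q} Hom(p,q) (nonempty, as it contains id_p). Then the number of orbits of G on X equals Σ_{p∈Q} (1/|G(p)|) · Σ_{g∈Hom(p,p)} |{x ∈ F(p) : F(g)(x) = x}|, as an identity of rational numbers. -/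
open CategoryTheory

open Classical in
theorem aux_quot {X : Type} [Fintype X] (r : X → X → Prop) (hr : Equivalence r) :
    (Nat.card (Quot r) : ℚ) = ∑ x : X, 1 / ((∑ y : X, if r x y then 1 else 0 : ℕ) : ℚ) := by
  have : Fintype (Quot r) := Fintype.ofFinite _
  rw [← Finset.sum_fiberwise Finset.univ (fun x => Quot.mk r x), Nat.card_eq_fintype_card,
    Fintype.card_eq_sum_ones, Nat.cast_sum]
  refine Finset.sum_congr rfl fun c _ => ?_
  induction c using Quot.ind with
  | mk a =>
  have key : ∀ x y, Quot.mk r x = Quot.mk r y ↔ r x y := fun x y => by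
    rw [Quot.eq, hr.eqvGen_iff]
  have h : ∀ x ∈ Finset.univ.filter (fun x => Quot.mk r x = Quot.mk r a),
      1 / ((∑ y : X, if r x y then 1 else 0 : ℕ) : ℚ)
        = 1 / ((Finset.univ.filter (fun x => Quot.mk r x = Quot.mk r a)).card : ℚ) := by
    intro x hx
    simp only [Finset.mem_filter, Finset.mem_univ, true_and] at hx
    rw [Finset.card_filter]
    congr 2
    refine Finset.sum_congr rfl fun y _ => ?_
    rw [← hx, key]
    congr 1
    exact propext ⟨fun h => hr.symm h, fun h => hr.symm h⟩
  rw [Finset.sum_congr rfl h, Finset.sum_const, nsmul_eq_mul, mul_one_div, div_self]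
  · simp
  · rw [Nat.cast_ne_zero]
    exact Finset.card_ne_zero_of_mem (a := a) (by simp)

open Classical in
theorem aux_orbit (Q : Type) [Groupoid.{0} Q] [Fintype Q] [∀ p q : Q, Fintype (p ⟶ q)]
    (F : Q ⥤ Type) [∀ p : Q, Fintype (F.obj p)] (x : Σ p : Q, F.obj p) :
    Nat.card (Σ q : Q, x.1 ⟶ q) =
      (∑ y : (Σ p : Q, F.obj p), if (∃ g : x.1 ⟶ y.1, F.map g x.2 = y.2) then 1 else 0) *
        ∑ g : x.1 ⟶ x.1, if F.map g x.2 = x.2 then 1 else 0 := by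
  rw [Finset.sum_mul, Fintype.sum_sigma, Nat.card_eq_fintype_card, Fintype.card_sigma]
  refine Finset.sum_congr rfl fun q _ => ?_
  have h1 : Fintype.card (x.1 ⟶ q) =
      ∑ z : F.obj q, ∑ g : x.1 ⟶ q, if F.map g x.2 = z then 1 else 0 := by
    rw [Finset.sum_comm]; simp
  rw [h1]
  refine Finset.sum_congr rfl fun z _ => ?_
  split_ifs with h
  · obtain ⟨k, hk⟩ := h
    dsimp only at k hk
    rw [one_mul]
    refine Fintype.sum_equiv ⟨fun g => g ≫ inv k, fun g => g ≫ k, fun g => by simp,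
      fun g => by simp⟩ _ _ fun g => ?_
    congr 1
    refine propext ⟨fun h => ?_, fun h => ?_⟩
    · simp only [Equiv.coe_fn_mk]
      rw [Functor.map_comp_apply, h, ← hk, ← Functor.map_comp_apply]
      simp
    · simp only [Equiv.coe_fn_mk] at h
      rw [← hk]
      conv_rhs => rw [← h]
      rw [← Functor.map_comp_apply]
      simp
  · rw [zero_mul]
    refine Finset.sum_eq_zero fun g _ => if_neg fun hg => h ⟨g, hg⟩

/-- The orbit-counting lemma for finite groupoids: if a finite groupoid `G` with object
set `Q` acts on finite sets `F p` (via a functor `F` to types), then the number of orbits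
on `X = ⊔_p F p` equals `Σ_{p ∈ Q} (1/|G(p)|) · Σ_{g : p ⟶ p} |Fix(g)|`, where
`G(p) = ⊔_q Hom(p,q)`. -/
theorem orbit_counting_lemma_for_groupoids
    (Q : Type) [Groupoid.{0} Q] [Fintype Q] [∀ p q : Q, Fintype (p ⟶ q)]
    (F : Q ⥤ Type) [∀ p : Q, Fintype (F.obj p)] :
    (Nat.card (Quot (fun (x y : Σ p : Q, F.obj p) =>
        ∃ g : x.1 ⟶ y.1, F.map g x.2 = y.2)) : ℚ) =
      ∑ p : Q, (1 / (Nat.card (Σ q : Q, p ⟶ q) : ℚ)) *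
        ∑ g : p ⟶ p, (Nat.card {x : F.obj p // F.map g x = x} : ℚ) := by
  classical
  rw [aux_quot]
  · rw [Fintype.sum_sigma]
    refine Finset.sum_congr rfl fun p _ => ?_
    have h1 : (∑ g : p ⟶ p, (Nat.card {x : F.obj p // F.map g x = x} : ℚ)) =
        ∑ x : F.obj p, ((∑ g : p ⟶ p, if F.map g x = x then 1 else 0 : ℕ) : ℚ) := by
      push_cast
      rw [Finset.sum_comm]
      refine Finset.sum_congr rfl fun g _ => ?_
      rw [Nat.card_eq_fintype_card, Fintype.card_subtype, Finset.card_filter]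
      push_cast
      rfl
    rw [h1, Finset.mul_sum]
    refine Finset.sum_congr rfl fun x _ => ?_
    have h2 := aux_orbit Q F ⟨p, x⟩
    have h3 : Nat.card (Σ q : Q, p ⟶ q) ≠ 0 := by
      have : Nonempty (Σ q : Q, p ⟶ q) := ⟨⟨p, 𝟙 p⟩⟩
      exact Nat.card_pos.ne'
    dsimp only at h2
    rw [h2] at h3 ⊢
    have h4 := left_ne_zero_of_mul h3
    have h5 := right_ne_zero_of_mul h3
    rw [Nat.cast_mul]
    generalize (∑ g : p ⟶ p, if F.map g x = x then 1 else 0 : ℕ) = b at *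
    have h5' : (b : ℚ) ≠ 0 := Nat.cast_ne_zero.mpr h5
    rw [one_div, one_div, mul_inv, mul_assoc, inv_mul_cancel₀ h5', mul_one]
    congr!
  · refine ⟨fun x => ⟨𝟙 _, by simp⟩, ?_, ?_⟩
    · rintro x y ⟨g, hg⟩
      refine ⟨inv g, ?_⟩
      rw [← hg, ← Functor.map_comp_apply]
      simp
    · rintro x y z ⟨g, hg⟩ ⟨k, hk⟩
      exact ⟨g ≫ k, by rw [Functor.map_comp_apply, hg, hk]⟩
end

section
/- Let (s, k, M, (∼_n)_{n∈ℕ}) be a model functor. Then the number of Sym([n])-orbits on the quotient set F_n/∼_n is a quasipolynomial in n for all n ≫ 0. (Here Sym([n]) acts on F_n/∼_n because the action τ·(σ,α) = (τ∘σ, α∘τ⁻¹) on F_n preserves ∼_n, by Axiom (1) applied to bijections.) -/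
/-- A pair `(σ, α)` consisting of an injection `σ : [s] → [n]` together with a word
`α : [n] ∖ im(σ) → [k]`. -/
structure MPair (s k n : ℕ) where
  σ : Fin s → Fin n
  inj : Function.Injective σ
  α : {j : Fin n // j ∉ Set.range σ} → Fin k

/-- The count vector of a pair: the `l`-th entry records how often the letter `l` occurs
in the word `α`. -/
noncomputable def MPair.countVec {s k n : ℕ} (p : MPair s k n) : Fin k → ℕ :=
  fun l => Nat.card {j : {j : Fin n // j ∉ Set.range p.σ} // p.α j = l}

/-- The set `F_n` of pairs whose count vector lies in `M`. -/
def FPair (s k : ℕ) (M : Set (Fin k → ℕ)) (n : ℕ) : Type :=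
  {p : MPair s k n // p.countVec ∈ M}

/-- Restriction of a pair along an injection `π : [m] → [n]` whose image contains the
image of `σ`: this underlies the map `F(π)` of the model functor. -/
noncomputable def MPair.restrict {s k m n : ℕ} (π : Fin m → Fin n)
    (hπ : Function.Injective π) (p : MPair s k n)
    (hsub : Set.range p.σ ⊆ Set.range π) : MPair s k m where
  σ := fun i => (hsub (Set.mem_range_self i)).choose
  inj := by
    intro i i' hii
    apply p.inj
    have h1 := (hsub (Set.mem_range_self i)).choose_spec
    have h2 := (hsub (Set.mem_range_self i')).choose_spec
    rw [← h1, ← h2]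
    exact congrArg π hii
  α := fun j => p.α ⟨π j.1, by
    rintro ⟨i, hi⟩
    exact j.2 ⟨i, hπ ((hsub (Set.mem_range_self i)).choose_spec.trans hi)⟩⟩

/-- The count vector can only decrease under restriction. -/
theorem MPair.countVec_restrict_le {s k m n : ℕ} (π : Fin m → Fin n)
    (hπ : Function.Injective π) (p : MPair s k n)
    (hsub : Set.range p.σ ⊆ Set.range π) (l : Fin k) :
    (p.restrict π hπ hsub).countVec l ≤ p.countVec l := by
  classical
  apply Nat.card_le_card_of_injective
    (fun j => (⟨⟨π j.1.1, by
        rintro ⟨i, hi⟩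
        exact j.1.2 ⟨i, hπ ((hsub (Set.mem_range_self i)).choose_spec.trans hi)⟩⟩,
      j.2⟩ : {j : {j : Fin n // j ∉ Set.range p.σ} // p.α j = l}))
  intro a b hab
  have hval : π a.1.1 = π b.1.1 := congrArg (fun x => x.1.1) hab
  exact Subtype.ext (Subtype.ext (hπ hval))

/-- Restriction, as a map `F(π)` on the sets `F_n` of the model functor; this uses
downward closedness of `M`. -/
noncomputable def FPair.restrict {s k m n : ℕ} {M : Set (Fin k → ℕ)}
    (hM : ∀ β ∈ M, ∀ β' : Fin k → ℕ, (∀ l, β' l ≤ β l) → β' ∈ M)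
    (π : Fin m → Fin n) (hπ : Function.Injective π) (p : FPair s k M n)
    (hsub : Set.range p.1.σ ⊆ Set.range π) : FPair s k M m :=
  ⟨p.1.restrict π hπ hsub, hM _ p.2 _ (fun l => MPair.countVec_restrict_le π hπ p.1 hsub l)⟩

namespace QPaux

open Polynomial

/-- The shift operator on rational sequences. -/
noncomputable def S : Module.End ℚ (ℕ → ℚ) := LinearMap.funLeft ℚ ℚ (fun n => n + 1)

theorem S_pow_apply (m : ℕ) (a : ℕ → ℚ) (n : ℕ) : (S ^ m) a n = a (n + m) := by
  induction m generalizing a with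
  | zero => simp
  | succ m ih => 
    rw [pow_succ, Module.End.mul_apply, ih]
    simp [S, LinearMap.funLeft, add_assoc]

/-- Eventual quasipolynomiality in terms of an annihilating operator. -/
def QP (a : ℕ → ℚ) : Prop :=
  ∃ m N d : ℕ, 0 < N ∧ aeval S (X ^ m * (X ^ N - 1) ^ d : ℚ[X]) a = 0

theorem aeval_dvd {q r : ℚ[X]} (h : q ∣ r) {a : ℕ → ℚ} (ha : aeval S q a = 0) :
    aeval S r a = 0 := by
  obtain ⟨t, rfl⟩ := h
  rw [mul_comm, map_mul, Module.End.mul_apply, ha, map_zero]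

theorem dvd_aux (N N' d d' : ℕ) : 
    ((X ^ N - 1) ^ d * (X ^ N' - 1) ^ d' : ℚ[X]) ∣ (X ^ (N * N') - 1) ^ (d + d') := by
  rw [pow_add]
  apply mul_dvd_mul
  · apply pow_dvd_pow_of_dvd
    rw [pow_mul]
    simpa using sub_dvd_pow_sub_pow ((X : ℚ[X]) ^ N) 1 N'
  · apply pow_dvd_pow_of_dvd
    rw [mul_comm, pow_mul]
    simpa using sub_dvd_pow_sub_pow ((X : ℚ[X]) ^ N') 1 N

theorem QP.of_op {c w e : ℕ} (hw : 0 < w) {a : ℕ → ℚ}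
    (h : QP (aeval S (X ^ c * (X ^ w - 1) ^ e : ℚ[X]) a)) : QP a := by
  obtain ⟨m, N, d, hN, h⟩ := h
  rw [← Module.End.mul_apply, ← map_mul] at h
  refine ⟨m + c, N * w, d + e, by positivity, aeval_dvd ?_ h⟩
  have := mul_dvd_mul (dvd_refl ((X : ℚ[X]) ^ (m + c))) (dvd_aux N w d e)
  convert this using 1
  ring

theorem QP.add {a b : ℕ → ℚ} (ha : QP a) (hb : QP b) : QP (a + b) := by
  obtain ⟨m, N, d, hN, ha⟩ := ha
  obtain ⟨m', N', d', hN', hb⟩ := hb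
  refine ⟨m + m', N * N', d + d', by positivity, ?_⟩
  have := mul_dvd_mul (dvd_refl ((X : ℚ[X]) ^ (m + m'))) (dvd_aux N N' d d')
  rw [map_add, aeval_dvd (dvd_trans ?_ this) ha, aeval_dvd (dvd_trans ?_ this) hb, add_zero]
  · exact ⟨X ^ m * (X ^ N - 1) ^ d, by ring⟩
  · exact ⟨X ^ m' * (X ^ N' - 1) ^ d', by ring⟩

theorem QP.neg {a : ℕ → ℚ} (ha : QP a) : QP (-a) := by
  obtain ⟨m, N, d, hN, ha⟩ := ha
  exact ⟨m, N, d, hN, by rw [map_neg, ha, neg_zero]⟩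

theorem QP.sub {a b : ℕ → ℚ} (ha : QP a) (hb : QP b) : QP (a - b) := by
  rw [sub_eq_add_neg]; exact ha.add hb.neg

theorem QP.zero : QP 0 := ⟨0, 1, 0, one_pos, by simp⟩

/-- A sequence whose shift is QP is QP. -/
theorem QP.of_shift {a : ℕ → ℚ} (c : ℕ) (h : QP (fun n => a (n + c))) : QP a := by
  apply QP.of_op (c := c) (w := 1) (e := 0) one_pos
  convert h using 1
  funext n
  simp [S_pow_apply]

theorem QP.shift {a : ℕ → ℚ} (h : QP a) (c : ℕ) : QP (fun n => a (n + c)) := by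
  obtain ⟨m, N, d, hN, ha⟩ := h
  refine ⟨m, N, d, hN, ?_⟩
  have : (fun n => a (n + c)) = aeval S (X ^ c : ℚ[X]) a := by
    funext n; simp [S_pow_apply]
  rw [this, ← Module.End.mul_apply, ← map_mul]
  exact aeval_dvd (Dvd.intro _ rfl) ha

theorem QP.of_diff {a : ℕ → ℚ} {w : ℕ} (hw : 0 < w) (h : QP (fun n => a (n + w) - a n)) :
    QP a := by
  apply QP.of_op (c := 0) (w := w) (e := 1) hw
  convert h using 1
  funext n
  simp [S_pow_apply]

theorem QP.of_finite {a : ℕ → ℚ} (c : ℕ) (h : ∀ n, c ≤ n → a n = 0) : QP a := by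
  apply QP.of_shift c
  convert QP.zero using 1
  funext n
  simp [h]

open fwdDiff_aux in
theorem QP.exists_quasi {a : ℕ → ℚ} (h : QP a) :
    ∃ f : ℤ → ℚ, IsQuasiPolynomial f ∧ ∃ n₀ : ℕ, ∀ n : ℕ, n₀ ≤ n → a n = f n := by
  obtain ⟨m, N, d, hN, ha⟩ := h
  have hN0 : NeZero N := ⟨hN.ne'⟩
  set b : ℕ → ℚ := (S ^ m) a with hb
  have hop : ⇑(S ^ N - 1 : Module.End ℚ (ℕ → ℚ)) = fwdDiff N := by
    funext f n
    change (S ^ N) f n - f n = f (n + N) - f n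
    rw [S_pow_apply]
  have hz : ((fwdDiff N)^[d]) b = 0 := by
    rw [← hop, ← Module.End.pow_apply, hb, ← Module.End.mul_apply]
    rw [mul_comm] at ha
    simpa using ha
  have hz' : ∀ k, d ≤ k → ((fwdDiff N)^[k]) b = 0 := by
    intro k hk
    obtain ⟨j, rfl⟩ := Nat.exists_eq_add_of_le' hk
    rw [Function.iterate_add_apply, hz, ← coe_fwdDiffₗ_pow, map_zero]
  have key : ∀ y t : ℕ, b (y + t * N) =
      ∑ k ∈ Finset.range d, (t.choose k : ℚ) * ((fwdDiff N)^[k]) b y := by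
    intro y t
    have := shift_eq_sum_fwdDiff_iter N b t y
    rw [smul_eq_mul] at this
    rw [this]
    simp only [nsmul_eq_mul]
    rcases le_total d (t + 1) with hd | hd
    · symm
      apply Finset.sum_subset (Finset.range_mono hd)
      intro k _ hk
      rw [hz' k (by simpa using hk)]; simp
    · apply Finset.sum_subset (Finset.range_mono hd)
      intro k _ hk
      rw [Nat.choose_eq_zero_of_lt (by simp at hk; omega)]; simp
  let P : ℕ → ℚ[X] := fun y => ∑ k ∈ Finset.range d,
    C (((fwdDiff N)^[k]) b y / (k.factorial : ℚ)) *
      (descPochhammer ℚ k).comp (C (1 / (N : ℚ)) * (X - C ((m : ℚ) + y)))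
  have hP : ∀ y t : ℕ, (P y).eval (((m + y + t * N : ℕ) : ℚ)) = b (y + t * N) := by
    intro y t
    rw [key]
    simp only [P, eval_finsetSum, eval_mul, eval_C, eval_comp, eval_sub, eval_X]
    apply Finset.sum_congr rfl
    intro k _
    have hNq : (N : ℚ) ≠ 0 := by exact_mod_cast hN.ne'
    have : 1 / (N : ℚ) * (((m + y + t * N : ℕ) : ℚ) - ((m : ℚ) + y)) = t := by
      push_cast; field_simp; ring
    rw [this, descPochhammer_eval_eq_descFactorial, Nat.descFactorial_eq_factorial_mul_choose]
    have : (k.factorial : ℚ) ≠ 0 := by exact_mod_cast k.factorial_ne_zero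
    push_cast
    field_simp
  refine ⟨fun n => (P ((n : ZMod N) - (m : ZMod N)).val).eval (n : ℚ),
    ⟨N, hN, fun z => P (z - (m : ZMod N)).val, fun n => rfl⟩, m, fun n hn => ?_⟩
  obtain ⟨r, rfl⟩ := Nat.exists_eq_add_of_le hn
  have h1 : (((((m + r : ℕ) : ℤ) : ZMod N)) - (m : ZMod N)).val = r % N := by
    rw [← ZMod.val_natCast]; congr 1; push_cast; ring
  have h2 := hP (r % N) (r / N)
  have h3 : r % N + r / N * N = r := by rw [mul_comm]; exact Nat.mod_add_div r N
  rw [add_assoc, h3] at h2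
  simp only [h1]
  rw [Int.cast_natCast, h2, hb, S_pow_apply, add_comm]

end QPaux
namespace QPaux

theorem lower_stab {d : ℕ} (E : ℕ → Set (Fin d → ℕ)) (hE : Antitone E)
    (hl : ∀ j, IsLowerSet (E j)) : ∃ J, E J = E (J + 1) := by
  by_contra! h
  have h' : ∀ J, ∃ x, x ∈ E J ∧ x ∉ E (J + 1) := by
    intro J
    have h1 : E (J + 1) ⊂ E J := lt_of_le_of_ne (hE (Nat.le_succ J)) (h J).symm
    obtain ⟨x, hx, hx'⟩ := Set.exists_of_ssubset h1
    exact ⟨x, hx, hx'⟩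
  choose x hx hx' using h'
  obtain ⟨i, j, hij, hle⟩ := wellQuasiOrdered_le x
  exact hx' i (hl _ hle (hE (Nat.succ_le_of_lt hij) (hx j)))

theorem wt_finite {d : ℕ} (w : Fin d → ℕ) (hw : ∀ i, 0 < w i) (n : ℕ) :
    {x : Fin d → ℕ | ∑ i, w i * x i = n}.Finite := by
  apply (Set.finite_Iic (fun _ : Fin d => n)).subset
  intro x hx i
  have h1 : w i * x i ≤ n := by
    rw [← (hx : ∑ i, w i * x i = n)]
    exact Finset.single_le_sum (f := fun i => w i * x i) (fun _ _ => Nat.zero_le _)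
      (Finset.mem_univ i)
  exact (Nat.le_mul_of_pos_left _ (hw i)).trans h1

theorem lower_step {d : ℕ} (w : Fin (d + 1) → ℕ) (hw : ∀ i, 0 < w i)
    (D : Set (Fin (d + 1) → ℕ)) (n : ℕ) :
    Set.ncard {x | x ∈ D ∧ ∑ i, w i * x i = n + w 0} =
      Set.ncard {y : Fin d → ℕ | (Fin.cons 0 y : Fin (d + 1) → ℕ) ∈ D ∧
        ∑ i, w (Fin.succ i) * y i = n + w 0} +
      Set.ncard {x : Fin (d + 1) → ℕ | x + Pi.single 0 1 ∈ D ∧ ∑ i, w i * x i = n} := by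
  set A := {y : Fin d → ℕ | (Fin.cons 0 y : Fin (d + 1) → ℕ) ∈ D ∧
        ∑ i, w (Fin.succ i) * y i = n + w 0} with hA
  set B := {x : Fin (d + 1) → ℕ | x + Pi.single 0 1 ∈ D ∧ ∑ i, w i * x i = n} with hB
  have hAf : A.Finite := (wt_finite (fun i => w (Fin.succ i)) (fun i => hw _) (n + w 0)).subset
    (fun y hy => hy.2)
  have hBf : B.Finite := (wt_finite w hw n).subset (fun y hy => hy.2)
  have hi1 : Function.Injective (fun y : Fin d → ℕ => (Fin.cons 0 y : Fin (d + 1) → ℕ)) := by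
    intro y y' h
    exact (Fin.cons_inj.1 h).2
  have hi2 : Function.Injective (fun x : Fin (d + 1) → ℕ => x + Pi.single 0 1) :=
    add_left_injective _
  rw [← Set.ncard_image_of_injective A hi1, ← Set.ncard_image_of_injective B hi2,
    ← Set.ncard_union_eq _ (hAf.image _) (hBf.image _)]
  · congr 1
    ext x
    simp only [Set.mem_ofPred_eq, Set.mem_union, Set.mem_image, hA, hB]
    have hsum : ∀ z : Fin (d + 1) → ℕ, ∑ i, w i * (z + Pi.single 0 1 : Fin (d + 1) → ℕ) i
        = ∑ i, w i * z i + w 0 := by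
      intro z
      simp [mul_add, Finset.sum_add_distrib, Pi.single_apply]
    constructor
    · rintro ⟨hx, hs⟩
      by_cases h0 : x 0 = 0
      · left
        have hc : (Fin.cons 0 (Fin.tail x) : Fin (d + 1) → ℕ) = x := by
          rw [← h0]; exact Fin.cons_self_tail x
        refine ⟨Fin.tail x, ⟨by rwa [hc], ?_⟩, hc⟩
        rw [Fin.sum_univ_succ, h0] at hs
        simpa [Fin.tail] using hs
      · right
        have hc : (x - Pi.single 0 1) + Pi.single 0 1 = x := by
          apply tsub_add_cancel_of_le
          intro i
          by_cases hi : i = 0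
          · subst hi; simpa using Nat.one_le_iff_ne_zero.2 h0
          · simp [hi]
        refine ⟨x - Pi.single 0 1, ⟨by rwa [hc], ?_⟩, hc⟩
        have := hsum (x - Pi.single 0 1)
        rw [hc] at this
        omega
    · rintro (⟨y, ⟨hy, hs⟩, rfl⟩ | ⟨y, ⟨hy, hs⟩, rfl⟩)
      · refine ⟨hy, ?_⟩
        rw [Fin.sum_univ_succ]
        simpa using hs
      · exact ⟨hy, by rw [hsum, hs]⟩
  · rw [Set.disjoint_left]
    rintro x ⟨y, -, rfl⟩ ⟨z, -, hz⟩
    have := congrFun hz 0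
    simp at this

theorem lower_QP {d : ℕ} (w : Fin d → ℕ) (hw : ∀ i, 0 < w i) (D : Set (Fin d → ℕ))
    (hD : IsLowerSet D) :
    QP (fun n => (Set.ncard {x | x ∈ D ∧ ∑ i, w i * x i = n} : ℚ)) := by
  induction d with
  | zero =>
    apply QP.of_finite 1
    intro n hn
    have : {x | x ∈ D ∧ ∑ i, w i * x i = n} = ∅ := by
      ext x; simp; omega
    rw [this]; simp
  | succ d ih =>
    obtain ⟨J, hJ⟩ := lower_stab (fun j => {x | x + Pi.single 0 j ∈ D})
      (by
        intro i j hij x hx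
        refine hD ?_ hx
        gcongr)
      (by
        intro j x y hxy hx
        refine hD ?_ hx
        gcongr)
    have hsl : ∀ D : Set (Fin (d + 1) → ℕ), IsLowerSet D → QP (fun n => 
        (Set.ncard {y : Fin d → ℕ | (Fin.cons 0 y : Fin (d + 1) → ℕ) ∈ D ∧
        ∑ i, w (Fin.succ i) * y i = n + w 0} : ℚ)) := by
      intro D hD
      exact (ih (fun i => w (Fin.succ i)) (fun i => hw _) {y | (Fin.cons 0 y : Fin (d + 1) → ℕ) ∈ D}
        (by
          intro y y' h hy
          refine hD ?_ hy
          exact Fin.cons_le_cons.2 ⟨le_rfl, h⟩)).shift (w 0)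
    induction J generalizing D with
    | zero =>
      apply QP.of_diff (hw 0)
      convert hsl D hD using 2 with n
      rw [lower_step w hw]
      have : ∀ x, x + Pi.single 0 1 ∈ D ↔ x ∈ D := by
        intro x
        have := Set.ext_iff.1 hJ x
        simpa using this.symm
      simp [this]
    | succ J ihJ =>
      apply QP.of_shift (w 0)
      have h1 := ihJ {x | x + Pi.single 0 1 ∈ D} 
        (by
          intro x y hxy hx
          refine hD ?_ hx
          gcongr)
        (by
          ext x
          have := Set.ext_iff.1 hJ x
          simpa [add_assoc, ← Pi.single_add] using this)
      convert (hsl D hD).add h1 using 2 with n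
      rw [lower_step w hw]
      simp
end QPaux
namespace QPaux
open scoped Pointwise

/-- Degree-`n` counting function of a set of vectors. -/
noncomputable def cnt {k : ℕ} (A : Set (Fin k → ℕ)) : ℕ → ℚ :=
  fun n => (Set.ncard {v | v ∈ A ∧ ∑ i, v i = n} : ℚ)

theorem deg_finite {k : ℕ} (A : Set (Fin k → ℕ)) (n : ℕ) :
    {v | v ∈ A ∧ ∑ i, v i = n}.Finite := by
  apply (wt_finite (fun _ : Fin k => 1) (fun _ => one_pos) n).subset
  rintro v ⟨-, hv⟩
  simpa using hv

theorem cnt_union {k : ℕ} (A B : Set (Fin k → ℕ)) :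
    cnt (A ∪ B) = cnt A + cnt B - cnt (A ∩ B) := by
  funext n
  have h := Set.ncard_union_add_ncard_inter _ _ (deg_finite A n) (deg_finite B n)
  have h1 : {v | v ∈ A ∧ ∑ i, v i = n} ∪ {v | v ∈ B ∧ ∑ i, v i = n} =
      {v | v ∈ A ∪ B ∧ ∑ i, v i = n} := by
    ext v; simp [or_and_right]
  have h2 : {v | v ∈ A ∧ ∑ i, v i = n} ∩ {v | v ∈ B ∧ ∑ i, v i = n} =
      {v | v ∈ A ∩ B ∧ ∑ i, v i = n} := by
    ext v; simp only [Set.mem_inter_iff, Set.mem_ofPred_eq]; tauto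
  rw [h1, h2] at h
  simp only [cnt, Pi.add_apply, Pi.sub_apply]
  rw [eq_sub_iff_add_eq]
  exact_mod_cast h

theorem cnt_empty {k : ℕ} : cnt (∅ : Set (Fin k → ℕ)) = 0 := by
  funext n; simp [cnt]

/-- Finitely generated modules over finitely generated monoids. -/
def IsMod {k : ℕ} (A : Set (Fin k → ℕ)) : Prop :=
  ∃ (Q : AddSubmonoid (Fin k → ℕ)) (C : Set (Fin k → ℕ)), Q.FG ∧ C.Finite ∧
    A = {v | ∃ c ∈ C, ∃ q ∈ Q, c + q = v}

theorem fg_param {k : ℕ} (Q : AddSubmonoid (Fin k → ℕ)) (hQ : Q.FG) :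
    ∃ (d : ℕ) (f : (Fin d → ℕ) →+ (Fin k → ℕ)) (w : Fin d → ℕ), (∀ v, v ∈ Q ↔ ∃ x, f x = v) ∧
      (∀ i, 0 < w i) ∧ ∀ x, ∑ i, f x i = ∑ i, w i * x i := by
  classical
  obtain ⟨t, rfl⟩ := hQ
  let e := (t.erase 0).equivFin
  let g : Fin (t.erase 0).card → (Fin k → ℕ) := fun i => (e.symm i).1
  let f : (Fin (t.erase 0).card → ℕ) →+ (Fin k → ℕ) :=
    { toFun := fun x => ∑ i, x i • g i
      map_zero' := by simp
      map_add' := by intro x y; simp [add_smul, Finset.sum_add_distrib] }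
  have hf : ∀ x, f x = ∑ i, x i • g i := fun x => rfl
  refine ⟨_, f, fun i => ∑ j, g i j, ?_, ?_, ?_⟩
  · intro v
    constructor
    · intro hv
      have : AddSubmonoid.closure (t : Set (Fin k → ℕ)) ≤ AddMonoidHom.mrange f := by
        rw [AddSubmonoid.closure_le]
        intro u hu
        by_cases h0 : u = 0
        · subst h0; exact zero_mem _
        · refine ⟨Pi.single (e ⟨u, Finset.mem_erase.2 ⟨h0, hu⟩⟩) 1, ?_⟩
          rw [hf, Finset.sum_eq_single (e ⟨u, Finset.mem_erase.2 ⟨h0, hu⟩⟩)]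
          · simp [g]
          · intro b _ hb; simp [hb]
          · simp
      exact this hv
    · rintro ⟨x, rfl⟩
      rw [hf]
      apply sum_mem
      intro i _
      apply nsmul_mem
      apply AddSubmonoid.subset_closure
      exact Finset.mem_of_mem_erase (e.symm i).2
  · intro i
    have h0 : g i ≠ 0 := Finset.ne_of_mem_erase (e.symm i).2
    apply Nat.pos_of_ne_zero
    intro h
    apply h0
    funext j
    exact Finset.sum_eq_zero_iff.1 h j (Finset.mem_univ _)
  · intro x
    rw [hf]
    simp only [Finset.sum_apply, Pi.smul_apply, smul_eq_mul]
    rw [Finset.sum_comm]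
    apply Finset.sum_congr rfl
    intro i _
    rw [← Finset.mul_sum, mul_comm]

theorem IsMod.cnt_QP {k : ℕ} {A : Set (Fin k → ℕ)} (hA : IsMod A) : QP (cnt A) := by
  obtain ⟨Q, C, hQ, hC, rfl⟩ := hA
  obtain ⟨d, f, w, hf, hw, hfw⟩ := fg_param Q hQ
  induction C, hC using Set.Finite.induction_on with
  | empty => simpa [cnt_empty] using QP.zero
  | @insert c C' hc hC' ih =>
    set A' := {v | ∃ c ∈ C', ∃ q ∈ Q, c + q = v} with hA'
    let B : Set (Fin k → ℕ) := {v | (∃ q ∈ Q, c + q = v) ∧ v ∉ A'}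
    have h1 : {v | ∃ b ∈ insert c C', ∃ q ∈ Q, b + q = v} = A' ∪ B := by
      ext v
      simp only [Set.mem_insert_iff, exists_eq_or_imp, Set.mem_ofPred_eq, Set.mem_union, B, hA']
      generalize (∃ a ∈ C', ∃ q ∈ Q, a + q = v) = p1
      generalize (∃ q ∈ Q, c + q = v) = p2
      tauto
    have h2 : A' ∩ B = ∅ := by
      ext v; simp [B]; tauto
    rw [h1, cnt_union, h2, cnt_empty, sub_zero]
    apply ih.add
    let D : Set (Fin d → ℕ) := {x | c + f x ∉ A' ∧ ∀ y, f y = f x → toLex x ≤ toLex y}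
    have hcl : ∀ v ∈ A', ∀ x, v + f x ∈ A' := by
      rintro v ⟨b, hb, q, hq, rfl⟩ x
      exact ⟨b, hb, q + f x, add_mem hq ((hf _).2 ⟨x, rfl⟩), by rw [add_assoc]⟩
    have hD : IsLowerSet D := by
      rintro x y hxy ⟨hx1, hx2⟩
      obtain ⟨z, rfl⟩ := exists_add_of_le hxy
      refine ⟨fun h => hx1 ?_, ?_⟩
      · rw [map_add, ← add_assoc]; exact hcl _ h z
      · intro u hu
        have := hx2 (u + z) (by rw [map_add, map_add, hu])
        rw [toLex_add, toLex_add] at this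
        exact le_of_add_le_add_right this
    apply QP.of_shift (∑ i, c i)
    convert lower_QP w hw D hD using 2 with n
    simp only [cnt]
    congr 1
    have hinj : Set.InjOn (fun x => c + f x) {x | x ∈ D ∧ ∑ i, w i * x i = n} := by
      rintro x ⟨⟨-, hx⟩, -⟩ y ⟨⟨-, hy⟩, -⟩ hxy
      have hxy' : f x = f y := add_left_cancel hxy
      exact toLex.injective (le_antisymm (hx y hxy'.symm) (hy x hxy'))
    rw [← hinj.ncard_image]
    congr 1
    ext v
    constructor
    · rintro ⟨⟨⟨q, hq, rfl⟩, hv⟩, hs⟩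
      obtain ⟨x, rfl⟩ := (hf _).1 hq
      obtain ⟨y, hy, hmin⟩ := (wellFounded_lt (α := Lex (Fin d → ℕ))).has_min
        {y | f (ofLex y) = f x} ⟨toLex x, rfl⟩
      have hy' : f (ofLex y) = f x := hy
      refine ⟨ofLex y, ⟨⟨by rw [hy']; exact hv, ?_⟩, ?_⟩, by simp only [hy']⟩
      · intro u hu
        exact not_lt.1 (hmin (toLex u) (hu.trans hy'))
      · rw [← hfw, hy']
        simp only [Pi.add_apply, Finset.sum_add_distrib] at hs
        omega
    · rintro ⟨x, ⟨⟨hx1, hx2⟩, hs⟩, rfl⟩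
      refine ⟨⟨⟨f x, (hf _).2 ⟨x, rfl⟩, rfl⟩, hx1⟩, ?_⟩
      simp only [Pi.add_apply, Finset.sum_add_distrib]
      rw [hfw, hs, add_comm]

theorem IsMod.inter {k : ℕ} {A B : Set (Fin k → ℕ)} (hA : IsMod A) (hB : IsMod B) :
    IsMod (A ∩ B) := by
  obtain ⟨Q₁, C₁, hQ₁, hC₁, rfl⟩ := hA
  obtain ⟨Q₂, C₂, hQ₂, hC₂, rfl⟩ := hB
  obtain ⟨d₁, f₁, w₁, hf₁, -, -⟩ := fg_param Q₁ hQ₁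
  obtain ⟨d₂, f₂, w₂, hf₂, -, -⟩ := fg_param Q₂ hQ₂
  let F₁ : (Fin d₁ → ℕ) × (Fin d₂ → ℕ) →+ (Fin k → ℕ) := f₁.comp (AddMonoidHom.fst _ _)
  let F₂ : (Fin d₁ → ℕ) × (Fin d₂ → ℕ) →+ (Fin k → ℕ) := f₂.comp (AddMonoidHom.snd _ _)
  have hF₁ : ∀ z, F₁ z ∈ Q₁ := fun z => (hf₁ _).2 ⟨_, rfl⟩
  have hF₂ : ∀ z, F₂ z ∈ Q₂ := fun z => (hf₂ _).2 ⟨_, rfl⟩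
  let E : (Fin k → ℕ) → (Fin k → ℕ) → Set ((Fin d₁ → ℕ) × (Fin d₂ → ℕ)) :=
    fun c₁ c₂ => {z | c₁ + F₁ z = c₂ + F₂ z}
  refine ⟨(F₁.eqLocusM F₂).map F₁, ⋃ c₁ ∈ C₁, ⋃ c₂ ∈ C₂,
    (fun z => c₁ + F₁ z) '' {z | Minimal (· ∈ E c₁ c₂) z}, ?_, ?_, ?_⟩
  · exact (AddSubmonoid.fg_eqLocusM F₁ F₂).map F₁
  · refine hC₁.biUnion fun c₁ _ => hC₂.biUnion fun c₂ _ => Set.Finite.image _ ?_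
    exact WellQuasiOrderedLE.finite_of_isAntichain (setOfPred_minimal_antichain _)
  · ext v
    constructor
    · rintro ⟨⟨c₁, hc₁, q₁, hq₁, rfl⟩, ⟨c₂, hc₂, q₂, hq₂, h⟩⟩
      obtain ⟨x, rfl⟩ := (hf₁ _).1 hq₁
      obtain ⟨y, rfl⟩ := (hf₂ _).1 hq₂
      have hz : (x, y) ∈ E c₁ c₂ := h.symm
      obtain ⟨m, hm, hmin⟩ := exists_minimal_le_of_wellFoundedLT (· ∈ E c₁ c₂) (x, y) hz
      obtain ⟨u, hu⟩ := exists_add_of_le hm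
      refine ⟨c₁ + F₁ m, ?_, F₁ u, ⟨u, ?_, rfl⟩, ?_⟩
      · simp only [Set.mem_iUnion]
        exact ⟨c₁, hc₁, c₂, hc₂, m, hmin, rfl⟩
      · have h1 : c₁ + F₁ m = c₂ + F₂ m := hmin.1
        have h2 : c₁ + F₁ (x, y) = c₂ + F₂ (x, y) := hz
        rw [hu, map_add, map_add, ← add_assoc, ← add_assoc, h1] at h2
        exact add_left_cancel h2
      · rw [add_assoc, ← map_add, ← hu]; rfl
    · rintro ⟨c, hc, q, ⟨u, hu, rfl⟩, rfl⟩
      simp only [Set.mem_iUnion] at hc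
      obtain ⟨c₁, hc₁, c₂, hc₂, m, hm, rfl⟩ := hc
      have hu' : F₁ u = F₂ u := hu
      have hm' : c₁ + F₁ m = c₂ + F₂ m := hm.1
      refine ⟨⟨c₁, hc₁, F₁ m + F₁ u, add_mem (hF₁ _) (hF₁ _), ?_⟩,
        ⟨c₂, hc₂, F₂ m + F₂ u, add_mem (hF₂ _) (hF₂ _), ?_⟩⟩
      · simp only [add_assoc]
      · simp only [hm', hu', add_assoc]

theorem list_QP {k : ℕ} (N : ℕ) : ∀ l : List (Set (Fin k → ℕ)), l.length = N →
    (∀ A ∈ l, IsMod A) → QP (cnt {v | ∃ A ∈ l, v ∈ A}) := by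
  induction N with
  | zero =>
    intro l hl _
    rw [List.length_eq_zero_iff] at hl
    subst hl
    simpa [cnt_empty] using QP.zero
  | succ N ih =>
    intro l hl hmod
    cases l with
    | nil => simp at hl
    | cons A l =>
      simp only [List.length_cons, Nat.add_right_cancel_iff] at hl
      have h1 : {v | ∃ B ∈ A :: l, v ∈ B} = A ∪ {v | ∃ B ∈ l, v ∈ B} := by
        ext v; simp
      have h2 : A ∩ {v | ∃ B ∈ l, v ∈ B} = {v | ∃ B ∈ l.map (fun B => A ∩ B), v ∈ B} := by
        ext v
        simp
        tauto
      have hA := hmod A (by simp)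
      have hl' : ∀ B ∈ l, IsMod B := fun B hB => hmod B (by simp [hB])
      rw [h1, cnt_union, h2]
      refine (hA.cnt_QP.add (ih l hl hl')).sub (ih _ (by simpa using hl) ?_)
      intro B hB
      obtain ⟨B', hB', rfl⟩ := List.mem_map.1 hB
      exact hA.inter (hl' B' hB')

theorem semilinear_QP {k : ℕ} {A : Set (Fin k → ℕ)} (hA : IsSemilinearSet A) : QP (cnt A) := by
  rw [isSemilinearSet_iff] at hA
  obtain ⟨T, hT, rfl⟩ := hA
  convert list_QP _ T.toList rfl ?_ using 2
  · ext v; simp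
  · intro B hB
    rw [Finset.mem_toList] at hB
    obtain ⟨a, P, hP, rfl⟩ := isLinearSet_iff_exists_fg_eq_vadd.1 (hT B hB)
    refine ⟨P, {a}, hP, Set.finite_singleton a, ?_⟩
    ext v
    simp [Set.mem_vadd_set]

end QPaux
namespace QPaux
open scoped Pointwise

theorem lower_semilinear {ι : Type*} [Finite ι] (D : Set (ι → ℕ)) (hD : IsLowerSet D) :
    IsSemilinearSet D := by
  rw [← compl_compl D]
  apply IsSemilinearSet.compl
  have hm : {x | Minimal (· ∈ Dᶜ) x}.Finite :=
    WellQuasiOrderedLE.finite_of_isAntichain (setOfPred_minimal_antichain _)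
  have h : Dᶜ = ⋃ m ∈ {x | Minimal (· ∈ Dᶜ) x}, (m +ᵥ (Set.univ : Set (ι → ℕ))) := by
    ext x
    simp only [Set.mem_iUnion]
    constructor
    · intro hx
      obtain ⟨m, hmx, hmin⟩ := exists_minimal_le_of_wellFoundedLT (· ∈ Dᶜ) x hx
      obtain ⟨u, rfl⟩ := exists_add_of_le hmx
      exact ⟨m, hmin, u, trivial, rfl⟩
    · rintro ⟨m, hmin, u, -, rfl⟩ hx
      exact hmin.1 (hD (le_self_add : m ≤ m + u) hx)
  rw [h]
  exact IsSemilinearSet.biUnion hm fun m _ => IsSemilinearSet.univ.vadd m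

theorem lt_semilinear {ι : Type*} [Finite ι] (f g : (ι → ℕ) →+ ℕ) :
    IsSemilinearSet {x | f x < g x} := by
  have h : {x | f x < g x} = {x | ∃ y : Unit → ℕ, 1 + (f x + y ()) = 0 + g x} := by
    ext x
    simp only [Set.mem_ofPred_eq]
    constructor
    · intro h
      exact ⟨fun _ => g x - f x - 1, by dsimp only; omega⟩
    · rintro ⟨y, hy⟩; omega
  rw [h]
  apply IsSemilinearSet.proj'
  let L : (ι ⊕ Unit → ℕ) →+ (ι → ℕ) :=
    { toFun := fun z => z ∘ Sum.inl, map_zero' := rfl, map_add' := fun _ _ => rfl }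
  exact isSemilinearSet_setOfPred_eq 1 0 (f.comp L + Pi.evalAddMonoidHom (fun _ => ℕ) (Sum.inr ()))
    (g.comp L)

theorem eq_semilinear {ι : Type*} [Finite ι] (f : (ι → ℕ) →+ ℕ) (g : (ι → ℕ) →+ ℕ) :
    IsSemilinearSet {x | f x = g x} := by
  simpa using isSemilinearSet_setOfPred_eq 0 0 f g

theorem min_semilinear {k : ℕ} (R : (Fin k → ℕ) → (Fin k → ℕ) → Prop)
    (hR : IsSemilinearSet {z : Fin k ⊕ Fin k → ℕ | R (z ∘ Sum.inl) (z ∘ Sum.inr)}) :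
    IsSemilinearSet {x | R x x ∧ ¬ ∃ y, R x y ∧ toLex y < toLex x} := by
  have h1 : IsSemilinearSet {x | R x x} := by
    let L : (Fin k → ℕ) →+ (Fin k ⊕ Fin k → ℕ) :=
      { toFun := fun x => Sum.elim x x
        map_zero' := by ext (i | i) <;> rfl
        map_add' := by intro x y; ext (i | i) <;> rfl }
    exact hR.preimage L
  have h2 : IsSemilinearSet {x | ∃ y, R x y ∧ toLex y < toLex x} := by
    apply IsSemilinearSet.proj' (p := fun x y => R x y ∧ toLex y < toLex x)
    have : IsSemilinearSet {z : Fin k ⊕ Fin k → ℕ |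
        toLex (z ∘ Sum.inr) < toLex (z ∘ Sum.inl)} := by
      have : {z : Fin k ⊕ Fin k → ℕ | toLex (z ∘ Sum.inr) < toLex (z ∘ Sum.inl)} =
          ⋃ i : Fin k, ((⋂ j ∈ {j | j < i}, {z | z (Sum.inr j) = z (Sum.inl j)}) ∩
            {z | z (Sum.inr i) < z (Sum.inl i)}) := by
        ext z
        simp only [Set.mem_iUnion, Set.mem_inter_iff, Set.mem_iInter, Set.mem_ofPred_eq]
        exact Iff.rfl
      rw [this]
      refine IsSemilinearSet.iUnion fun i => IsSemilinearSet.inter ?_ ?_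
      · refine IsSemilinearSet.biInter (Set.toFinite _) fun j _ => ?_
        exact eq_semilinear (Pi.evalAddMonoidHom (fun _ => ℕ) (Sum.inr j))
          (Pi.evalAddMonoidHom (fun _ => ℕ) (Sum.inl j))
      · exact lt_semilinear (Pi.evalAddMonoidHom (fun _ => ℕ) (Sum.inr i))
          (Pi.evalAddMonoidHom (fun _ => ℕ) (Sum.inl i))
    exact hR.inter this
  exact h1.inter h2.compl

/-- Fibre cardinalities. -/
def fib {n : ℕ} {X : Type*} [DecidableEq X] (g : Fin n → X) (x : X) : ℕ :=
  (Finset.univ.filter (fun j => g j = x)).card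

theorem sum_fib {n : ℕ} {X : Type*} [DecidableEq X] [Fintype X] (g : Fin n → X) :
    ∑ x, fib g x = n := by
  have := Finset.card_eq_sum_card_fiberwise (s := (Finset.univ : Finset (Fin n))) (f := g)
    (t := Finset.univ) (by intro x _; simp)
  simpa [fib] using this.symm

theorem fib_fst {n : ℕ} {X Y : Type*} [DecidableEq X] [DecidableEq Y] [Fintype Y]
    (g : Fin n → X) (h : Fin n → Y) (x : X) :
    fib g x = ∑ y, fib (fun j => (g j, h j)) (x, y) := by
  have := Finset.card_eq_sum_card_fiberwise (s := Finset.univ.filter (fun j => g j = x)) (f := h)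
    (t := Finset.univ) (by intro x _; simp)
  simp only [fib, this, Finset.filter_filter, Prod.mk.injEq]

theorem fib_snd {n : ℕ} {X Y : Type*} [DecidableEq X] [DecidableEq Y] [Fintype X]
    (g : Fin n → X) (h : Fin n → Y) (y : Y) :
    fib h y = ∑ x, fib (fun j => (g j, h j)) (x, y) := by
  have := Finset.card_eq_sum_card_fiberwise (s := Finset.univ.filter (fun j => h j = y)) (f := g)
    (t := Finset.univ) (by intro x _; simp)
  simp only [fib, this, Finset.filter_filter, Prod.mk.injEq, and_comm]

theorem exists_perm {n : ℕ} {X : Type*} [DecidableEq X] (g h : Fin n → X)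
    (hgh : ∀ x, fib g x = fib h x) : ∃ τ : Equiv.Perm (Fin n), ∀ j, g (τ j) = h j := by
  have e : ∀ x, Nonempty ({j // h j = x} ≃ {j // g j = x}) := by
    intro x
    apply Fintype.card_eq.1
    rw [Fintype.card_subtype, Fintype.card_subtype]
    exact (hgh x).symm
  exact ⟨Equiv.ofFiberEquiv fun x => (e x).some, fun j => Equiv.ofFiberEquiv_map _ j⟩

theorem exists_sub {n : ℕ} {X : Type*} [DecidableEq X] [Fintype X] (g : Fin n → X) (v : X → ℕ)
    (hv : ∀ x, v x ≤ fib g x) : ∃ (m : ℕ) (π : Fin m → Fin n), Function.Injective π ∧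
      (∀ x, fib (g ∘ π) x = v x) ∧ ∀ j, v (g j) = fib g (g j) → j ∈ Set.range π := by
  choose A hA hc using fun x => Finset.exists_subset_card_eq (hv x)
  have hA' : ∀ x j, j ∈ A x → g j = x := fun x j hj => (Finset.mem_filter.1 (hA x hj)).2
  let B : Finset (Fin n) := Finset.univ.biUnion A
  have hB : ∀ j, j ∈ B ↔ j ∈ A (g j) := by
    intro j
    simp only [B, Finset.mem_biUnion, Finset.mem_univ, true_and]
    exact ⟨fun ⟨x, hx⟩ => by rw [hA' x j hx]; exact hx, fun h => ⟨_, h⟩⟩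
  let π := B.orderEmbOfFin rfl
  have hr : ∀ j, j ∈ Set.range π ↔ j ∈ B := by
    intro j
    rw [Finset.range_orderEmbOfFin]; rfl
  refine ⟨B.card, π, π.injective, ?_, ?_⟩
  · intro x
    rw [← hc x]
    unfold fib
    rw [← Finset.card_map π.toEmbedding]
    congr 1
    ext j
    simp only [Finset.mem_map, Finset.mem_filter, Finset.mem_univ, true_and, Function.comp]
    constructor
    · rintro ⟨i, hi, rfl⟩
      have : π i ∈ B := (hr _).1 ⟨i, rfl⟩
      rw [hB, hi] at this
      exact this
    · intro hj
      have h1 : j ∈ B := by rw [hB, hA' x j hj]; exact hj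
      obtain ⟨i, hi⟩ := (hr j).2 h1
      exact ⟨i, by rw [hi]; exact hA' x j hj, hi⟩
  · intro j hj
    rw [hr, hB]
    have : A (g j) = Finset.univ.filter (fun i => g i = g j) :=
      Finset.eq_of_subset_of_card_le (hA _) (by rw [hc, hj]; rfl)
    rw [this]; simp

open Classical in
/-- The label of a position. -/
noncomputable def lab {s k n : ℕ} (p : MPair s k n) (j : Fin n) : Fin s ⊕ Fin k :=
  if h : j ∈ Set.range p.σ then Sum.inl h.choose else Sum.inr (p.α ⟨j, h⟩)

theorem lab_inl {s k n : ℕ} (p : MPair s k n) (j : Fin n) (i : Fin s) :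
    lab p j = Sum.inl i ↔ p.σ i = j := by
  unfold lab
  split_ifs with h
  · rw [Sum.inl.injEq]
    constructor
    · rintro rfl; exact h.choose_spec
    · intro hi; exact p.inj (h.choose_spec.trans hi.symm)
  · simp only [reduceCtorEq, false_iff]
    intro hi; exact h ⟨i, hi⟩

theorem lab_inr {s k n : ℕ} (p : MPair s k n) (j : Fin n) (l : Fin k) :
    lab p j = Sum.inr l ↔ ∃ h : j ∉ Set.range p.σ, p.α ⟨j, h⟩ = l := by
  unfold lab
  split_ifs with h
  · simp [h]
  · rw [Sum.inr.injEq]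
    exact ⟨fun h' => ⟨h, h'⟩, fun ⟨_, h'⟩ => h'⟩

theorem lab_restrict {s k m n : ℕ} (π : Fin m → Fin n) (hπ : Function.Injective π)
    (p : MPair s k n) (hsub : Set.range p.σ ⊆ Set.range π) (j : Fin m) :
    lab (p.restrict π hπ hsub) j = lab p (π j) := by
  have hs : ∀ i, π ((p.restrict π hπ hsub).σ i) = p.σ i := fun i =>
    (hsub (Set.mem_range_self i)).choose_spec
  rcases h : lab p (π j) with i | l
  · rw [lab_inl] at h ⊢
    apply hπ
    rw [hs, h]
  · rw [lab_inr] at h ⊢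
    obtain ⟨h1, h2⟩ := h
    exact ⟨fun ⟨i, hi⟩ => h1 ⟨i, by rw [← hs, hi]⟩, h2⟩

theorem lab_injective {s k n : ℕ} (p q : MPair s k n) (h : ∀ j, lab p j = lab q j) : p = q := by
  have hσ : p.σ = q.σ := by
    funext i
    have := (lab_inl p (p.σ i) i).2 rfl
    rw [h, lab_inl] at this
    exact this.symm
  have hα : ∀ j (hp : j ∉ Set.range p.σ) (hq : j ∉ Set.range q.σ), p.α ⟨j, hp⟩ = q.α ⟨j, hq⟩ := by
    intro j hp hq
    have := (lab_inr p j _).2 ⟨hp, rfl⟩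
    rw [h, lab_inr] at this
    obtain ⟨_, h'⟩ := this
    exact h'.symm
  obtain ⟨σ, inj, α⟩ := p
  obtain ⟨σ', inj', α'⟩ := q
  dsimp only at hσ
  subst hσ
  congr 1
  funext j
  exact hα j.1 j.2 j.2

theorem fib_inl {s k n : ℕ} (p : MPair s k n) (i : Fin s) : fib (lab p) (Sum.inl i) = 1 := by
  unfold fib
  rw [Finset.card_eq_one]
  refine ⟨p.σ i, ?_⟩
  ext j
  simp [lab_inl, eq_comm]

theorem fib_inr {s k n : ℕ} (p : MPair s k n) (l : Fin k) :
    fib (lab p) (Sum.inr l) = p.countVec l := by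
  unfold fib MPair.countVec
  rw [← Fintype.card_subtype, ← Nat.card_eq_fintype_card]
  refine Nat.card_congr
    { toFun := fun j => ⟨⟨j.1, ((lab_inr p j.1 l).1 j.2).choose⟩,
        ((lab_inr p j.1 l).1 j.2).choose_spec⟩
      invFun := fun j => ⟨j.1.1, (lab_inr p j.1.1 l).2 ⟨j.1.2, j.2⟩⟩
      left_inv := fun j => rfl
      right_inv := fun j => rfl }

theorem sum_countVec {s k n : ℕ} (p : MPair s k n) : ∑ l, p.countVec l + s = n := by
  have := sum_fib (lab p)
  rw [Fintype.sum_sum_type] at this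
  simp only [fib_inl, fib_inr] at this
  simpa [add_comm] using this

theorem range_perm {n s : ℕ} (σ : Fin s → Fin n) (τ : Equiv.Perm (Fin n)) :
    Set.range σ ⊆ Set.range τ := by
  rw [Equiv.range_eq_univ]; exact Set.subset_univ _

theorem countVec_perm {s k n : ℕ} (p : MPair s k n) (τ : Equiv.Perm (Fin n))
    (h : Set.range p.σ ⊆ Set.range τ) :
    (p.restrict τ τ.injective h).countVec = p.countVec := by
  funext l
  rw [← fib_inr, ← fib_inr]
  unfold fib
  rw [← Finset.card_map τ.toEmbedding]
  congr 1
  ext j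
  simp only [Finset.mem_map, Finset.mem_filter, Finset.mem_univ, true_and, lab_restrict]
  constructor
  · rintro ⟨i, hi, rfl⟩; exact hi
  · intro hj; exact ⟨τ.symm j, by simpa using hj, by simp⟩

theorem exists_perm_restrict {s k n : ℕ} (p q : MPair s k n) (h : p.countVec = q.countVec) :
    ∃ τ : Equiv.Perm (Fin n), p.restrict τ τ.injective (range_perm _ τ) = q := by
  obtain ⟨τ, hτ⟩ := exists_perm (lab p) (lab q) (by
    rintro (i | l)
    · rw [fib_inl, fib_inl]
    · rw [fib_inr, fib_inr, h])
  refine ⟨τ, lab_injective _ _ fun j => ?_⟩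
  rw [lab_restrict, hτ]

end QPaux

namespace QPaux

section model

variable {s k : ℕ} {M : Set (Fin k → ℕ)}

/-- The relation on count vectors. -/
def Rel (sim : ∀ n : ℕ, FPair s k M n → FPair s k M n → Prop) (β γ : Fin k → ℕ) : Prop :=
  ∃ n p q, sim n p q ∧ p.1.countVec = β ∧ q.1.countVec = γ

/-- The set of pair count vectors. -/
def Wset (sim : ∀ n : ℕ, FPair s k M n → FPair s k M n → Prop) :
    Set ((Fin s ⊕ Fin k) × (Fin s ⊕ Fin k) → ℕ) :=
  {v | ∃ n p q, sim n p q ∧ ∀ x, v x = fib (fun j => (lab p.1 j, lab q.1 j)) x}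

theorem Wset_eq
    (hM : ∀ β ∈ M, ∀ β' : Fin k → ℕ, (∀ l, β' l ≤ β l) → β' ∈ M)
    (sim : ∀ n : ℕ, FPair s k M n → FPair s k M n → Prop)
    (ax1 : ∀ (m n : ℕ) (π : Fin m → Fin n) (hπ : Function.Injective π)
      (p p' : FPair s k M n) (hp : Set.range p.1.σ ⊆ Set.range π)
      (hp' : Set.range p'.1.σ ⊆ Set.range π),
      sim n p p' → sim m (FPair.restrict hM π hπ p hp) (FPair.restrict hM π hπ p' hp')) :
    Wset sim = ({v | ∃ w ∈ Wset sim, v ≤ w} ∩ ⋂ i : Fin s, {v | ∑ y, v (Sum.inl i, y) = 1}) ∩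
      ⋂ i : Fin s, {v | ∑ y, v (y, Sum.inl i) = 1} := by
  ext v
  simp only [Set.mem_inter_iff, Set.mem_iInter, Set.mem_ofPred_eq]
  constructor
  · intro hv
    refine ⟨⟨⟨v, hv, le_rfl⟩, ?_⟩, ?_⟩
    · obtain ⟨n, p, q, -, h⟩ := hv
      intro i
      simp only [h]
      rw [← fib_fst, fib_inl]
    · obtain ⟨n, p, q, -, h⟩ := hv
      intro i
      simp only [h]
      rw [← fib_snd, fib_inl]
  · rintro ⟨⟨⟨w, ⟨n, p, q, hpq, hw⟩, hvw⟩, h1⟩, h2⟩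
    have hle : ∀ x, v x ≤ fib (fun j => (lab p.1 j, lab q.1 j)) x := fun x => by
      rw [← hw]; exact hvw x
    obtain ⟨m, π, hπ, hf, hr⟩ := exists_sub (fun j => (lab p.1 j, lab q.1 j)) v hle
    have e1 : ∀ i y, v (Sum.inl i, y) = fib (fun j => (lab p.1 j, lab q.1 j)) (Sum.inl i, y) := by
      intro i y
      have := (Finset.sum_eq_sum_iff_of_le (s := Finset.univ)
        (fun y _ => hle (Sum.inl i, y))).1 (by rw [← fib_fst, fib_inl, h1])
      exact this y (Finset.mem_univ _)
    have e2 : ∀ i y, v (y, Sum.inl i) = fib (fun j => (lab p.1 j, lab q.1 j)) (y, Sum.inl i) := by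
      intro i y
      have := (Finset.sum_eq_sum_iff_of_le (s := Finset.univ)
        (fun y _ => hle (y, Sum.inl i))).1 (by rw [← fib_snd, fib_inl, h2])
      exact this y (Finset.mem_univ _)
    have hp : Set.range p.1.σ ⊆ Set.range π := by
      rintro _ ⟨i, rfl⟩
      apply hr
      have : lab p.1 (p.1.σ i) = Sum.inl i := (lab_inl _ _ _).2 rfl
      show v (lab p.1 (p.1.σ i), lab q.1 (p.1.σ i)) =
        fib (fun j => (lab p.1 j, lab q.1 j)) (lab p.1 (p.1.σ i), lab q.1 (p.1.σ i))
      rw [this]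
      exact e1 _ _
    have hq : Set.range q.1.σ ⊆ Set.range π := by
      rintro _ ⟨i, rfl⟩
      apply hr
      have : lab q.1 (q.1.σ i) = Sum.inl i := (lab_inl _ _ _).2 rfl
      show v (lab p.1 (q.1.σ i), lab q.1 (q.1.σ i)) =
        fib (fun j => (lab p.1 j, lab q.1 j)) (lab p.1 (q.1.σ i), lab q.1 (q.1.σ i))
      rw [this]
      exact e2 _ _
    refine ⟨m, _, _, ax1 m n π hπ p q hp hq hpq, fun x => ?_⟩
    rw [← hf]
    congr 1
    funext j
    exact (Prod.ext (lab_restrict π hπ p.1 hp j) (lab_restrict π hπ q.1 hq j)).symm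

theorem sum_one_semilinear {ι κ : Type*} [Fintype ι] [Fintype κ] (e : κ → ι) :
    IsSemilinearSet {v : ι → ℕ | ∑ y, v (e y) = 1} := by
  let f : (ι → ℕ) →+ ℕ :=
    { toFun := fun v => ∑ y, v (e y)
      map_zero' := by simp
      map_add' := by intro x y; simp [Finset.sum_add_distrib] }
  have := isSemilinearSet_setOfPred_eq 0 1 f (0 : (ι → ℕ) →+ ℕ)
  convert this using 1
  ext v
  show f v = 1 ↔ 0 + f v = 1 + 0
  rw [zero_add, add_zero]

theorem Wset_semilinear
    (hM : ∀ β ∈ M, ∀ β' : Fin k → ℕ, (∀ l, β' l ≤ β l) → β' ∈ M)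
    (sim : ∀ n : ℕ, FPair s k M n → FPair s k M n → Prop)
    (ax1 : ∀ (m n : ℕ) (π : Fin m → Fin n) (hπ : Function.Injective π)
      (p p' : FPair s k M n) (hp : Set.range p.1.σ ⊆ Set.range π)
      (hp' : Set.range p'.1.σ ⊆ Set.range π),
      sim n p p' → sim m (FPair.restrict hM π hπ p hp) (FPair.restrict hM π hπ p' hp')) :
    IsSemilinearSet (Wset sim) := by
  rw [Wset_eq hM sim ax1]
  refine IsSemilinearSet.inter (IsSemilinearSet.inter ?_ ?_) ?_
  · apply lower_semilinear
    rintro a b hba ⟨w, hw, haw⟩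
    exact ⟨w, hw, hba.trans haw⟩
  · exact IsSemilinearSet.iInter fun i => sum_one_semilinear (fun y => (Sum.inl i, y))
  · exact IsSemilinearSet.iInter fun i => sum_one_semilinear (fun y => (y, Sum.inl i))

theorem Rel_semilinear
    (hM : ∀ β ∈ M, ∀ β' : Fin k → ℕ, (∀ l, β' l ≤ β l) → β' ∈ M)
    (sim : ∀ n : ℕ, FPair s k M n → FPair s k M n → Prop)
    (ax1 : ∀ (m n : ℕ) (π : Fin m → Fin n) (hπ : Function.Injective π)
      (p p' : FPair s k M n) (hp : Set.range p.1.σ ⊆ Set.range π)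
      (hp' : Set.range p'.1.σ ⊆ Set.range π),
      sim n p p' → sim m (FPair.restrict hM π hπ p hp) (FPair.restrict hM π hπ p' hp')) :
    IsSemilinearSet {z : Fin k ⊕ Fin k → ℕ | Rel sim (z ∘ Sum.inl) (z ∘ Sum.inr)} := by
  let L : ((Fin s ⊕ Fin k) × (Fin s ⊕ Fin k) → ℕ) →+ (Fin k ⊕ Fin k → ℕ) :=
    { toFun := fun v => Sum.elim (fun l => ∑ y, v (Sum.inr l, y)) (fun l => ∑ y, v (y, Sum.inr l))
      map_zero' := by ext (i | i) <;> simp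
      map_add' := by intro x y; ext (i | i) <;> simp [Finset.sum_add_distrib] }
  have h := (Wset_semilinear hM sim ax1).image L
  convert h using 1
  ext z
  constructor
  · rintro ⟨n, p, q, hpq, hp, hq⟩
    refine ⟨_, ⟨n, p, q, hpq, fun x => rfl⟩, ?_⟩
    ext (l | l)
    · show ∑ y, fib (fun j => (lab p.1 j, lab q.1 j)) (Sum.inr l, y) = _
      rw [← fib_fst, fib_inr, hp]; rfl
    · show ∑ y, fib (fun j => (lab p.1 j, lab q.1 j)) (y, Sum.inr l) = _
      rw [← fib_snd, fib_inr, hq]; rfl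
  · rintro ⟨v, ⟨n, p, q, hpq, hv⟩, rfl⟩
    refine ⟨n, p, q, hpq, ?_, ?_⟩
    · funext l
      show _ = ∑ y, v (Sum.inr l, y)
      simp only [hv]
      rw [← fib_fst, fib_inr]
    · funext l
      show _ = ∑ y, v (y, Sum.inr l)
      simp only [hv]
      rw [← fib_snd, fib_inr]

theorem exists_perm_F
    (hM : ∀ β ∈ M, ∀ β' : Fin k → ℕ, (∀ l, β' l ≤ β l) → β' ∈ M) {n : ℕ}
    (p q : FPair s k M n) (h : p.1.countVec = q.1.countVec) :
    ∃ τ : Equiv.Perm (Fin n), FPair.restrict hM τ τ.injective p (range_perm _ τ) = q := by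
  obtain ⟨τ, hτ⟩ := exists_perm_restrict p.1 q.1 h
  exact ⟨τ, Subtype.ext hτ⟩

theorem size_eq {n n' : ℕ} (p : FPair s k M n) (q : FPair s k M n')
    (h : p.1.countVec = q.1.countVec) : n = n' := by
  rw [← sum_countVec p.1, ← sum_countVec q.1, h]

theorem Rel_symm {sim : ∀ n : ℕ, FPair s k M n → FPair s k M n → Prop}
    (hequiv : ∀ n, Equivalence (sim n)) {β γ : Fin k → ℕ} (h : Rel sim β γ) : Rel sim γ β := by
  obtain ⟨n, p, q, hpq, hp, hq⟩ := h
  exact ⟨n, q, p, (hequiv n).symm hpq, hq, hp⟩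

theorem Rel_trans
    (hM : ∀ β ∈ M, ∀ β' : Fin k → ℕ, (∀ l, β' l ≤ β l) → β' ∈ M)
    {sim : ∀ n : ℕ, FPair s k M n → FPair s k M n → Prop}
    (hequiv : ∀ n, Equivalence (sim n))
    (ax1 : ∀ (m n : ℕ) (π : Fin m → Fin n) (hπ : Function.Injective π)
      (p p' : FPair s k M n) (hp : Set.range p.1.σ ⊆ Set.range π)
      (hp' : Set.range p'.1.σ ⊆ Set.range π),
      sim n p p' → sim m (FPair.restrict hM π hπ p hp) (FPair.restrict hM π hπ p' hp'))
    {β γ δ : Fin k → ℕ} (h : Rel sim β γ) (h' : Rel sim γ δ) : Rel sim β δ := by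
  obtain ⟨n, p, q, hpq, hp, hq⟩ := h
  obtain ⟨n', q', t, hqt, hq', ht⟩ := h'
  obtain rfl := size_eq q q' (hq.trans hq'.symm)
  obtain ⟨τ, hτ⟩ := exists_perm_F hM q' q (hq'.trans hq.symm)
  have := ax1 n n τ τ.injective q' t (range_perm _ τ) (range_perm _ τ) hqt
  rw [hτ] at this
  exact ⟨n, p, _, (hequiv n).trans hpq this, hp, (countVec_perm t.1 τ (range_perm _ τ)).trans ht⟩

theorem orb_iff
    (hM : ∀ β ∈ M, ∀ β' : Fin k → ℕ, (∀ l, β' l ≤ β l) → β' ∈ M)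
    {sim : ∀ n : ℕ, FPair s k M n → FPair s k M n → Prop}
    (ax1 : ∀ (m n : ℕ) (π : Fin m → Fin n) (hπ : Function.Injective π)
      (p p' : FPair s k M n) (hp : Set.range p.1.σ ⊆ Set.range π)
      (hp' : Set.range p'.1.σ ⊆ Set.range π),
      sim n p p' → sim m (FPair.restrict hM π hπ p hp) (FPair.restrict hM π hπ p' hp'))
    {n : ℕ} (p q : FPair s k M n) :
    (∃ τ : Equiv.Perm (Fin n), sim n (FPair.restrict hM τ τ.injective p (range_perm _ τ)) q) ↔
      Rel sim p.1.countVec q.1.countVec := by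
  constructor
  · rintro ⟨τ, h⟩
    exact ⟨n, _, q, h, countVec_perm p.1 τ (range_perm _ τ), rfl⟩
  · rintro ⟨n', p', q', h, hp, hq⟩
    obtain rfl := size_eq p' p hp
    obtain ⟨τ, hτ⟩ := exists_perm_F hM q' q hq
    have h' := ax1 _ _ τ τ.injective p' q' (range_perm _ τ) (range_perm _ τ) h
    rw [hτ] at h'
    obtain ⟨τ', hτ'⟩ := exists_perm_F hM p
      (FPair.restrict hM τ τ.injective p' (range_perm _ τ))
      (hp.symm.trans (countVec_perm p'.1 τ (range_perm _ τ)).symm)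
    exact ⟨τ', by rw [hτ']; exact h'⟩

theorem card_quot
    (hM : ∀ β ∈ M, ∀ β' : Fin k → ℕ, (∀ l, β' l ≤ β l) → β' ∈ M)
    {sim : ∀ n : ℕ, FPair s k M n → FPair s k M n → Prop}
    (hequiv : ∀ n, Equivalence (sim n))
    (ax1 : ∀ (m n : ℕ) (π : Fin m → Fin n) (hπ : Function.Injective π)
      (p p' : FPair s k M n) (hp : Set.range p.1.σ ⊆ Set.range π)
      (hp' : Set.range p'.1.σ ⊆ Set.range π),
      sim n p p' → sim m (FPair.restrict hM π hπ p hp) (FPair.restrict hM π hπ p' hp')) (m : ℕ) :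
    Nat.card (Quot (fun p q : FPair s k M (m + s) => Rel sim p.1.countVec q.1.countVec)) =
      Set.ncard {β : Fin k → ℕ | β ∈ {x | Rel sim x x ∧ ¬ ∃ y, Rel sim x y ∧ toLex y < toLex x} ∧
        ∑ i, β i = m} := by
  have hE : Equivalence (fun p q : FPair s k M (m + s) => Rel sim p.1.countVec q.1.countVec) :=
    ⟨fun p => ⟨_, p, p, (hequiv _).refl p, rfl, rfl⟩, fun h => Rel_symm hequiv h,
      fun h h' => Rel_trans hM hequiv ax1 h h'⟩
  rw [← Nat.card_coe_set_eq]
  have hex : ∀ β : {β : Fin k → ℕ | β ∈ {x | Rel sim x x ∧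
      ¬ ∃ y, Rel sim x y ∧ toLex y < toLex x} ∧ ∑ i, β i = m},
      ∃ p : FPair s k M (m + s), p.1.countVec = β.1 := by
    rintro ⟨β, ⟨⟨n, p, q, -, hp, -⟩, -⟩, hβ⟩
    have : n = m + s := by rw [← sum_countVec p.1, hp, hβ]
    subst this
    exact ⟨p, hp⟩
  choose P hP using hex
  symm
  apply Nat.card_congr
  refine Equiv.ofBijective (fun β => Quot.mk _ (P β)) ⟨?_, ?_⟩
  · intro β γ h
    have h1 : Rel sim (P β).1.countVec (P γ).1.countVec :=
      (hE.eqvGen_iff).1 (Quot.eqvGen_exact h)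
    rw [hP, hP] at h1
    have h2 := Rel_symm hequiv h1
    have a1 : ¬ toLex γ.1 < toLex β.1 := fun hl => β.2.1.2 ⟨_, h1, hl⟩
    have a2 : ¬ toLex β.1 < toLex γ.1 := fun hl => γ.2.1.2 ⟨_, h2, hl⟩
    apply Subtype.ext
    exact toLex.injective (le_antisymm (not_lt.1 a1) (not_lt.1 a2))
  · intro x
    induction x using Quot.ind with
    | mk p =>
      let S : Set (Lex (Fin k → ℕ)) := {y | Rel sim p.1.countVec (ofLex y)}
      have hS : S.Nonempty := ⟨toLex p.1.countVec, hE.refl p⟩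
      obtain ⟨y, hy, hmin⟩ := (wellFounded_lt (α := Lex (Fin k → ℕ))).has_min S hS
      have hy : Rel sim p.1.countVec (ofLex y) := hy
      have hyy : Rel sim (ofLex y) (ofLex y) := Rel_trans hM hequiv ax1 (Rel_symm hequiv hy) hy
      have hsum : ∑ i, (ofLex y) i = m := by
        obtain ⟨n, p', q', -, h1, h2⟩ := hy
        have e1 := size_eq p' p h1
        have e2 := sum_countVec q'.1
        rw [h2] at e2
        omega
      let β : {β : Fin k → ℕ | β ∈ {x | Rel sim x x ∧
          ¬ ∃ y, Rel sim x y ∧ toLex y < toLex x} ∧ ∑ i, β i = m} :=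
        ⟨ofLex y, ⟨hyy, fun ⟨z, hz, hlt⟩ =>
          hmin (toLex z) (Rel_trans hM hequiv ax1 hy hz) hlt⟩, hsum⟩
      refine ⟨β, Quot.sound ?_⟩
      show Rel sim (P β).1.countVec p.1.countVec
      rw [hP]
      exact Rel_symm hequiv hy

end model

end QPaux

/-- The number of `Sym([n])`-orbits on `F_n/∼_n`, for a model functor
`(s, k, M, (∼_n))`, is a quasipolynomial in `n` for all `n ≫ 0`.  (The orbit of a class
`[p]` under `τ` is represented below via the restriction of `p` along the bijection `τ`,
which realises the action `τ⁻¹·(σ,α) = (τ⁻¹∘σ, α∘τ)`.) -/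
theorem quasipolynomial_orbit_count_of_model_functor
    (s k : ℕ) (M : Set (Fin k → ℕ))
    (hM : ∀ β ∈ M, ∀ β' : Fin k → ℕ, (∀ l, β' l ≤ β l) → β' ∈ M)
    (sim : ∀ n : ℕ, FPair s k M n → FPair s k M n → Prop)
    (hequiv : ∀ n, Equivalence (sim n))
    (ax1 : ∀ (m n : ℕ) (π : Fin m → Fin n) (hπ : Function.Injective π)
      (p p' : FPair s k M n) (hp : Set.range p.1.σ ⊆ Set.range π)
      (hp' : Set.range p'.1.σ ⊆ Set.range π),
      sim n p p' → sim m (FPair.restrict hM π hπ p hp) (FPair.restrict hM π hπ p' hp'))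
    (ax2 : ∀ (m n : ℕ) (π : Fin m → Fin n) (hπ : Function.Injective π)
      (p : FPair s k M n) (hp : Set.range p.1.σ ⊆ Set.range π)
      (q : FPair s k M m), sim m (FPair.restrict hM π hπ p hp) q →
      ∃ (p' : FPair s k M n) (hp' : Set.range p'.1.σ ⊆ Set.range π),
        sim n p' p ∧ FPair.restrict hM π hπ p' hp' = q)
    (ax3 : ∀ (n : ℕ) (p p' : FPair s k M n), sim n p p' →
      ∀ (i j : Fin n) (hi : i ∉ Set.range p.1.σ) (hi' : i ∉ Set.range p'.1.σ)
        (hj : j ∉ Set.range p.1.σ) (hj' : j ∉ Set.range p'.1.σ),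
        (p.1.α ⟨i, hi⟩ = p.1.α ⟨j, hj⟩ ↔ p'.1.α ⟨i, hi'⟩ = p'.1.α ⟨j, hj'⟩)) :
    QuasiPolynomialCount (fun n =>
      Nat.card (Quot (fun (p q : FPair s k M n) =>
        ∃ τ : Equiv.Perm (Fin n),
          sim n (FPair.restrict hM (⇑τ) τ.injective p
            (by rw [Equiv.range_eq_univ]; exact Set.subset_univ _)) q))) := by
  have hQ : QPaux.QP (fun n => ((Nat.card (Quot (fun (p q : FPair s k M n) =>
        ∃ τ : Equiv.Perm (Fin n),
          sim n (FPair.restrict hM (⇑τ) τ.injective p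
            (by rw [Equiv.range_eq_univ]; exact Set.subset_univ _)) q)) : ℕ) : ℚ)) := by
    apply QPaux.QP.of_shift s
    have h := QPaux.semilinear_QP
      (QPaux.min_semilinear (QPaux.Rel sim) (QPaux.Rel_semilinear hM sim ax1))
    convert h using 1
    funext m
    unfold QPaux.cnt
    rw [← QPaux.card_quot hM hequiv ax1 m]
    congr 2
    apply congrArg
    funext p q
    exact propext (QPaux.orb_iff hM ax1 p q)
  exact hQ.exists_quasi
end
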